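/- arXiv:1402.1208 — 2 statements merged into one kernel-verified Lean document; each statement's English description precedes it below -/
import Mathlib

section
/- There exists an absolute constant C > 0 such that for every integer a ≥ 2 and every integer b, there is an integer h with 0 ≤ h ≤ C·(log a)² and gcd(a, b + h) = 1. -/
/-!
Put `z = ⌈log a⌉` and sift the interval `(b - 1, b - 1 + W z²]` by all primes below `z`, for a large
constant `W`. If no survivor were coprime to `a`, each of them would be divisible by one of the at
most `z / log z` prime factors `q ≥ z` of `a`. An upper bound sieve of length about `W z` shows that
each such `q` divides `O(W z / log z)` survivors, so there would be only `O(W z² / log² z)` of them.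

For a lower bound, the survivors are compared with the `z`-rough integers up to `W z²` that have an
even number of prime factors, following Selberg's extremal examples for the linear sieve. Both
counts satisfy Buchstab's identity, which expresses the count at level `p + 1` and length `X` as the
count at level `p` minus the count, of opposite parity, at level `p` and length `X / p`. Iterating
it from level `1`, the difference of the two counts is a sum of bounded errors, one for each length
at which the iteration stops. Suitable weights on these lengths, whose total grows at a prime `p` by
a factor of at most `1 + O(1 / (p log p))`, bound this sum by `O(W z² / log² z)` with a constant
independent of `W`. The even count contains the products of two primes and is
`≫ log W · W z² / log² z`, a contradiction for large `W`.
-/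

namespace CoprimeShift

open Finset Real
open scoped ArithmeticFunction.Omega

lemma log_four_le_two : log 4 ≤ 2 := by
  rw [log_four_eq]
  linarith [log_two_lt_d9]

lemma log_sixteen_eq : log 16 = 4 * log 2 := by
  rw [show (16 : ℝ) = 2 ^ 4 by norm_num, log_pow]
  norm_num

lemma log_div_self_le_one {x : ℝ} (hx : 0 < x) : log x / x ≤ 1 :=
  (div_le_one hx).2 <| (log_le_sub_one_of_pos hx).trans (by linarith)

lemma natCast_floor_div_mem_Icc {x : ℝ} (hx : 0 ≤ x) (k : ℕ) :
    ((⌊x⌋₊ / k : ℕ) : ℝ) ∈ Set.Icc (x / k - 1) (x / k) := by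
  rw [← Nat.floor_div_natCast]
  exact ⟨(Nat.sub_one_lt_floor _).le, Nat.floor_le (by positivity)⟩

/-! ### Mertens' first theorem and Chebyshev's bounds -/

/-- Mertens' sum `∑ (log p) / p`, taken over the primes `p < n`. -/
noncomputable def mertensSum (n : ℕ) : ℝ := ∑ p ∈ n.primesBelow, log p / p

lemma mertensSum_nonneg (n : ℕ) : 0 ≤ mertensSum n :=
  sum_nonneg fun p _ ↦ div_nonneg (log_natCast_nonneg p) p.cast_nonneg

lemma mertensSum_succ_of_prime {p : ℕ} (hp : p.Prime) :
    mertensSum (p + 1) = mertensSum p + log p / p := by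
  rw [mertensSum, Nat.primesBelow_succ, if_pos hp, sum_insert (by simp [Nat.mem_primesBelow]),
    add_comm, mertensSum]

lemma mertensSum_succ_of_not_prime {n : ℕ} (hn : ¬ n.Prime) :
    mertensSum (n + 1) = mertensSum n := by
  rw [mertensSum, Nat.primesBelow_succ, if_neg hn, mertensSum]

lemma log_factorial_eq_sum_primesBelow (n : ℕ) :
    log n.factorial = ∑ p ∈ (n + 1).primesBelow, (n.factorial.factorization p : ℝ) * log p := by
  rw [log_nat_eq_sum_factorization, Finsupp.sum_of_support_subset _ _ _ (by simp)]
  intro p hp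
  rw [Nat.support_factorization, Nat.mem_primeFactors] at hp
  exact Nat.mem_primesBelow.2 ⟨Nat.lt_succ_of_le (hp.1.dvd_factorial.1 hp.2.1), hp.1⟩

lemma log_factorial_le (n : ℕ) : log n.factorial ≤ n * log n := by
  rw [← log_pow]
  exact log_le_log (by positivity) (mod_cast Nat.factorial_le_pow n)

lemma sub_le_log_factorial {n : ℕ} (hn : n ≠ 0) : n * log n - n ≤ log n.factorial := by
  have h := log_le_log (by positivity) (pow_div_factorial_le_exp (n : ℝ) n.cast_nonneg n)
  rw [log_div (by positivity) (by positivity), log_pow, log_exp] at h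
  linarith

lemma sum_log_primesBelow_le (n : ℕ) : ∑ p ∈ n.primesBelow, log p ≤ log 4 * n :=
  calc ∑ p ∈ n.primesBelow, log p ≤ ∑ p ∈ n.primesLE, log p :=
        sum_le_sum_of_subset_of_nonneg (Nat.primesBelow_mono n.le_succ)
          fun p _ _ ↦ log_natCast_nonneg p
    _ = Chebyshev.theta n := (Chebyshev.theta_eq_sum_primesLE_log n).symm
    _ ≤ log 4 * n := Chebyshev.theta_le_log4_mul_x n.cast_nonneg

lemma div_le_factorization_factorial {p n : ℕ} (hp : p.Prime) (hpn : p ≤ n) :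
    n / p ≤ n.factorial.factorization p := by
  rw [Nat.factorization_factorial hp (b := Nat.log p n + 1) (Nat.lt_succ_self _)]
  have hmem : 1 ∈ Ico 1 (Nat.log p n + 1) := by
    have := Nat.log_pos hp.one_lt hpn
    simp only [mem_Ico]
    lia
  simpa using single_le_sum (f := fun i ↦ n / p ^ i) (fun _ _ ↦ Nat.zero_le _) hmem

lemma mertensSum_le {n : ℕ} (hn : n ≠ 0) : mertensSum n ≤ log n + 2 := by
  have hn_pos : (0 : ℝ) < n := by positivity
  have hsum : n * mertensSum n - ∑ p ∈ n.primesBelow, log p ≤ log n.factorial := by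
    rw [mertensSum, mul_sum, ← sum_sub_distrib, log_factorial_eq_sum_primesBelow]
    refine (sum_le_sum fun p hp ↦ ?_).trans <| sum_le_sum_of_subset_of_nonneg
      (Nat.primesBelow_mono n.le_succ) fun p _ _ ↦ mul_nonneg (by positivity) (log_natCast_nonneg p)
    obtain ⟨hpn, hp⟩ := Nat.mem_primesBelow.1 hp
    have hfloor : (n : ℝ) / p - 1 ≤ (n / p : ℕ) := by
      simpa using (natCast_floor_div_mem_Icc n.cast_nonneg p).1
    have hfact : ((n / p : ℕ) : ℝ) ≤ n.factorial.factorization p :=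
      mod_cast div_le_factorization_factorial hp hpn.le
    calc (n : ℝ) * (log p / p) - log p = (n / p - 1) * log p := by ring
      _ ≤ n.factorial.factorization p * log p :=
        mul_le_mul_of_nonneg_right (hfloor.trans hfact) (log_natCast_nonneg p)
  refine le_of_mul_le_mul_left ?_ hn_pos
  nlinarith [sum_log_primesBelow_le n, log_factorial_le n, log_four_le_two]

lemma log_div_sq_le {x : ℝ} (hx : 0 < x) : 2 / x ^ 2 * log x ≤ 4 / x ^ (3 / 2 : ℝ) := by
  have hlog : log x ≤ 2 * x ^ (1 / 2 : ℝ) := by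
    linarith [log_le_rpow_div hx.le (ε := 1 / 2) (by norm_num)]
  have hsq : x ^ 2 = x ^ (3 / 2 : ℝ) * x ^ (1 / 2 : ℝ) := by
    rw [← rpow_add hx]
    norm_num
  calc 2 / x ^ 2 * log x ≤ 2 / x ^ 2 * (2 * x ^ (1 / 2 : ℝ)) := by gcongr
    _ = 4 / x ^ (3 / 2 : ℝ) := by
      rw [hsq]
      field_simp
      norm_num

lemma factorization_factorial_mul_log_le {p : ℕ} (hp : p.Prime) (n : ℕ) :
    (n.factorial.factorization p : ℝ) * log p ≤ n * (log p / p + 4 / (p : ℝ) ^ (3 / 2 : ℝ)) := by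
  have hp2 : (2 : ℝ) ≤ p := mod_cast hp.two_le
  have hfact : (n.factorial.factorization p : ℝ) ≤ n / (p - 1) :=
    calc (n.factorial.factorization p : ℝ) ≤ (n / (p - 1) : ℕ) :=
          mod_cast Nat.factorization_factorial_le_div_pred hp n
      _ ≤ n / (p - 1 : ℕ) := Nat.cast_div_le
      _ = n / (p - 1) := by rw [Nat.cast_pred hp.pos]
  have hinv : 1 / ((p : ℝ) - 1) ≤ 1 / p + 2 / (p : ℝ) ^ 2 := by
    rw [div_add_div _ _ (by positivity) (by positivity),
      div_le_div_iff₀ (by linarith) (by positivity)]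
    nlinarith
  calc (n.factorial.factorization p : ℝ) * log p
      ≤ n * (1 / ((p : ℝ) - 1)) * log p := by
        rw [mul_one_div]
        exact mul_le_mul_of_nonneg_right hfact (log_natCast_nonneg p)
    _ ≤ n * (1 / p + 2 / (p : ℝ) ^ 2) * log p := by
        have := log_natCast_nonneg p
        gcongr
    _ = n * (log p / p + 2 / (p : ℝ) ^ 2 * log p) := by ring
    _ ≤ n * (log p / p + 4 / (p : ℝ) ^ (3 / 2 : ℝ)) := by
        have := log_div_sq_le (show (0 : ℝ) < p by linarith)
        gcongr

/-- A convergent majorant of the contribution of the higher prime powers to Mertens' theorem. -/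
noncomputable def mertensTail : ℝ := ∑' p : ℕ, 4 / (p : ℝ) ^ (3 / 2 : ℝ)

lemma mertensTail_nonneg : 0 ≤ mertensTail := tsum_nonneg fun _ ↦ by positivity

lemma sum_le_mertensTail (s : Finset ℕ) : ∑ p ∈ s, 4 / (p : ℝ) ^ (3 / 2 : ℝ) ≤ mertensTail := by
  have hsummable : Summable fun p : ℕ ↦ 4 / (p : ℝ) ^ (3 / 2 : ℝ) := by
    simpa [div_eq_mul_inv] using (summable_nat_rpow_inv.2 (by norm_num)).mul_left (4 : ℝ)
  exact hsummable.sum_le_tsum _ fun _ _ ↦ by positivity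

lemma mertensSum_succ_le (n : ℕ) : mertensSum (n + 1) ≤ mertensSum n + 1 := by
  by_cases hn : n.Prime
  · rw [mertensSum_succ_of_prime hn]
    linarith [log_div_self_le_one (show (0 : ℝ) < n from mod_cast hn.pos)]
  · rw [mertensSum_succ_of_not_prime hn]
    linarith

lemma le_mertensSum {n : ℕ} (hn : n ≠ 0) : log n - (mertensTail + 2) ≤ mertensSum n := by
  have hn_pos : (0 : ℝ) < n := by positivity
  have hfact : log n.factorial ≤ n * (mertensSum (n + 1) + mertensTail) := by
    rw [log_factorial_eq_sum_primesBelow]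
    refine (sum_le_sum fun p hp ↦
      factorization_factorial_mul_log_le (Nat.prime_of_mem_primesBelow hp) n).trans ?_
    rw [← mul_sum, sum_add_distrib]
    gcongr
    · exact le_rfl
    · exact sum_le_mertensTail _
  refine le_of_mul_le_mul_left ?_ hn_pos
  nlinarith [sub_le_log_factorial hn, mertensSum_succ_le n]

/-- Mertens' sum shifted so that `log n ≤ primeLog n ≤ log n + logGap`. It plays the role of `log n`
in the sieve weights, because its increments are exactly `log p / p` at the primes. -/
noncomputable def primeLog (n : ℕ) : ℝ := mertensSum n + (mertensTail + 3)

/-- An upper bound for `primeLog n - log n`. -/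
noncomputable def logGap : ℝ := mertensTail + 5

lemma one_le_logGap : 1 ≤ logGap := by
  linarith [mertensTail_nonneg, logGap.eq_def]

lemma one_le_primeLog (n : ℕ) : 1 ≤ primeLog n := by
  linarith [mertensTail_nonneg, mertensSum_nonneg n, primeLog.eq_def n]

lemma log_le_primeLog {n : ℕ} (hn : n ≠ 0) : log n ≤ primeLog n := by
  linarith [le_mertensSum hn, primeLog.eq_def n]

lemma primeLog_le {n : ℕ} (hn : n ≠ 0) : primeLog n ≤ log n + logGap := by
  linarith [mertensSum_le hn, primeLog.eq_def n, logGap.eq_def]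

lemma primeLog_succ_of_prime {p : ℕ} (hp : p.Prime) :
    primeLog (p + 1) = primeLog p + log p / p := by
  rw [primeLog, mertensSum_succ_of_prime hp, primeLog]
  ring

lemma primeLog_succ_of_not_prime {n : ℕ} (hn : ¬ n.Prime) : primeLog (n + 1) = primeLog n := by
  rw [primeLog, mertensSum_succ_of_not_prime hn, primeLog]

lemma primeCounting_floor_le {y : ℝ} (hy : 1 < y) :
    (Nat.primeCounting ⌊y⌋₊ : ℝ) ≤ 6 * (y / log y) := by
  have hlog : 0 < log y := log_pos hy
  have hlog_sqrt : log √y = log y / 2 := log_sqrt (by linarith)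
  have hsqrt : √y ≤ 2 * (y / log y) := by
    have h : log y / 2 ≤ √y := hlog_sqrt ▸ log_le_self (sqrt_nonneg y)
    rw [← mul_div_assoc, le_div_iff₀ hlog]
    nlinarith [mul_self_sqrt (show 0 ≤ y by linarith), sqrt_nonneg y]
  have hquot : 0 ≤ y / log y := by positivity
  calc (Nat.primeCounting ⌊y⌋₊ : ℝ) ≤ log 4 * y / log √y + √y := Chebyshev.pi_le_log4_mul_div hy
    _ = 2 * log 4 * (y / log y) + √y := by rw [hlog_sqrt]; field_simp
    _ ≤ 6 * (y / log y) := by nlinarith [log_four_le_two]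

lemma card_primesBelow_le {n : ℕ} {y : ℝ} (hy : 1 < y) (hn : (n : ℝ) ≤ y + 1) :
    (#n.primesBelow : ℝ) ≤ 6 * (y / log y) := by
  refine le_trans ?_ (primeCounting_floor_le hy)
  rw [Nat.primesBelow_card_eq_primeCounting', Nat.primeCounting]
  refine mod_cast Nat.monotone_primeCounting' ?_
  have : (n : ℝ) < (⌊y⌋₊ + 1 + 1 : ℕ) := by
    push_cast
    linarith [Nat.lt_floor_add_one y]
  exact Nat.lt_succ_iff.1 (mod_cast this)

lemma primeCounting_le_add_card_primes_Ioc (a b : ℕ) :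
    Nat.primeCounting b ≤ Nat.primeCounting a + #{p ∈ Ioc a b | p.Prime} := by
  simp only [Nat.primeCounting, Nat.primeCounting', Nat.count_eq_card_filter_range]
  refine (card_le_card fun p hp ↦ ?_).trans (card_union_le _ _)
  simp only [mem_filter, mem_range, mem_union, mem_Ioc] at hp ⊢
  rcases lt_or_ge p (a + 1) with h | h
  · exact Or.inl ⟨h, hp.2⟩
  · exact Or.inr ⟨⟨by lia, by lia⟩, hp.2⟩

lemma le_primeCounting_sixteen_mul {y : ℝ} (hy : (16 : ℝ) ^ 10 ≤ y) :
    9 * (y / log y) ≤ Nat.primeCounting ⌊16 * y⌋₊ := by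
  have hlog : 0 < log y := log_pos (by linarith)
  have hlog16 : log (16 * y) ≤ 1.1 * log y := by
    have := log_le_log (by norm_num) hy
    rw [log_pow] at this
    rw [log_mul (by norm_num) (by positivity)]
    push_cast at this
    linarith
  have herror : log (16 * y + 2) ≤ y / 2 := by
    have hlog_le := log_le_rpow_div (x := 16 * y + 2) (by positivity) (ε := 1 / 2) (by norm_num)
    have hsqrt : √(16 * y + 2) ≤ y / 4 := by
      rw [sqrt_le_left (by positivity)]
      nlinarith
    rw [← sqrt_eq_rpow] at hlog_le
    linarith
  refine le_trans ?_ (Chebyshev.pi_ge' (x := 16 * y) (by linarith))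
  rw [← mul_div_assoc, div_le_div_iff₀ hlog (log_pos (by linarith))]
  have hnum : 10 * y ≤ (16 * y - 1) * log 2 - log (16 * y + 2) := by nlinarith [log_two_gt_d9]
  nlinarith

lemma div_log_le_card_primes_Ioc {y : ℝ} (hy : (16 : ℝ) ^ 10 ≤ y) :
    y / log y ≤ #{p ∈ Ioc ⌊y⌋₊ ⌊16 * y⌋₊ | p.Prime} := by
  have hy1 : 1 < y := lt_of_lt_of_le (by norm_num) hy
  have hsplit : (Nat.primeCounting ⌊16 * y⌋₊ : ℝ) ≤
      Nat.primeCounting ⌊y⌋₊ + #{p ∈ Ioc ⌊y⌋₊ ⌊16 * y⌋₊ | p.Prime} :=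
    mod_cast primeCounting_le_add_card_primes_Ioc _ _
  have hquot : 0 ≤ y / log y := div_nonneg (by linarith) (log_nonneg hy1.le)
  linarith [hquot, primeCounting_floor_le hy1, le_primeCounting_sixteen_mul hy]

/-! ### The divisor sum and the Liouville function -/

/-- The summatory function of the number of divisors. -/
def divisorSum (N : ℕ) : ℕ := ∑ i ∈ Ioc 0 N, N / i

lemma card_filter_mul_le_eq {i N t u : ℕ} (hi : 0 < i) (hu : ∀ j, t < j → j * i ≤ N → j ≤ u) :
    #{j ∈ Ioc t u | j * i ≤ N} = N / i - t := by
  have : {j ∈ Ioc t u | j * i ≤ N} = Ioc t (N / i) := by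
    ext j
    simp only [mem_filter, mem_Ioc, Nat.le_div_iff_mul_le hi]
    exact ⟨fun h ↦ ⟨h.1.1, h.2⟩, fun h ↦ ⟨⟨h.1, hu j h.1 h.2⟩, h.2⟩⟩
  rw [this, Nat.card_Ioc]

lemma divisorSum_add_sqrt_mul_sqrt (N : ℕ) :
    divisorSum N + N.sqrt * N.sqrt = 2 * ∑ i ∈ Ioc 0 N.sqrt, N / i := by
  set s := N.sqrt
  have hs : s * s ≤ N := N.sqrt_le
  have hs' : N < (s + 1) * (s + 1) := N.lt_succ_sqrt
  have hsymm : ∑ i ∈ Ioc s N, N / i = ∑ j ∈ Ioc 0 s, (N / j - s) :=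
    calc ∑ i ∈ Ioc s N, N / i = ∑ i ∈ Ioc s N, ∑ j ∈ Ioc 0 s, if j * i ≤ N then 1 else 0 := by
          refine sum_congr rfl fun i hi ↦ ?_
          rw [mem_Ioc] at hi
          rw [sum_boole, card_filter_mul_le_eq (by lia) fun j _ hji ↦ ?_, Nat.sub_zero, Nat.cast_id]
          by_contra! hj
          exact hji.not_gt (hs'.trans_le (Nat.mul_le_mul hj hi.1))
      _ = ∑ j ∈ Ioc 0 s, ∑ i ∈ Ioc s N, if j * i ≤ N then 1 else 0 := sum_comm
      _ = ∑ j ∈ Ioc 0 s, (N / j - s) := by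
          refine sum_congr rfl fun j hj ↦ ?_
          rw [mem_Ioc] at hj
          simp_rw [mul_comm j]
          rw [sum_boole, card_filter_mul_le_eq hj.1 fun i _ hij ↦ ?_, Nat.cast_id]
          exact (Nat.le_mul_of_pos_right i hj.1).trans hij
  have hsub : ∑ j ∈ Ioc 0 s, (N / j - s) + s * s = ∑ j ∈ Ioc 0 s, N / j := by
    have : s * s = ∑ _j ∈ Ioc 0 s, s := by simp
    rw [this, ← sum_add_distrib]
    refine sum_congr rfl fun j hj ↦ Nat.sub_add_cancel ?_
    rw [mem_Ioc] at hj
    rw [Nat.le_div_iff_mul_le hj.1]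
    exact (Nat.mul_le_mul_left s hj.2).trans hs
  rw [divisorSum, ← sum_Ioc_consecutive _ (Nat.zero_le s) N.sqrt_le_self, hsymm]
  lia

lemma sqrt_floor_eq_floor_sqrt (x : ℝ) : ⌊x⌋₊.sqrt = ⌊√x⌋₊ := by
  refine eq_of_forall_le_iff fun n ↦ ?_
  rcases n.eq_zero_or_pos with rfl | hn
  · simp
  · rw [Nat.le_sqrt, Nat.le_floor_iff' (by positivity), Nat.le_floor_iff' (by positivity),
      le_sqrt' (by positivity), sq, Nat.cast_mul]

lemma abs_harmonic_floor_sub_le {r : ℝ} (hr : 1 ≤ r) :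
    |(harmonic ⌊r⌋₊ : ℝ) - (log r + eulerMascheroniConstant)| ≤ 2 / r := by
  set s := ⌊r⌋₊
  have hs : (1 : ℝ) ≤ s := mod_cast Nat.one_le_floor_iff r |>.2 hr
  have hsr : (s : ℝ) ≤ r := Nat.floor_le (by linarith)
  have hrs : r < s + 1 := Nat.lt_floor_add_one r
  have hlower := eulerMascheroniConstant_lt_eulerMascheroniSeq' s
  have hupper := eulerMascheroniSeq_lt_eulerMascheroniConstant s
  rw [eulerMascheroniSeq', if_neg (by rintro h; norm_num [h] at hs)] at hlower
  rw [eulerMascheroniSeq] at hupper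
  have hlog_succ : log (s + 1) - log r ≤ 2 / r := by
    rw [← log_div (by positivity) (by positivity)]
    refine (log_le_sub_one_of_pos (by positivity)).trans ?_
    rw [div_sub_one (by positivity)]
    gcongr
    linarith
  have hlog : log r - log s ≤ 2 / r := by
    rw [← log_div (by positivity) (by positivity)]
    refine (log_le_sub_one_of_pos (by positivity)).trans ?_
    rw [div_sub_one (by positivity), div_le_div_iff₀ (by positivity) (by positivity)]
    nlinarith
  rw [abs_le]
  constructor <;> linarith

lemma sum_floor_div_mem_Icc {x : ℝ} (hx : 0 ≤ x) (s : ℕ) :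
    ∑ i ∈ Ioc 0 s, ((⌊x⌋₊ / i : ℕ) : ℝ) ∈ Set.Icc (x * harmonic s - s) (x * harmonic s) := by
  have hharmonic : x * harmonic s = ∑ i ∈ Ioc 0 s, x / i := by
    rw [harmonic_eq_sum_Icc, Rat.cast_sum, mul_sum]
    exact sum_congr rfl fun i _ ↦ by rw [div_eq_mul_inv, Rat.cast_inv, Rat.cast_natCast]
  have hcard : (s : ℝ) = ∑ _i ∈ Ioc 0 s, 1 := by simp
  constructor
  · rw [hharmonic, hcard, ← sum_sub_distrib]
    exact sum_le_sum fun i _ ↦ (natCast_floor_div_mem_Icc hx i).1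
  · rw [hharmonic]
    exact sum_le_sum fun i _ ↦ (natCast_floor_div_mem_Icc hx i).2

lemma abs_divisorSum_floor_sub_le {x : ℝ} (hx : 1 ≤ x) :
    |(divisorSum ⌊x⌋₊ : ℝ) - (x * log x + (2 * eulerMascheroniConstant - 1) * x)| ≤ 8 * √x := by
  obtain ⟨r, hr, hrx⟩ : ∃ r, 1 ≤ r ∧ r * r = x :=
    ⟨√x, one_le_sqrt.2 hx, mul_self_sqrt (by linarith)⟩
  have hsqrt : √x = r := by rw [← hrx, sqrt_mul_self (by linarith)]
  set s := ⌊r⌋₊ with hs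
  have hsr : (s : ℝ) ≤ r := Nat.floor_le (by linarith)
  have hrs : r < s + 1 := Nat.lt_floor_add_one r
  have hhyp : (divisorSum ⌊x⌋₊ : ℝ) + s * s = 2 * ∑ i ∈ Ioc 0 s, ((⌊x⌋₊ / i : ℕ) : ℝ) := by
    rw [hs, ← hsqrt, ← sqrt_floor_eq_floor_sqrt]
    exact_mod_cast divisorSum_add_sqrt_mul_sqrt ⌊x⌋₊
  obtain ⟨hlower, hupper⟩ := sum_floor_div_mem_Icc (show 0 ≤ x by linarith) s
  obtain ⟨hH, hH'⟩ := abs_le.1 (abs_harmonic_floor_sub_le hr)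
  have hlog : log x = 2 * log r := by
    rw [← hrx, log_mul (by positivity) (by positivity)]
    ring
  have hxr : x * (2 / r) = 2 * r := by
    rw [← hrx]
    field_simp
  have hxH := mul_le_mul_of_nonneg_left hH (show 0 ≤ x by linarith)
  have hxH' := mul_le_mul_of_nonneg_left hH' (show 0 ≤ x by linarith)
  rw [hlog, hsqrt, abs_le]
  constructor <;> nlinarith

open ArithmeticFunction (liouville cardFactors_apply_prime_pow)
open scoped ArithmeticFunction.zeta

lemma liouville_mul_zeta_eq_zero_or_isSquare {n : ℕ} (hn : n ≠ 0) :
    (liouville * ζ) n = 0 ∨ (liouville * ζ) n = 1 ∧ IsSquare n := by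
  have hmult : (liouville * ζ).IsMultiplicative :=
    ArithmeticFunction.isMultiplicative_liouville.mul
      ArithmeticFunction.isMultiplicative_zeta.natCast
  induction n using Nat.recOnPosPrimePosCoprime with
  | zero => exact absurd rfl hn
  | one => simp [hmult.1]
  | prime_pow p k hp _ =>
    have hgeom : (liouville * ζ) (p ^ k) = ∑ i ∈ range (k + 1), (-1 : ℤ) ^ i := by
      rw [ArithmeticFunction.coe_mul_zeta_apply, Nat.sum_divisors_prime_pow hp]
      refine sum_congr rfl fun i _ ↦ ?_
      rw [ArithmeticFunction.liouville_apply (pow_ne_zero _ hp.ne_zero),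
        cardFactors_apply_prime_pow hp]
    rw [hgeom, neg_one_geom_sum]
    split_ifs with hk_odd
    · exact Or.inl rfl
    · rw [Nat.even_add_one, not_not] at hk_odd
      exact Or.inr ⟨rfl, hk_odd.isSquare_pow _⟩
  | coprime a b ha hb hab iha ihb =>
    rw [hmult.2 hab]
    rcases iha (by lia) with ha0 | ⟨ha1, ha_sq⟩
    · simp [ha0]
    rcases ihb (by lia) with hb0 | ⟨hb1, hb_sq⟩
    · simp [hb0]
    exact Or.inr ⟨by simp [ha1, hb1], ha_sq.mul hb_sq⟩

lemma card_filter_isSquare_le (N : ℕ) : #{n ∈ Ioc 0 N | IsSquare n} ≤ N.sqrt := by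
  have hsub : {n ∈ Ioc 0 N | IsSquare n} ⊆ (Ioc 0 N.sqrt).image fun k ↦ k * k := by
    intro n hn
    simp only [mem_filter, mem_Ioc] at hn
    obtain ⟨⟨hpos, hle⟩, k, rfl⟩ := hn
    exact mem_image_of_mem _ (mem_Ioc.2 ⟨pos_of_mul_pos_left hpos k.zero_le, Nat.le_sqrt.2 hle⟩)
  calc #{n ∈ Ioc 0 N | IsSquare n} ≤ #(Ioc 0 N.sqrt) := (card_le_card hsub).trans card_image_le
    _ = N.sqrt := by simp

lemma abs_sum_liouville_mul_div_le (N : ℕ) :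
    |∑ n ∈ Ioc 0 N, liouville n * ((N / n : ℕ) : ℤ)| ≤ N.sqrt := by
  rw [← ArithmeticFunction.sum_Ioc_mul_zeta_eq_sum]
  calc |∑ n ∈ Ioc 0 N, (liouville * ζ) n|
      ≤ ∑ n ∈ Ioc 0 N, |(liouville * ζ) n| := abs_sum_le_sum_abs _ _
    _ ≤ ∑ n ∈ Ioc 0 N, if IsSquare n then 1 else 0 := by
        refine sum_le_sum fun n hn ↦ ?_
        rcases liouville_mul_zeta_eq_zero_or_isSquare (mem_Ioc.1 hn).1.ne' with h | ⟨h, hsq⟩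
        · rw [h]
          split_ifs <;> simp
        · rw [h, if_pos hsq, abs_one]
    _ ≤ N.sqrt := by
        rw [sum_boole]
        exact_mod_cast card_filter_isSquare_le N

/-! ### Parity sums over rough numbers -/

/-- The natural number `m` has no prime factor below `n`. -/
def IsRough (n m : ℕ) : Prop := ∀ p : ℕ, p.Prime → p ∣ m → n ≤ p

lemma IsRough.mono {k n m : ℕ} (hkn : k ≤ n) (h : IsRough n m) : IsRough k m :=
  fun p hp hpm ↦ hkn.trans (h p hp hpm)

lemma isRough_one_left (m : ℕ) : IsRough 1 m := fun _ hp _ ↦ hp.one_lt.le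

lemma isRough_succ_of_not_prime {n m : ℕ} (hn : ¬ n.Prime) : IsRough (n + 1) m ↔ IsRough n m :=
  ⟨IsRough.mono n.le_succ, fun h p hp hpm ↦
    lt_of_le_of_ne (h p hp hpm) fun hnp ↦ hn (hnp ▸ hp)⟩

lemma isRough_succ_of_prime {p m : ℕ} (hp : p.Prime) :
    IsRough (p + 1) m ↔ IsRough p m ∧ ¬ p ∣ m :=
  ⟨fun h ↦ ⟨h.mono p.le_succ, fun hpm ↦ p.lt_irrefl (h p hp hpm)⟩, fun h q hq hqm ↦
    lt_of_le_of_ne (h.1 q hq hqm) fun hpq ↦ h.2 (hpq ▸ hqm)⟩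

lemma isRough_prime_mul {n p m : ℕ} (hp : p.Prime) (hn : n ≤ p) :
    IsRough n (p * m) ↔ IsRough n m := by
  refine ⟨fun h q hq hqm ↦ h q hq (hqm.mul_left p), fun h q hq hqm ↦ ?_⟩
  rcases hq.dvd_mul.1 hqm with hqp | hqm
  · exact hn.trans_eq ((Nat.prime_dvd_prime_iff_eq hq hp).1 hqp).symm
  · exact h q hq hqm

/-- The `n`-rough integers in `(0, N]` whose number of prime factors has the parity of `e`. -/
noncomputable def parityRough (N n : ℕ) (e : ZMod 2) : Finset ℕ := by
  classical exact {m ∈ Ioc 0 N | IsRough n m ∧ (Ω m : ZMod 2) = e}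

@[simp]
lemma mem_parityRough {N n m : ℕ} {e : ZMod 2} :
    m ∈ parityRough N n e ↔ m ∈ Ioc 0 N ∧ IsRough n m ∧ (Ω m : ZMod 2) = e := by
  simp [parityRough]

/-- The count of `parityRough` with the weight `⌊N / m⌋ mod 16`, a combination of the counts at
`N / m` and `N / (16 * m)`. These are Selberg's extremal examples for the linear sieve: they satisfy
Buchstab's identity exactly, with parity playing the role of the lower and upper sieve functions. -/
noncomputable def paritySum (N n : ℕ) (e : ZMod 2) : ℕ := ∑ m ∈ parityRough N n e, N / m % 16

lemma paritySum_succ_of_not_prime {n : ℕ} (hn : ¬ n.Prime) (N : ℕ) (e : ZMod 2) :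
    paritySum N (n + 1) e = paritySum N n e := by
  have : parityRough N (n + 1) e = parityRough N n e := by
    ext m
    rw [mem_parityRough, mem_parityRough, isRough_succ_of_not_prime hn]
  rw [paritySum, this, paritySum]

lemma cast_cardFactors_prime_mul {p m : ℕ} (hp : p.Prime) (hm : m ≠ 0) (e : ZMod 2) :
    (Ω (p * m) : ZMod 2) = e ↔ (Ω m : ZMod 2) = e + 1 := by
  rw [ArithmeticFunction.cardFactors_mul hp.ne_zero hm,
    ArithmeticFunction.cardFactors_apply_prime hp, Nat.cast_add, Nat.cast_one,
    add_comm, ← eq_sub_iff_add_eq, CharTwo.sub_eq_add]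

lemma prime_mul_mem_parityRough {p m N : ℕ} (hp : p.Prime) {e : ZMod 2} :
    p * m ∈ parityRough N p e ↔ m ∈ parityRough (N / p) p (e + 1) := by
  rcases eq_or_ne m 0 with rfl | hm
  · simp
  · rw [mem_parityRough, mem_parityRough, isRough_prime_mul hp le_rfl,
      cast_cardFactors_prime_mul hp hm, mem_Ioc, mem_Ioc, Nat.le_div_iff_mul_le hp.pos,
      mul_comm p m]
    simp [hp.pos]

lemma paritySum_eq_add_of_prime {p : ℕ} (hp : p.Prime) (N : ℕ) (e : ZMod 2) :
    paritySum N p e = paritySum N (p + 1) e + paritySum (N / p) p (e + 1) := by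
  have hmul : paritySum (N / p) p (e + 1) = ∑ m ∈ parityRough N p e with p ∣ m, N / m % 16 := by
    refine sum_nbij' (fun m ↦ p * m) (fun m ↦ m / p) ?_ ?_ ?_ ?_ ?_
    · exact fun m hm ↦ mem_filter.2 ⟨(prime_mul_mem_parityRough hp).2 hm, dvd_mul_right p m⟩
    · intro m hm
      obtain ⟨hm, k, rfl⟩ := mem_filter.1 hm
      rw [Nat.mul_div_cancel_left k hp.pos]
      exact (prime_mul_mem_parityRough hp).1 hm
    · exact fun m _ ↦ Nat.mul_div_cancel_left m hp.pos
    · exact fun m hm ↦ Nat.mul_div_cancel' (mem_filter.1 hm).2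
    · exact fun m _ ↦ by rw [Nat.div_div_eq_div_mul]
  have hsucc : parityRough N (p + 1) e = {m ∈ parityRough N p e | ¬ p ∣ m} := by
    ext m
    simp only [mem_parityRough, mem_filter, isRough_succ_of_prime hp]
    tauto
  rw [hmul, paritySum, paritySum, hsucc, add_comm, sum_filter_add_sum_filter_not]

/-! ### Parity sums over all integers -/

lemma paritySum_one (N : ℕ) (e : ZMod 2) :
    paritySum N 1 e = ∑ m ∈ Ioc 0 N with (Ω m : ZMod 2) = e, N / m % 16 := by
  rw [paritySum]
  congr 1
  ext m
  simp [isRough_one_left]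

lemma cast_ne_zero_iff_eq_one (k : ℕ) : ¬ (k : ZMod 2) = 0 ↔ (k : ZMod 2) = 1 := by
  rw [ZMod.natCast_eq_one_iff_odd, ZMod.natCast_eq_zero_iff_even, Nat.not_even_iff_odd]

lemma paritySum_one_zero_add_one (N : ℕ) :
    paritySum N 1 0 + paritySum N 1 1 = ∑ m ∈ Ioc 0 N, N / m % 16 := by
  simp_rw [paritySum_one, ← cast_ne_zero_iff_eq_one]
  exact sum_filter_add_sum_filter_not _ _ _

lemma paritySum_one_zero_sub_one (N : ℕ) :
    (paritySum N 1 0 : ℤ) - paritySum N 1 1 = ∑ m ∈ Ioc 0 N, liouville m * (N / m % 16 : ℕ) := by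
  have hliouville : ∀ m ∈ Ioc 0 N, liouville m = if (Ω m : ZMod 2) = 0 then 1 else -1 := by
    intro m hm
    rw [ArithmeticFunction.liouville_apply (mem_Ioc.1 hm).1.ne']
    split_ifs with h
    · exact (ZMod.natCast_eq_zero_iff_even.1 h).neg_one_pow
    · exact (ZMod.natCast_eq_one_iff_odd.1 ((cast_ne_zero_iff_eq_one _).1 h)).neg_one_pow
  simp_rw [paritySum_one, ← cast_ne_zero_iff_eq_one, sum_filter]
  push_cast
  rw [← sum_sub_distrib]
  refine sum_congr rfl fun m hm ↦ ?_
  rw [hliouville m hm]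
  split_ifs <;> simp

lemma sum_mul_div_mod_sixteen {R : Type*} [CommRing R] (f : ℕ → R) (N : ℕ) :
    ∑ m ∈ Ioc 0 N, f m * (N / m % 16 : ℕ) =
      ∑ m ∈ Ioc 0 N, f m * (N / m : ℕ) - 16 * ∑ m ∈ Ioc 0 (N / 16), f m * (N / 16 / m : ℕ) := by
  have hextend : ∑ m ∈ Ioc 0 (N / 16), f m * ((N / 16 / m : ℕ) : R) =
      ∑ m ∈ Ioc 0 N, f m * ((N / 16 / m : ℕ) : R) := by
    refine sum_subset (Ioc_subset_Ioc_right (Nat.div_le_self _ _)) fun m _ hm ↦ ?_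
    rw [mem_Ioc] at *
    rw [Nat.div_eq_of_lt (by lia), Nat.cast_zero, mul_zero]
  rw [hextend, mul_sum, ← sum_sub_distrib]
  refine sum_congr rfl fun m _ ↦ ?_
  have hdiv : N / m = N / m % 16 + 16 * (N / 16 / m) := by
    rw [Nat.div_div_eq_div_mul, mul_comm 16 m, ← Nat.div_div_eq_div_mul, Nat.mod_add_div]
  nth_rw 2 [hdiv]
  push_cast
  ring

lemma sqrt_div_sixteen {x : ℝ} (hx : 0 ≤ x) : √(x / 16) = √x / 4 := by
  rw [sqrt_div hx, show (16 : ℝ) = 4 ^ 2 by norm_num, sqrt_sq (by norm_num)]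

lemma abs_paritySum_zero_sub_one_le (x : ℝ) :
    |(paritySum ⌊x⌋₊ 1 0 : ℝ) - paritySum ⌊x⌋₊ 1 1| ≤ 17 * √x := by
  set N := ⌊x⌋₊ with hN
  have hdiff : |(paritySum N 1 0 : ℤ) - paritySum N 1 1| ≤ N.sqrt + 16 * (N / 16).sqrt := by
    rw [paritySum_one_zero_sub_one, sum_mul_div_mod_sixteen]
    have h₁ := abs_sum_liouville_mul_div_le N
    have h₂ := abs_sum_liouville_mul_div_le (N / 16)
    rw [abs_le] at *
    constructor <;> linarith
  have hsqrt : (N.sqrt : ℝ) ≤ √x := by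
    rw [hN, sqrt_floor_eq_floor_sqrt]
    exact Nat.floor_le (sqrt_nonneg x)
  have hmono : ((N / 16).sqrt : ℝ) ≤ N.sqrt :=
    mod_cast Nat.sqrt_le_sqrt (Nat.div_le_self N 16)
  calc |(paritySum N 1 0 : ℝ) - paritySum N 1 1| ≤ N.sqrt + 16 * (N / 16).sqrt :=
        mod_cast hdiff
    _ ≤ 17 * √x := by linarith

lemma paritySum_zero_add_one_eq_divisorSum (N : ℕ) :
    (paritySum N 1 0 : ℝ) + paritySum N 1 1 = divisorSum N - 16 * divisorSum (N / 16) := by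
  have h := sum_mul_div_mod_sixteen (fun _ ↦ (1 : ℝ)) N
  simp only [one_mul] at h
  rw [← Nat.cast_add, paritySum_one_zero_add_one, Nat.cast_sum, h, divisorSum, divisorSum,
    Nat.cast_sum, Nat.cast_sum]

lemma paritySum_zero_add_one_le (N : ℕ) : paritySum N 1 0 + paritySum N 1 1 ≤ 15 * N := by
  rw [paritySum_one_zero_add_one]
  calc ∑ m ∈ Ioc 0 N, N / m % 16 ≤ #(Ioc 0 N) • 15 :=
        sum_le_card_nsmul _ _ _ fun m _ ↦ Nat.le_of_lt_succ (Nat.mod_lt _ (by norm_num))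
    _ = 15 * N := by simp [mul_comm]

lemma abs_paritySum_zero_add_one_sub_le {x : ℝ} (hx : 1 ≤ x) :
    |(paritySum ⌊x⌋₊ 1 0 : ℝ) + paritySum ⌊x⌋₊ 1 1 - x * log 16| ≤ 80 * √x := by
  have hsq := mul_self_sqrt (show 0 ≤ x by linarith)
  have hsqrt : 1 ≤ √x := one_le_sqrt.2 hx
  have hlog : log 16 ≤ 3 := by linarith [log_sixteen_eq, log_two_lt_d9]
  have hlog_nonneg : 0 ≤ log 16 := log_nonneg (by norm_num)
  rcases le_or_gt 16 x with hx16 | hx16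
  · have hx' := abs_divisorSum_floor_sub_le hx
    have hx16' := abs_divisorSum_floor_sub_le (x := x / 16) (by linarith)
    rw [log_div (by linarith) (by norm_num), sqrt_div_sixteen (by linarith),
      show ⌊x / 16⌋₊ = ⌊x⌋₊ / 16 from mod_cast Nat.floor_div_natCast x 16] at hx16'
    rw [paritySum_zero_add_one_eq_divisorSum]
    rw [abs_le] at *
    constructor <;> nlinarith
  · have hsqrt4 : √x ≤ 4 := by
      rw [sqrt_le_left (by norm_num)]
      linarith
    have hle : (paritySum ⌊x⌋₊ 1 0 : ℝ) + paritySum ⌊x⌋₊ 1 1 ≤ 15 * ⌊x⌋₊ :=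
      mod_cast paritySum_zero_add_one_le ⌊x⌋₊
    have hfloor := Nat.floor_le (show 0 ≤ x by linarith)
    rw [abs_le]
    constructor <;> nlinarith

lemma abs_two_mul_paritySum_sub_le {x : ℝ} (hx : 1 ≤ x) (e : ZMod 2) :
    |2 * (paritySum ⌊x⌋₊ 1 e : ℝ) - x * log 16| ≤ 100 * √x := by
  have hdiff := abs_paritySum_zero_sub_one_le x
  have hsum := abs_paritySum_zero_add_one_sub_le hx
  have hsqrt := sqrt_nonneg x
  have he : e = 0 ∨ e = 1 := by decide +revert
  rw [abs_le] at *
  rcases he with rfl | rfl <;> constructor <;> linarith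

/-! ### Sifted intervals -/

/-- The integers in `(α, α + X]` without prime factors below `n`. -/
noncomputable def sifted (α X : ℝ) (n : ℕ) : Finset ℤ := by
  classical exact {i ∈ Ioc ⌊α⌋ ⌊α + X⌋ | IsRough n i.natAbs}

lemma mem_sifted {α X : ℝ} {n : ℕ} {i : ℤ} :
    i ∈ sifted α X n ↔ i ∈ Ioc ⌊α⌋ ⌊α + X⌋ ∧ IsRough n i.natAbs := by
  simp [sifted]

lemma mem_Ioc_floor_add_iff {α X : ℝ} {i : ℤ} :
    i ∈ Ioc ⌊α⌋ ⌊α + X⌋ ↔ α < i ∧ i ≤ α + X := by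
  rw [mem_Ioc, Int.floor_lt, Int.le_floor]

lemma sifted_succ_of_not_prime {n : ℕ} (hn : ¬ n.Prime) (α X : ℝ) :
    sifted α X (n + 1) = sifted α X n := by
  ext i
  rw [mem_sifted, mem_sifted, isRough_succ_of_not_prime hn]

lemma prime_mul_mem_sifted {n p : ℕ} (hp : p.Prime) (hn : n ≤ p) {α X : ℝ} {i : ℤ} :
    (p : ℤ) * i ∈ sifted α X n ↔ i ∈ sifted (α / p) (X / p) n := by
  have hp_pos : (0 : ℝ) < p := mod_cast hp.pos
  rw [mem_sifted, mem_sifted, Int.natAbs_mul, Int.natAbs_natCast, isRough_prime_mul hp hn,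
    mem_Ioc_floor_add_iff, mem_Ioc_floor_add_iff, ← add_div, div_lt_iff₀ hp_pos,
    le_div_iff₀ hp_pos, mul_comm (p : ℤ) i, Int.cast_mul, Int.cast_natCast]

lemma card_filter_prime_dvd_sifted {n p : ℕ} (hp : p.Prime) (hn : n ≤ p) (α X : ℝ) :
    #{i ∈ sifted α X n | (p : ℤ) ∣ i} = #(sifted (α / p) (X / p) n) := by
  have hp0 : (p : ℤ) ≠ 0 := mod_cast hp.ne_zero
  refine (card_nbij' (fun i ↦ (p : ℤ) * i) (fun i ↦ i / (p : ℤ)) ?_ ?_ ?_ ?_).symm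
  · exact fun i hi ↦ mem_filter.2 ⟨(prime_mul_mem_sifted hp hn).2 hi, dvd_mul_right _ i⟩
  · intro i hi
    obtain ⟨hi, k, rfl⟩ := mem_filter.1 hi
    simpa only [mem_coe, Int.mul_ediv_cancel_left k hp0] using (prime_mul_mem_sifted hp hn).1 hi
  · exact fun i _ ↦ Int.mul_ediv_cancel_left i hp0
  · exact fun i hi ↦ Int.mul_ediv_cancel' (mem_filter.1 hi).2

lemma card_sifted_eq_add_of_prime {p : ℕ} (hp : p.Prime) (α X : ℝ) :
    #(sifted α X p) = #(sifted α X (p + 1)) + #(sifted (α / p) (X / p) p) := by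
  have hsucc : sifted α X (p + 1) = {i ∈ sifted α X p | ¬ (p : ℤ) ∣ i} := by
    ext i
    rw [mem_filter, mem_sifted, mem_sifted, isRough_succ_of_prime hp, and_assoc,
      Int.natCast_dvd]
  rw [← card_filter_prime_dvd_sifted hp le_rfl, hsucc, add_comm, card_filter_add_card_filter_not]

lemma card_sifted_one_mem_Icc (α : ℝ) {X : ℝ} (hX : 0 ≤ X) :
    (#(sifted α X 1) : ℝ) ∈ Set.Icc (X - 1) (X + 1) := by
  have hfloor : ⌊α⌋ ≤ ⌊α + X⌋ := Int.floor_le_floor (by linarith)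
  have hsifted : sifted α X 1 = Ioc ⌊α⌋ ⌊α + X⌋ := by
    ext i
    rw [mem_sifted, and_iff_left (isRough_one_left _)]
  have hcard : (#(sifted α X 1) : ℤ) = ⌊α + X⌋ - ⌊α⌋ := by
    rw [hsifted, Int.card_Ioc, Int.toNat_of_nonneg (by lia)]
  have hcard_real : (#(sifted α X 1) : ℝ) = ⌊α + X⌋ - ⌊α⌋ := mod_cast hcard
  rw [hcard_real]
  constructor
  · linarith [Int.sub_one_lt_floor (α + X), Int.floor_le α]
  · linarith [Int.sub_one_lt_floor α, Int.floor_le (α + X)]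

/-! ### Error scales of the iterated Buchstab identity -/

/-- The lengths at which an error of size `O(1)` enters the lower (first component) and the upper
(second component) sieve bound when Buchstab's identity is applied for all primes below `n`. Without
sieving, the error `O(√X)` is spread over the squares up to `X`, for `X ≤ N`. The lower bound at
level `p` is applied to lengths `≥ p ^ 2` only, so in the upper bound it enters from `p ^ 3` on. -/
noncomputable def errorScales (N : ℕ) : ℕ → Multiset ℝ × Multiset ℝ
  | 0 => ((Multiset.range N).map fun i : ℕ ↦ ((i : ℝ) + 1) ^ 2,
      (Multiset.range N).map fun i : ℕ ↦ ((i : ℝ) + 1) ^ 2)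
  | n + 1 => if n.Prime then
      ((errorScales N n).1 + (errorScales N n).2.map (fun t ↦ max ((n : ℝ) * t) ((n : ℝ) ^ 2)),
        (errorScales N n).2 + (errorScales N n).1.map
          (fun t ↦ max ((n : ℝ) * t) ((n : ℝ) ^ 3)) + {(n : ℝ)})
      else errorScales N n

/-- The sum of `g` over the error scales of the lower sieve. -/
noncomputable def lowerSum (N n : ℕ) (g : ℝ → ℝ) : ℝ := ((errorScales N n).1.map g).sum

/-- The sum of `g` over the error scales of the upper sieve. -/
noncomputable def upperSum (N n : ℕ) (g : ℝ → ℝ) : ℝ := ((errorScales N n).2.map g).sum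

lemma errorScales_succ_of_not_prime (N : ℕ) {n : ℕ} (hn : ¬ n.Prime) :
    errorScales N (n + 1) = errorScales N n := by
  rw [errorScales, if_neg hn]

section Sums

variable {N n : ℕ} {f g : ℝ → ℝ}

lemma lowerSum_succ_of_not_prime (hn : ¬ n.Prime) : lowerSum N (n + 1) g = lowerSum N n g := by
  rw [lowerSum, errorScales_succ_of_not_prime N hn, lowerSum]

lemma upperSum_succ_of_not_prime (hn : ¬ n.Prime) : upperSum N (n + 1) g = upperSum N n g := by
  rw [upperSum, errorScales_succ_of_not_prime N hn, upperSum]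

lemma lowerSum_succ_of_prime (hn : n.Prime) :
    lowerSum N (n + 1) g = lowerSum N n g + upperSum N n fun t ↦ g (max (n * t) (n ^ 2)) := by
  simp only [lowerSum, upperSum, errorScales, if_pos hn, Multiset.map_add, Multiset.sum_add,
    Multiset.map_map, Function.comp_def]

lemma upperSum_succ_of_prime (hn : n.Prime) :
    upperSum N (n + 1) g =
      upperSum N n g + (lowerSum N n fun t ↦ g (max (n * t) (n ^ 3))) + g n := by
  simp only [lowerSum, upperSum, errorScales, if_pos hn, Multiset.map_add, Multiset.sum_add,
    Multiset.map_map, Function.comp_def, Multiset.map_singleton, Multiset.sum_singleton]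

lemma lowerSum_one : lowerSum N 1 g = ∑ i ∈ range N, g (((i : ℝ) + 1) ^ 2) := by
  simp only [lowerSum, errorScales, Nat.not_prime_zero, if_false, Multiset.map_map,
    Function.comp_def]
  rfl

lemma upperSum_one : upperSum N 1 g = ∑ i ∈ range N, g (((i : ℝ) + 1) ^ 2) := by
  simp only [upperSum, errorScales, Nat.not_prime_zero, if_false, Multiset.map_map,
    Function.comp_def]
  rfl

lemma one_le_of_mem_errorScales (N n : ℕ) :
    (∀ t ∈ (errorScales N n).1, 1 ≤ t) ∧ ∀ t ∈ (errorScales N n).2, 1 ≤ t := by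
  induction n with
  | zero =>
    have hsq : ∀ t ∈ (Multiset.range N).map fun i : ℕ ↦ ((i : ℝ) + 1) ^ 2, 1 ≤ t := by
      intro t ht
      obtain ⟨i, _, rfl⟩ := Multiset.mem_map.1 ht
      exact one_le_pow₀ (by linarith [i.cast_nonneg (α := ℝ)])
    exact ⟨hsq, hsq⟩
  | succ n ih =>
    by_cases hn : n.Prime
    · have hn1 : (1 : ℝ) ≤ n := mod_cast hn.one_lt.le
      simp only [errorScales, if_pos hn, Multiset.mem_add, Multiset.mem_map,
        Multiset.mem_singleton]
      constructor
      · rintro t (ht | ⟨s, _, rfl⟩)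
        · exact ih.1 t ht
        · exact le_max_of_le_right (one_le_pow₀ hn1)
      · rintro t ((ht | ⟨s, _, rfl⟩) | rfl)
        · exact ih.2 t ht
        · exact le_max_of_le_right (one_le_pow₀ hn1)
        · exact hn1
    · rwa [errorScales_succ_of_not_prime N hn]

lemma lowerSum_mono (h : ∀ t, 1 ≤ t → f t ≤ g t) : lowerSum N n f ≤ lowerSum N n g :=
  Multiset.sum_map_le_sum_map f g fun t ht ↦ h t ((one_le_of_mem_errorScales N n).1 t ht)

lemma upperSum_mono (h : ∀ t, 1 ≤ t → f t ≤ g t) : upperSum N n f ≤ upperSum N n g :=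
  Multiset.sum_map_le_sum_map f g fun t ht ↦ h t ((one_le_of_mem_errorScales N n).2 t ht)

lemma lowerSum_add : (lowerSum N n fun t ↦ f t + g t) = lowerSum N n f + lowerSum N n g :=
  Multiset.sum_map_add

lemma upperSum_add : (upperSum N n fun t ↦ f t + g t) = upperSum N n f + upperSum N n g :=
  Multiset.sum_map_add

lemma lowerSum_const_mul (c : ℝ) : (lowerSum N n fun t ↦ c * g t) = c * lowerSum N n g :=
  Multiset.sum_map_mul_left

lemma upperSum_const_mul (c : ℝ) : (upperSum N n fun t ↦ c * g t) = c * upperSum N n g :=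
  Multiset.sum_map_mul_left

lemma lowerSum_nonneg (h : ∀ t, 1 ≤ t → 0 ≤ g t) : 0 ≤ lowerSum N n g := by
  simpa [lowerSum] using lowerSum_mono (N := N) (n := n) h

lemma upperSum_nonneg (h : ∀ t, 1 ≤ t → 0 ≤ g t) : 0 ≤ upperSum N n g := by
  simpa [upperSum] using upperSum_mono (N := N) (n := n) h

end Sums

/-! ### Comparison of sifted intervals with parity sums -/

/-- The indicator function of `(-∞, X]`; summed over the error scales, it counts those `≤ X`. -/
noncomputable def cutoff (X t : ℝ) : ℝ := if t ≤ X then 1 else 0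

lemma cutoff_nonneg (X t : ℝ) : 0 ≤ cutoff X t := by
  unfold cutoff
  split_ifs <;> norm_num

lemma cutoff_of_le {X t : ℝ} (h : t ≤ X) : cutoff X t = 1 := if_pos h

lemma cutoff_max_mul {p c X : ℝ} (hp : 0 < p) (hc : c ≤ X) (t : ℝ) :
    cutoff X (max (p * t) c) = cutoff (X / p) t := by
  have : max (p * t) c ≤ X ↔ t ≤ X / p := by
    rw [max_le_iff, le_div_iff₀ hp, mul_comm, and_iff_left hc]
  simp only [cutoff, this]

lemma sqrt_div_two_le_sum_cutoff {N : ℕ} {X : ℝ} (hX : 1 ≤ X) (hXN : X ≤ N) :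
    √X / 2 ≤ ∑ i ∈ range N, cutoff X (((i : ℝ) + 1) ^ 2) := by
  set s := ⌊√X⌋₊
  have hsqrt : 1 ≤ √X := one_le_sqrt.2 hX
  have hsq := mul_self_sqrt (show 0 ≤ X by linarith)
  have hs_le : (s : ℝ) ≤ √X := Nat.floor_le (by positivity)
  have hs_lt : √X < s + 1 := Nat.lt_floor_add_one _
  have hs1 : (1 : ℝ) ≤ s := mod_cast (Nat.one_le_floor_iff _).2 hsqrt
  have hsN : s ≤ N := by
    have : (s : ℝ) ≤ N := by nlinarith
    exact_mod_cast this
  calc √X / 2 ≤ s := by linarith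
    _ = ∑ _i ∈ range s, (1 : ℝ) := by simp
    _ = ∑ i ∈ range s, cutoff X (((i : ℝ) + 1) ^ 2) := by
        refine sum_congr rfl fun i hi ↦ (cutoff_of_le ?_).symm
        have : (i : ℝ) + 1 ≤ s := mod_cast mem_range.1 hi
        nlinarith [i.cast_nonneg (α := ℝ)]
    _ ≤ ∑ i ∈ range N, cutoff X (((i : ℝ) + 1) ^ 2) :=
        sum_le_sum_of_subset_of_nonneg (range_mono hsN) fun i _ _ ↦ cutoff_nonneg _ _

lemma paritySum_zero_le_of_lt_sq {N p : ℕ} (h : N < p * p) : paritySum N p 0 ≤ 15 := by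
  have hsub : parityRough N p 0 ⊆ {1} := by
    intro m hm
    simp only [mem_parityRough, mem_Ioc, ZMod.natCast_eq_zero_iff_even] at hm
    obtain ⟨⟨hm_pos, hmN⟩, hrough, heven⟩ := hm
    by_contra hm1
    rw [mem_singleton] at hm1
    have hm_prime : ¬ m.Prime := fun hm' ↦ by
      rw [ArithmeticFunction.cardFactors_apply_prime hm'] at heven
      exact Nat.not_even_one heven
    have hsq := Nat.minFac_sq_le_self hm_pos hm_prime
    have hp := hrough _ (Nat.minFac_prime hm1) m.minFac_dvd
    nlinarith
  calc paritySum N p 0 ≤ ∑ m ∈ {1}, N / m % 16 := sum_le_sum_of_subset hsub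
    _ ≤ 15 := by
      rw [sum_singleton]
      lia

/-- The reciprocal of the density of the weights in `paritySum`. -/
noncomputable def parityScale : ℝ := 2 / log 16

lemma two_le_log_sixteen : 2 ≤ log 16 := by linarith [log_sixteen_eq, log_two_gt_d9]

lemma parityScale_pos : 0 < parityScale := div_pos (by norm_num) (by linarith [two_le_log_sixteen])

lemma parityScale_le_one : parityScale ≤ 1 :=
  (div_le_one (by linarith [two_le_log_sixteen])).2 two_le_log_sixteen

/-- The sifted intervals of length `X ∈ [n ^ 2, N]` contain at least as many integers as the parity
sum of even parity predicts, up to the error scales of the lower sieve. -/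
def LowerSieveBound (N n : ℕ) : Prop :=
  ∀ α X : ℝ, X ≤ N → (n : ℝ) ^ 2 ≤ X →
    parityScale * paritySum ⌊X⌋₊ n 0 - 102 * lowerSum N n (cutoff X) ≤ #(sifted α X n)

/-- The sifted intervals of length `X ∈ [n, N]` contain at most as many integers as the parity
sum of odd parity predicts, up to the error scales of the upper sieve. -/
def UpperSieveBound (N n : ℕ) : Prop :=
  ∀ α X : ℝ, X ≤ N → (n : ℝ) ≤ X →
    #(sifted α X n) ≤ parityScale * paritySum ⌊X⌋₊ n 1 + 102 * upperSum N n (cutoff X)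

lemma abs_parityScale_mul_paritySum_sub_le {X : ℝ} (hX : 1 ≤ X) (e : ZMod 2) :
    |parityScale * paritySum ⌊X⌋₊ 1 e - X| ≤ 50 * √X := by
  have hlog := two_le_log_sixteen
  have hquot : parityScale * paritySum ⌊X⌋₊ 1 e - X =
      (2 * (paritySum ⌊X⌋₊ 1 e : ℝ) - X * log 16) / log 16 := by
    unfold parityScale
    field_simp
  rw [hquot, abs_div, abs_of_pos (show 0 < log 16 by linarith), div_le_iff₀ (by linarith)]
  nlinarith [abs_two_mul_paritySum_sub_le hX e, sqrt_nonneg X]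

lemma lowerSieveBound_one (N : ℕ) : LowerSieveBound N 1 := by
  intro α X hXN hX
  have hX1 : 1 ≤ X := by simpa using hX
  have hparity := abs_le.1 (abs_parityScale_mul_paritySum_sub_le hX1 0)
  rw [lowerSum_one]
  linarith [(card_sifted_one_mem_Icc α (show 0 ≤ X by linarith)).1,
    sqrt_div_two_le_sum_cutoff hX1 hXN, one_le_sqrt.2 hX1]

lemma upperSieveBound_one (N : ℕ) : UpperSieveBound N 1 := by
  intro α X hXN hX
  have hX1 : 1 ≤ X := by simpa using hX
  have hparity := abs_le.1 (abs_parityScale_mul_paritySum_sub_le hX1 1)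
  rw [upperSum_one]
  linarith [(card_sifted_one_mem_Icc α (show 0 ≤ X by linarith)).2,
    sqrt_div_two_le_sum_cutoff hX1 hXN, one_le_sqrt.2 hX1]

section Step

variable {N p : ℕ}

lemma cast_card_sifted_eq_add (hp : p.Prime) (α X : ℝ) :
    (#(sifted α X p) : ℝ) = #(sifted α X (p + 1)) + #(sifted (α / p) (X / p) p) :=
  mod_cast card_sifted_eq_add_of_prime hp α X

lemma cast_paritySum_floor_eq_add (hp : p.Prime) (X : ℝ) (e : ZMod 2) :
    (paritySum ⌊X⌋₊ p e : ℝ) = paritySum ⌊X⌋₊ (p + 1) e + paritySum ⌊X / p⌋₊ p (e + 1) := by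
  rw [Nat.floor_div_natCast]
  exact_mod_cast paritySum_eq_add_of_prime hp ⌊X⌋₊ e

lemma LowerSieveBound.succ_of_prime (hp : p.Prime) (hlower : LowerSieveBound N p)
    (hupper : UpperSieveBound N p) : LowerSieveBound N (p + 1) := by
  intro α X hXN hX
  have hp1 : (1 : ℝ) ≤ p := mod_cast hp.one_lt.le
  push_cast at hX
  have hX2 : (p : ℝ) ^ 2 ≤ X := by nlinarith
  have hlower_X := hlower α X hXN hX2
  have hupper_div := hupper (α / p) (X / p)
    ((div_le_self (by nlinarith) hp1).trans hXN) (by rw [le_div_iff₀ (by linarith)]; linarith)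
  have hparity := cast_paritySum_floor_eq_add hp X 0
  rw [zero_add] at hparity
  rw [hparity, mul_add] at hlower_X
  rw [lowerSum_succ_of_prime hp]
  simp_rw [cutoff_max_mul (show (0 : ℝ) < p by linarith) hX2]
  linarith [cast_card_sifted_eq_add hp α X]

lemma UpperSieveBound.succ_of_prime (hp : p.Prime) (hlower : LowerSieveBound N p)
    (hupper : UpperSieveBound N p) : UpperSieveBound N (p + 1) := by
  intro α X hXN hX
  have hp1 : (1 : ℝ) ≤ p := mod_cast hp.one_lt.le
  push_cast at hX
  have hupper_X := hupper α X hXN (by linarith)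
  have hparity := cast_paritySum_floor_eq_add hp X 1
  rw [show (1 + 1 : ZMod 2) = 0 from rfl] at hparity
  rw [hparity, mul_add] at hupper_X
  rw [upperSum_succ_of_prime hp, cutoff_of_le (show (p : ℝ) ≤ X by linarith)]
  have hsplit := cast_card_sifted_eq_add hp α X
  rcases le_or_gt ((p : ℝ) ^ 3) X with hX3 | hX3
  · have hlower_div := hlower (α / p) (X / p)
      ((div_le_self (by linarith) hp1).trans hXN) (by rw [le_div_iff₀ (by linarith)]; linarith)
    simp_rw [cutoff_max_mul (show (0 : ℝ) < p by linarith) hX3]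
    linarith
  · have hsmall : (paritySum ⌊X / p⌋₊ p 0 : ℝ) ≤ 15 := by
      refine mod_cast paritySum_zero_le_of_lt_sq ?_
      rw [Nat.floor_lt (div_nonneg (by linarith) (by linarith)), div_lt_iff₀ (by linarith)]
      push_cast
      linarith
    have hscaled : parityScale * (paritySum ⌊X / p⌋₊ p 0 : ℝ) ≤ 15 := by
      nlinarith [parityScale_le_one, parityScale_pos]
    have hnonneg : 0 ≤ lowerSum N p fun t ↦ cutoff X (max (p * t) (p ^ 3)) :=
      lowerSum_nonneg fun t _ ↦ cutoff_nonneg _ _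
    linarith [(#(sifted (α / p) (X / p) p)).cast_nonneg (α := ℝ)]

end Step

lemma lowerSieveBound_and_upperSieveBound (N : ℕ) {n : ℕ} (hn : 1 ≤ n) :
    LowerSieveBound N n ∧ UpperSieveBound N n := by
  induction n, hn using Nat.le_induction with
  | base => exact ⟨lowerSieveBound_one N, upperSieveBound_one N⟩
  | succ n _ ih =>
    by_cases hn : n.Prime
    · exact ⟨.succ_of_prime hn ih.1 ih.2, .succ_of_prime hn ih.1 ih.2⟩
    · constructor
      · intro α X hXN hX
        rw [sifted_succ_of_not_prime hn, paritySum_succ_of_not_prime hn,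
          lowerSum_succ_of_not_prime hn]
        exact ih.1 α X hXN (le_trans (by gcongr; simp) hX)
      · intro α X hXN hX
        rw [sifted_succ_of_not_prime hn, paritySum_succ_of_not_prime hn,
          upperSum_succ_of_not_prime hn]
        exact ih.2 α X hXN (le_trans (by simp) hX)

/-! ### Weights on the error scales -/

/-- The additive normalization of the logarithm for which the weights below are nonnegative. -/
noncomputable def logShift : ℝ := 2 * logGap + 4

lemma six_le_logShift : 6 ≤ logShift := by
  unfold logShift
  linarith [one_le_logGap]

/-- The logarithm of an error scale, normalized by `logShift`. -/
noncomputable def shiftedLog (τ : ℝ) : ℝ := log τ + logShift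

lemma shiftedLog_mul {p τ : ℝ} (hp : 0 < p) (hτ : 0 < τ) :
    shiftedLog (p * τ) = shiftedLog τ + log p := by
  unfold shiftedLog
  rw [log_mul hp.ne' hτ.ne']
  ring

lemma primeLog_add_le_shiftedLog {n : ℕ} (hn : n ≠ 0) {τ : ℝ} (hτ : n ≤ τ) :
    primeLog n + logGap + 4 ≤ shiftedLog τ := by
  unfold shiftedLog logShift
  linarith [primeLog_le hn, log_le_log (by positivity) hτ]

lemma two_mul_primeLog_add_le_shiftedLog {n : ℕ} (hn : n ≠ 0) {τ : ℝ} (hτ : (n : ℝ) ^ 2 ≤ τ) :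
    2 * primeLog n + 4 ≤ shiftedLog τ := by
  have hlog : 2 * log n ≤ log τ := by simpa using log_le_log (by positivity) hτ
  unfold shiftedLog logShift
  linarith [primeLog_le hn]

/-- A quadratic polynomial in `shiftedLog τ - M`, divided by `M * τ`. With `M = log p`, the profile
with `c = 1` at `τ` is to leading order reproduced by the profile with `c = 1 - M ^ 2` at `p * τ`,
and vice versa, when `M` increases to `M + log p / p`. -/
noncomputable def profile (c M τ : ℝ) : ℝ := ((shiftedLog τ - M) ^ 2 + c) / (M * τ)

section Profile

variable {c M τ τ' : ℝ}

lemma profile_le_profile (hM : 0 < M) (hτ : 0 < τ) (hττ' : τ ≤ τ')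
    (hlin : 2 * (shiftedLog τ - M) ≤ (shiftedLog τ - M) ^ 2 + c)
    (hconst : 2 ≤ (shiftedLog τ - M) ^ 2 + c) : profile c M τ' ≤ profile c M τ := by
  set a := shiftedLog τ - M with ha
  set k := log (τ' / τ) with hk
  have hk_nonneg : 0 ≤ k := log_nonneg ((one_le_div hτ).2 hττ')
  have hτ' : 0 < τ' := hτ.trans_le hττ'
  have hshift : shiftedLog τ' - M = a + k := by
    rw [ha, hk, log_div hτ'.ne' hτ.ne']
    unfold shiftedLog
    ring
  have hexp : τ * (1 + k + k ^ 2 / 2) ≤ τ' := by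
    rw [← le_div_iff₀' hτ, ← exp_log (div_pos hτ' hτ)]
    exact quadratic_le_exp_of_nonneg hk_nonneg
  have hnum : (a + k) ^ 2 + c ≤ (a ^ 2 + c) * (1 + k + k ^ 2 / 2) := by
    nlinarith [mul_nonneg hk_nonneg (sub_nonneg.2 hlin),
      mul_nonneg (sq_nonneg k) (sub_nonneg.2 hconst)]
  rw [profile, profile, hshift, div_le_div_iff₀ (by positivity) (by positivity)]
  calc ((a + k) ^ 2 + c) * (M * τ) ≤ (a ^ 2 + c) * (1 + k + k ^ 2 / 2) * (M * τ) := by gcongr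
    _ = (a ^ 2 + c) * M * (τ * (1 + k + k ^ 2 / 2)) := by ring
    _ ≤ (a ^ 2 + c) * M * τ' := by
        have : 0 ≤ a ^ 2 + c := by linarith
        gcongr
    _ = (a ^ 2 + c) * (M * τ') := by ring

lemma profile_one_le_profile_one (hM : 0 < M) (hτ : 0 < τ) (hττ' : τ ≤ τ')
    (hu : M + 1 ≤ shiftedLog τ) : profile 1 M τ' ≤ profile 1 M τ :=
  profile_le_profile hM hτ hττ' (by nlinarith) (by nlinarith)

lemma profile_one_sub_sq_le_profile_one_sub_sq (hM : 0 < M) (hτ : 0 < τ) (hττ' : τ ≤ τ')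
    (hu : 2 * M + 1 ≤ shiftedLog τ) : profile (1 - M ^ 2) M τ' ≤ profile (1 - M ^ 2) M τ :=
  profile_le_profile hM hτ hττ' (by nlinarith) (by nlinarith)

lemma one_div_le_profile_one_sub_sq (hM : 0 < M) (hτ : 0 < τ)
    (hu : 2 * M + 1 ≤ shiftedLog τ) : 1 / τ ≤ profile (1 - M ^ 2) M τ := by
  rw [profile, ← div_div]
  gcongr
  rw [one_le_div hM]
  nlinarith

variable {p : ℝ}

lemma profile_one_add_profile_le (hM : 1 ≤ M) (hp : 1 ≤ p) (hlog : log p ≤ M) (hτ : 0 < τ)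
    (hu : 0 ≤ shiftedLog τ) {M' : ℝ} (hM' : M' = M + log p / p) :
    profile 1 M' τ + profile (1 - M' ^ 2) M' (p * τ) ≤
      (1 + (M - log p) / (p * M')) * profile 1 M τ := by
  have hp0 : 0 < p := by linarith
  have hl : 0 ≤ log p := log_nonneg hp
  have hMM' : M ≤ M' := by linarith [div_nonneg hl hp0.le]
  have hlog_eq : log p = p * (M' - M) := by
    rw [hM']
    field_simp
    ring
  unfold profile
  rw [shiftedLog_mul hp0 hτ]
  set u := shiftedLog τ
  set l := log p
  have hdiff : (1 + (M - l) / (p * M')) * (((u - M) ^ 2 + 1) / (M * τ)) -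
      (((u - M') ^ 2 + 1) / (M' * τ) + ((u + l - M') ^ 2 + (1 - M' ^ 2)) / (M' * (p * τ))) =
      ((M - l) * M + l * (M' - l) + 2 * u * (M' - M)) / (p * M' * τ) := by
    field_simp [show M ≠ 0 by linarith, show M' ≠ 0 by linarith]
    rw [hlog_eq]
    ring
  have hM'0 : 0 ≤ M' := by linarith
  have hnonneg : 0 ≤ ((M - l) * M + l * (M' - l) + 2 * u * (M' - M)) / (p * M' * τ) := by
    refine div_nonneg (add_nonneg (add_nonneg ?_ ?_) ?_) (by positivity)
    · exact mul_nonneg (by linarith) (by linarith)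
    · exact mul_nonneg hl (by linarith)
    · exact mul_nonneg (by linarith) (by linarith)
  linarith

lemma profile_add_profile_one_le (hM : 1 ≤ M) (hp : 1 ≤ p) (hτ : 0 < τ)
    (hu : 2 * M + 1 ≤ shiftedLog τ) {M' : ℝ} (hM' : M' = M + log p / p) :
    profile (1 - M' ^ 2) M' τ + profile 1 M' (p * τ) ≤
      (1 + (M - log p + (M' - log p) ^ 2) / (p * M')) * profile (1 - M ^ 2) M τ := by
  have hp0 : 0 < p := by linarith
  have hl : 0 ≤ log p := log_nonneg hp
  have hMM' : M ≤ M' := by linarith [div_nonneg hl hp0.le]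
  have hlog_eq : log p = p * (M' - M) := by
    rw [hM']
    field_simp
    ring
  have hlower := one_div_le_profile_one_sub_sq (by linarith) hτ hu
  unfold profile at *
  rw [shiftedLog_mul hp0 hτ]
  set u := shiftedLog τ
  set l := log p
  have hdiff : (1 + (M - l + (M' - l) ^ 2) / (p * M')) *
        (((u - M) ^ 2 + (1 - M ^ 2)) / (M * τ)) -
      (((u - M') ^ 2 + (1 - M' ^ 2)) / (M' * τ) + ((u + l - M') ^ 2 + 1) / (M' * (p * τ))) =
      (2 * u * (M' - M) / τ +
        (M' - l) ^ 2 * (((u - M) ^ 2 + (1 - M ^ 2)) / (M * τ) - 1 / τ)) / (p * M') := by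
    field_simp [show M ≠ 0 by linarith, show M' ≠ 0 by linarith]
    rw [hlog_eq]
    ring
  have hM'0 : 0 ≤ M' := by linarith
  have hnonneg : 0 ≤ (2 * u * (M' - M) / τ +
      (M' - l) ^ 2 * (((u - M) ^ 2 + (1 - M ^ 2)) / (M * τ) - 1 / τ)) / (p * M') := by
    refine div_nonneg (add_nonneg (div_nonneg ?_ hτ.le) ?_) (by positivity)
    · exact mul_nonneg (by linarith) (by linarith)
    · exact mul_nonneg (sq_nonneg _) (by linarith)
  linarith

end Profile

/-- The weight of an error scale `t` of the upper sieve of level `n`. -/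
noncomputable def upperWeight (n : ℕ) (t : ℝ) : ℝ := profile 1 (primeLog n) (max t n)

/-- The weight of an error scale `t` of the lower sieve of level `n`. -/
noncomputable def lowerWeight (n : ℕ) (t : ℝ) : ℝ :=
  profile (1 - primeLog n ^ 2) (primeLog n) (max t (n ^ 2))

lemma primeLog_pos (n : ℕ) : 0 < primeLog n := by linarith [one_le_primeLog n]

section Weight

variable {n : ℕ} {t τ : ℝ}

lemma upperWeight_nonneg (n : ℕ) (ht : 1 ≤ t) : 0 ≤ upperWeight n t := by
  have : 0 ≤ max t n := le_max_of_le_left (by linarith)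
  have hM := primeLog_pos n
  unfold upperWeight profile
  positivity

lemma profile_one_le_upperWeight (hn : n ≠ 0) (htτ : max t n ≤ τ) :
    profile 1 (primeLog n) τ ≤ upperWeight n t :=
  profile_one_le_profile_one (primeLog_pos n) (lt_max_of_lt_right (by positivity)) htτ
    (by linarith [primeLog_add_le_shiftedLog hn (le_max_right t n), one_le_logGap])

lemma profile_one_sub_sq_le_lowerWeight (hn : n ≠ 0) (htτ : max t (n ^ 2) ≤ τ) :
    profile (1 - primeLog n ^ 2) (primeLog n) τ ≤ lowerWeight n t :=
  profile_one_sub_sq_le_profile_one_sub_sq (primeLog_pos n) (lt_max_of_lt_right (by positivity)) htτ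
    (by linarith [two_mul_primeLog_add_le_shiftedLog hn (le_max_right t ((n : ℝ) ^ 2))])

lemma one_div_le_lowerWeight (hn : n ≠ 0) (htτ : max t (n ^ 2) ≤ τ) : 1 / τ ≤ lowerWeight n t := by
  have hnτ : (n : ℝ) ^ 2 ≤ τ := (le_max_right _ _).trans htτ
  exact (one_div_le_profile_one_sub_sq (primeLog_pos n) (lt_of_lt_of_le (by positivity) hnτ)
    (by linarith [two_mul_primeLog_add_le_shiftedLog hn hnτ])).trans
      (profile_one_sub_sq_le_lowerWeight hn htτ)

lemma lowerWeight_nonneg (hn : n ≠ 0) (t : ℝ) : 0 ≤ lowerWeight n t :=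
  le_trans (by positivity) (one_div_le_lowerWeight hn le_rfl)

lemma upperWeight_succ_le_of_not_prime (hn : n ≠ 0) (hprime : ¬ n.Prime) :
    upperWeight (n + 1) t ≤ upperWeight n t := by
  rw [upperWeight, primeLog_succ_of_not_prime hprime]
  exact profile_one_le_upperWeight hn (by gcongr; simp)

lemma lowerWeight_succ_le_of_not_prime (hn : n ≠ 0) (hprime : ¬ n.Prime) :
    lowerWeight (n + 1) t ≤ lowerWeight n t := by
  rw [lowerWeight, primeLog_succ_of_not_prime hprime]
  exact profile_one_sub_sq_le_lowerWeight hn (by gcongr; simp)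

end Weight

/-! ### Boundedness of the total weight -/

/-- The total weight of the error scales. -/
noncomputable def potential (N n : ℕ) : ℝ :=
  upperSum N n (upperWeight n) + lowerSum N n (lowerWeight n)

lemma potential_nonneg (N : ℕ) {n : ℕ} (hn : n ≠ 0) : 0 ≤ potential N n :=
  add_nonneg (upperSum_nonneg fun _ ht ↦ upperWeight_nonneg n ht)
    (lowerSum_nonneg fun t _ ↦ lowerWeight_nonneg hn t)

lemma potential_succ_le_of_not_prime (N : ℕ) {n : ℕ} (hn : n ≠ 0) (hprime : ¬ n.Prime) :
    potential N (n + 1) ≤ potential N n := by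
  unfold potential
  rw [upperSum_succ_of_not_prime hprime, lowerSum_succ_of_not_prime hprime]
  exact add_le_add (upperSum_mono fun t _ ↦ upperWeight_succ_le_of_not_prime hn hprime)
    (lowerSum_mono fun t _ ↦ lowerWeight_succ_le_of_not_prime hn hprime)

/-- The constant `c` such that sieving by `p` multiplies the total weight by at most
`1 + c / (p * primeLog (p + 1))`. -/
noncomputable def growthRate : ℝ := logGap + (logGap + 1) ^ 2 + logShift ^ 2 + 1

lemma growthRate_nonneg : 0 ≤ growthRate := by
  have := one_le_logGap
  unfold growthRate
  positivity

lemma half_le_log {n : ℕ} (hn : 2 ≤ n) : 1 / 2 ≤ log n := by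
  have : log 2 ≤ log n := log_le_log (by norm_num) (mod_cast hn)
  linarith [log_two_gt_d9]

section Step

variable {p : ℕ} (hp : p.Prime)

include hp

lemma primeLog_le_primeLog_succ : primeLog p ≤ primeLog (p + 1) := by
  rw [primeLog_succ_of_prime hp]
  exact le_add_of_nonneg_right (div_nonneg (log_natCast_nonneg p) p.cast_nonneg)

lemma primeLog_succ_le_add_one : primeLog (p + 1) ≤ primeLog p + 1 := by
  rw [primeLog_succ_of_prime hp]
  linarith [log_div_self_le_one (show (0 : ℝ) < p from mod_cast hp.pos)]

lemma upperWeight_succ_add_lowerWeight_succ_le {t : ℝ} (ht : 1 ≤ t) :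
    upperWeight (p + 1) t + lowerWeight (p + 1) (max (p * t) (p ^ 2)) ≤
      (1 + growthRate / (p * primeLog (p + 1))) * upperWeight p t := by
  have hp1 : (1 : ℝ) ≤ p := mod_cast hp.one_lt.le
  have hgap := one_le_logGap
  set τ := max t p with hτ
  have hτ0 : 0 < τ := lt_max_of_lt_left (by linarith)
  have hscale : max (p * t) ((p : ℝ) ^ 2) = p * τ := by
    rw [hτ, mul_max_of_nonneg _ _ (by linarith), sq]
  have hu := primeLog_add_le_shiftedLog hp.ne_zero (le_max_right t p)
  have hu' := two_mul_primeLog_add_le_shiftedLog hp.ne_zero (le_max_right (p * t) ((p : ℝ) ^ 2))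
  rw [hscale] at hu' ⊢
  have hM := primeLog_pos p
  have hM' := primeLog_pos (p + 1)
  have hM'_le := primeLog_succ_le_add_one hp
  have hupper : upperWeight (p + 1) t ≤ profile 1 (primeLog (p + 1)) τ :=
    profile_one_le_profile_one hM' hτ0 (max_le_max le_rfl (by simp)) (by linarith)
  have hlower : lowerWeight (p + 1) (p * τ) ≤
      profile (1 - primeLog (p + 1) ^ 2) (primeLog (p + 1)) (p * τ) :=
    profile_one_sub_sq_le_profile_one_sub_sq hM' (by positivity) (le_max_left _ _) (by linarith)
  have hprofile := profile_one_add_profile_le (one_le_primeLog p) hp1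
    (log_le_primeLog hp.ne_zero) hτ0 (by linarith) (primeLog_succ_of_prime hp)
  refine (add_le_add hupper hlower).trans (hprofile.trans ?_)
  refine mul_le_mul_of_nonneg_right ?_ (upperWeight_nonneg p ht)
  gcongr
  unfold growthRate
  nlinarith [primeLog_le hp.ne_zero, sq_nonneg logShift]

lemma lowerWeight_succ_add_upperWeight_succ_le (t : ℝ) :
    lowerWeight (p + 1) t + upperWeight (p + 1) (max (p * t) (p ^ 3)) ≤
      (1 + growthRate / (p * primeLog (p + 1))) * lowerWeight p t := by
  have hp1 : (1 : ℝ) ≤ p := mod_cast hp.one_lt.le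
  have hgap := one_le_logGap
  set τ := max t ((p : ℝ) ^ 2) with hτ
  have hτ0 : 0 < τ := lt_max_of_lt_right (by positivity)
  have hscale : max (p * t) ((p : ℝ) ^ 3) = p * τ := by
    rw [hτ, mul_max_of_nonneg _ _ (by linarith), ← pow_succ']
  have hu := two_mul_primeLog_add_le_shiftedLog hp.ne_zero (le_max_right t ((p : ℝ) ^ 2))
  have hu' := shiftedLog_mul (show (0 : ℝ) < p by linarith) hτ0
  rw [hscale]
  have hM := primeLog_pos p
  have hM' := primeLog_pos (p + 1)
  have hM_le := primeLog_le_primeLog_succ hp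
  have hM'_le := primeLog_succ_le_add_one hp
  have hlog_le := log_le_primeLog hp.ne_zero
  have hle_log := primeLog_le hp.ne_zero
  have hlower : lowerWeight (p + 1) t ≤
      profile (1 - primeLog (p + 1) ^ 2) (primeLog (p + 1)) τ :=
    profile_one_sub_sq_le_profile_one_sub_sq hM' hτ0
      (max_le_max le_rfl (by gcongr; simp)) (by linarith)
  have hupper : upperWeight (p + 1) (p * τ) ≤ profile 1 (primeLog (p + 1)) (p * τ) :=
    profile_one_le_profile_one hM' (by positivity) (le_max_left _ _)
      (by linarith [log_nonneg hp1])
  have hprofile := profile_add_profile_one_le (one_le_primeLog p) hp1 hτ0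
    (show 2 * primeLog p + 1 ≤ shiftedLog τ by linarith) (primeLog_succ_of_prime hp)
  refine (add_le_add hlower hupper).trans (hprofile.trans ?_)
  refine mul_le_mul_of_nonneg_right ?_ (lowerWeight_nonneg hp.ne_zero t)
  gcongr
  unfold growthRate
  nlinarith [sq_nonneg logShift]

lemma upperWeight_succ_self_le : upperWeight (p + 1) p ≤ growthRate / (p * primeLog (p + 1)) := by
  have hp0 : (0 : ℝ) < p := mod_cast hp.pos
  have hgap := one_le_logGap
  have hu := primeLog_add_le_shiftedLog hp.ne_zero (le_refl (p : ℝ))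
  have hM := primeLog_pos (p + 1)
  have hM_le := primeLog_le_primeLog_succ hp
  have hM'_le := primeLog_succ_le_add_one hp
  have hsq : (shiftedLog p - primeLog (p + 1)) ^ 2 ≤ logShift ^ 2 := by
    have := log_le_primeLog hp.ne_zero
    refine pow_le_pow_left₀ (by linarith) ?_ 2
    unfold shiftedLog
    linarith
  calc upperWeight (p + 1) p ≤ profile 1 (primeLog (p + 1)) p :=
        profile_one_le_profile_one hM hp0 (le_max_left _ _) (by linarith)
    _ ≤ growthRate / (p * primeLog (p + 1)) := by
        rw [profile, mul_comm (p : ℝ)]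
        gcongr
        unfold growthRate
        nlinarith

lemma potential_succ_le_of_prime (N : ℕ) :
    potential N (p + 1) + 1 ≤
      (1 + growthRate / (p * primeLog (p + 1))) * (potential N p + 1) := by
  have hupper : upperSum N p (upperWeight (p + 1)) +
      upperSum N p (fun t ↦ lowerWeight (p + 1) (max (p * t) (p ^ 2))) ≤
      (1 + growthRate / (p * primeLog (p + 1))) * upperSum N p (upperWeight p) := by
    rw [← upperSum_add, ← upperSum_const_mul]
    exact upperSum_mono fun t ht ↦ upperWeight_succ_add_lowerWeight_succ_le hp ht
  have hlower : lowerSum N p (lowerWeight (p + 1)) +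
      lowerSum N p (fun t ↦ upperWeight (p + 1) (max (p * t) (p ^ 3))) ≤
      (1 + growthRate / (p * primeLog (p + 1))) * lowerSum N p (lowerWeight p) := by
    rw [← lowerSum_add, ← lowerSum_const_mul]
    exact lowerSum_mono fun t _ ↦ lowerWeight_succ_add_upperWeight_succ_le hp t
  unfold potential
  rw [upperSum_succ_of_prime hp, lowerSum_succ_of_prime hp]
  linarith [upperWeight_succ_self_le hp]

lemma one_div_mul_primeLog_succ_le :
    1 / (p * primeLog (p + 1)) ≤
      (1 + 2 * logGap) * (1 / primeLog p - 1 / primeLog (p + 1)) := by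
  have hM := primeLog_pos p
  have hM' := primeLog_pos (p + 1)
  have hp0 : (0 : ℝ) < p := mod_cast hp.pos
  have hdiff : (1 + 2 * logGap) * (1 / primeLog p - 1 / primeLog (p + 1)) =
      (1 + 2 * logGap) * log p / primeLog p * (1 / (p * primeLog (p + 1))) := by
    rw [div_sub_div _ _ hM.ne' hM'.ne', one_mul, mul_one,
      show primeLog (p + 1) - primeLog p = log p / p by rw [primeLog_succ_of_prime hp]; ring]
    field_simp
  rw [hdiff]
  refine le_mul_of_one_le_left (by positivity) ((one_le_div hM).2 ?_)
  nlinarith [primeLog_le hp.ne_zero, half_le_log hp.two_le, one_le_logGap]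

end Step

/-- An integrating factor for the growth rate `c`. -/
noncomputable def integratingFactor (c : ℝ) (n : ℕ) : ℝ :=
  exp (c * (1 + 2 * logGap) / primeLog n)

section Gronwall

variable {c D : ℝ} {F : ℕ → ℝ}

lemma one_le_integratingFactor (hc : 0 ≤ c) (n : ℕ) : 1 ≤ integratingFactor c n := by
  have := primeLog_pos n
  have := one_le_logGap
  exact one_le_exp (by positivity)

lemma integratingFactor_le (hc : 0 ≤ c) (n : ℕ) :
    integratingFactor c n ≤ exp (c * (1 + 2 * logGap)) := by
  have := one_le_logGap
  exact exp_le_exp.2 (div_le_self (by positivity) (one_le_primeLog n))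

lemma mul_integratingFactor_succ_le {p : ℕ} (hp : p.Prime) (hc : 0 ≤ c) :
    (1 + c / (p * primeLog (p + 1))) * integratingFactor c (p + 1) ≤ integratingFactor c p := by
  set d := c * ((1 + 2 * logGap) * (1 / primeLog p - 1 / primeLog (p + 1))) with hd
  have hle : 1 + c / (p * primeLog (p + 1)) ≤ exp d := by
    have := mul_le_mul_of_nonneg_left (one_div_mul_primeLog_succ_le hp) hc
    rw [mul_one_div] at this
    linarith [add_one_le_exp d]
  calc (1 + c / (p * primeLog (p + 1))) * integratingFactor c (p + 1)
      ≤ exp d * integratingFactor c (p + 1) := by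
        have := one_le_integratingFactor hc (p + 1)
        gcongr
    _ = integratingFactor c p := by
        rw [integratingFactor, integratingFactor, ← exp_add, hd]
        congr 1
        ring

lemma le_exp_mul_of_prime_step (hc : 0 ≤ c) (hD : 0 ≤ D) (hF : ∀ n, n ≠ 0 → 0 ≤ F n)
    (hprime : ∀ p : ℕ, p.Prime → F (p + 1) ≤
      (1 + c / (p * primeLog (p + 1))) * F p + D * (primeLog (p + 1) - primeLog p))
    (hnot : ∀ n, n ≠ 0 → ¬ n.Prime → F (n + 1) ≤ F n) {n : ℕ} (hn : n ≠ 0) :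
    F n ≤ exp (c * (1 + 2 * logGap)) * (F 1 + D * primeLog n) := by
  set E := exp (c * (1 + 2 * logGap))
  suffices H : F n * integratingFactor c n ≤ E * (F 1 + D * primeLog n) from
    (le_mul_of_one_le_right (hF n hn) (one_le_integratingFactor hc n)).trans H
  induction n, Nat.one_le_iff_ne_zero.2 hn using Nat.le_induction with
  | base =>
    rw [mul_comm]
    refine mul_le_mul (integratingFactor_le hc 1) ?_ (hF 1 one_ne_zero) (exp_nonneg _)
    exact le_add_of_nonneg_right (mul_nonneg hD (primeLog_pos 1).le)
  | succ p hp1 ih =>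
    have hp0 : p ≠ 0 := by lia
    specialize ih hp0
    by_cases hp : p.Prime
    · have hI := one_le_integratingFactor hc (p + 1)
      have hM := primeLog_le_primeLog_succ hp
      have hstep : F p * ((1 + c / (p * primeLog (p + 1))) * integratingFactor c (p + 1)) ≤
          F p * integratingFactor c p :=
        mul_le_mul_of_nonneg_left (mul_integratingFactor_succ_le hp hc) (hF p hp0)
      have hsource : D * (primeLog (p + 1) - primeLog p) * integratingFactor c (p + 1) ≤
          D * (primeLog (p + 1) - primeLog p) * E :=
        mul_le_mul_of_nonneg_left (integratingFactor_le hc _) (mul_nonneg hD (by linarith))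
      linarith [mul_le_mul_of_nonneg_right (hprime p hp)
        (show 0 ≤ integratingFactor c (p + 1) by linarith)]
    · rw [integratingFactor, primeLog_succ_of_not_prime hp, ← integratingFactor]
      have := one_le_integratingFactor hc p
      exact le_trans (by gcongr; exact hnot p hp0 hp) ih

end Gronwall

lemma log_sq_add_cube_div_sq_le {s y : ℝ} (hs : 0 ≤ s) (hy : 1 ≤ y) :
    (log (y ^ 2) + s) ^ 3 / y ^ 2 ≤ (12 + s) ^ 3 * (y ^ (3 / 2 : ℝ))⁻¹ := by
  have hlog : log y ≤ 6 * y ^ (1 / 6 : ℝ) := by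
    linarith [log_le_rpow_div (x := y) (by linarith) (show (0 : ℝ) < 1 / 6 by norm_num)]
  have hlog_nonneg : 0 ≤ log y := log_nonneg hy
  have hone : 1 ≤ y ^ (1 / 6 : ℝ) := one_le_rpow hy (by norm_num)
  have hcube : (y ^ (1 / 6 : ℝ)) ^ 3 = y ^ (1 / 2 : ℝ) := by
    rw [← rpow_natCast, ← rpow_mul (by linarith)]
    norm_num
  have hsq : y ^ 2 = y ^ (1 / 2 : ℝ) * y ^ (3 / 2 : ℝ) := by
    rw [← rpow_add (by linarith)]
    norm_num
  have hle : log (y ^ 2) + s ≤ (12 + s) * y ^ (1 / 6 : ℝ) := by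
    rw [log_pow]
    push_cast
    nlinarith
  rw [div_le_iff₀ (by positivity)]
  calc (log (y ^ 2) + s) ^ 3 ≤ ((12 + s) * y ^ (1 / 6 : ℝ)) ^ 3 := by
        gcongr
        rw [log_pow]
        positivity
    _ = (12 + s) ^ 3 * (y ^ (3 / 2 : ℝ))⁻¹ * y ^ 2 := by
        rw [mul_pow, hcube, hsq]
        field_simp

lemma exists_sum_log_cube_div_le {s : ℝ} (hs : 0 ≤ s) : ∃ C : ℝ, 0 ≤ C ∧ ∀ N : ℕ,
    ∑ i ∈ range N, (log (((i : ℝ) + 1) ^ 2) + s) ^ 3 / ((i : ℝ) + 1) ^ 2 ≤ C := by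
  have hsummable : Summable fun i : ℕ ↦ (12 + s) ^ 3 * (((i + 1 : ℕ) : ℝ) ^ (3 / 2 : ℝ))⁻¹ :=
    ((summable_nat_add_iff 1).2 (summable_nat_rpow_inv.2 (by norm_num))).mul_left _
  refine ⟨_, tsum_nonneg fun _ ↦ by positivity, fun N ↦ (sum_le_sum fun i _ ↦ ?_).trans
    (hsummable.sum_le_tsum (range N) fun _ _ ↦ by positivity)⟩
  push_cast
  exact log_sq_add_cube_div_sq_le hs (by linarith [i.cast_nonneg (α := ℝ)])

lemma exists_upperSum_one_add_lowerSum_one_le {s : ℝ} (hs : 0 ≤ s) {f g : ℝ → ℝ}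
    (hf : ∀ t, 1 ≤ t → f t ≤ (log t + s) ^ 3 / t) (hg : ∀ t, 1 ≤ t → g t ≤ (log t + s) ^ 3 / t) :
    ∃ C : ℝ, 0 ≤ C ∧ ∀ N : ℕ, upperSum N 1 f + lowerSum N 1 g ≤ C := by
  obtain ⟨C, hC, hsum⟩ := exists_sum_log_cube_div_le hs
  refine ⟨C + C, by positivity, fun N ↦ add_le_add ?_ ?_⟩
  · refine (upperSum_mono hf).trans ?_
    rw [upperSum_one]
    exact hsum N
  · refine (lowerSum_mono hg).trans ?_
    rw [lowerSum_one]
    exact hsum N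

lemma profile_primeLog_one_le {c t : ℝ} (hc : c ≤ 1) (ht : 1 ≤ t) :
    profile c (primeLog 1) t ≤ (log t + (logShift + primeLog 1 + 1)) ^ 3 / t := by
  have hM := one_le_primeLog 1
  have hlog := log_nonneg ht
  have hshift := six_le_logShift
  set v := log t + (logShift + primeLog 1 + 1) with hv
  have hu : shiftedLog t = v - primeLog 1 - 1 := by
    rw [hv, shiftedLog]
    ring
  have hcube : v ^ 2 ≤ v ^ 3 := pow_le_pow_right₀ (by linarith) (by norm_num)
  rw [profile, ← div_div]
  gcongr
  rw [div_le_iff₀ (by linarith), hu]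
  nlinarith

lemma exists_potential_le : ∃ C : ℝ, 1 ≤ C ∧ ∀ N n : ℕ, n ≠ 0 → potential N n ≤ C := by
  have hshift := six_le_logShift
  have hM := one_le_primeLog 1
  obtain ⟨C, hC, hbase⟩ := exists_upperSum_one_add_lowerSum_one_le
    (f := upperWeight 1) (g := lowerWeight 1) (show 0 ≤ logShift + primeLog 1 + 1 by linarith)
    (fun t ht ↦ by
      rw [upperWeight, Nat.cast_one, max_eq_left ht]
      exact profile_primeLog_one_le le_rfl ht)
    (fun t ht ↦ by
      rw [lowerWeight, Nat.cast_one, one_pow, max_eq_left ht]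
      exact profile_primeLog_one_le (by nlinarith) ht)
  set E := exp (growthRate * (1 + 2 * logGap))
  have hE : 0 < E := exp_pos _
  refine ⟨E * (C + 1) + 1, by nlinarith, fun N n hn ↦ ?_⟩
  have hgronwall := le_exp_mul_of_prime_step (F := fun n ↦ potential N n + 1) growthRate_nonneg
    le_rfl (fun n hn ↦ by linarith [potential_nonneg N hn])
    (fun p hp ↦ by simpa using potential_succ_le_of_prime hp N)
    (fun n hn hprime ↦ by linarith [potential_succ_le_of_not_prime N hn hprime]) hn
  have hbase' : potential N 1 ≤ C := hbase N
  nlinarith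

/-! ### The scales far beyond the cube of the level -/

/-- The cubed excess of `log t` over `3 * M`, divided by `M * t`. It detects the error scales `t`
far beyond the cube of the sieving level. -/
noncomputable def cubicTail (M t : ℝ) : ℝ := (max (log t - 3 * M) 0) ^ 3 / (M * t)

/-- The increment of `cubicTail` under sieving by a prime is at most a multiple of this function,
which the weights dominate. -/
noncomputable def quadraticTail (M t : ℝ) : ℝ := log t * max (log t - 2 * M) 0 / (M * t)

section Tail

variable {M M' p q t : ℝ}

lemma cubicTail_nonneg (hM : 0 ≤ M) (ht : 0 ≤ t) : 0 ≤ cubicTail M t :=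
  div_nonneg (pow_nonneg (le_max_right _ _) 3) (mul_nonneg hM ht)

lemma cubicTail_of_log_le (h : log t ≤ 3 * M) : cubicTail M t = 0 := by
  rw [cubicTail, max_eq_right (by linarith)]
  simp

lemma cubicTail_le_div_mul (hM : 0 < M) (hMM' : M ≤ M') (ht : 0 < t) :
    cubicTail M' t ≤ M / M' * cubicTail M t := by
  have hM' : 0 < M' := hM.trans_le hMM'
  have hrhs : M / M' * cubicTail M t = (max (log t - 3 * M) 0) ^ 3 / (M' * t) := by
    rw [cubicTail]
    field_simp
  rw [hrhs, cubicTail]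
  gcongr

lemma cubicTail_max_le (hM : 0 ≤ M) (ht : 0 ≤ t) (hq : log q ≤ 3 * M) :
    cubicTail M (max t q) ≤ cubicTail M t := by
  rcases le_total q t with h | h
  · rw [max_eq_left h]
  · rw [max_eq_right h, cubicTail_of_log_le hq]
    exact cubicTail_nonneg hM ht

lemma cube_le_cube_add {a m y : ℝ} (hM : 0 ≤ M) (ha : 0 ≤ a) (hay : a ≤ y) (hm : 0 ≤ m)
    (ham : a - M ≤ m) : a ^ 3 ≤ m ^ 3 + 3 * M * (y * a) := by
  have hsq : M * a ^ 2 ≤ M * (y * a) := by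
    rw [sq]
    gcongr
  rcases le_total M a with hMa | hMa
  · have hcube : (a - M) ^ 3 ≤ m ^ 3 := pow_le_pow_left₀ (sub_nonneg.2 hMa) ham 3
    nlinarith [mul_nonneg (sq_nonneg M) (sub_nonneg.2 hMa), pow_nonneg hM 3]
  · nlinarith [mul_nonneg (sub_nonneg.2 hMa) (sq_nonneg a), mul_nonneg hM (sq_nonneg a),
      pow_nonneg hm 3]

lemma cubicTail_mul_le (hM : 0 < M) (hMM' : M ≤ M') (hp : 0 < p) (hpM : log p ≤ M) (ht : 1 ≤ t) :
    cubicTail M' (p * t) ≤ M / (p * M') * cubicTail M t + 3 * M / p * quadraticTail M t := by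
  have ht0 : 0 < t := by linarith
  have hM' : 0 < M' := hM.trans_le hMM'
  have hy : 0 ≤ log t := log_nonneg ht
  set a := max (log t - 2 * M) 0
  set m := max (log t - 3 * M) 0
  have ha : 0 ≤ a := le_max_right _ _
  have hcube : a ^ 3 ≤ m ^ 3 + 3 * M * (log t * a) :=
    cube_le_cube_add hM.le ha (max_le (by linarith) hy) (le_max_right _ _)
      (sub_le_iff_le_add.2 (max_le (by linarith [le_max_left (log t - 3 * M) 0]) (by positivity)))
  have htail : cubicTail M t = m ^ 3 / (M * t) := rfl
  calc cubicTail M' (p * t) ≤ a ^ 3 / (M' * (p * t)) := by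
        rw [cubicTail, log_mul hp.ne' ht0.ne']
        gcongr ?_ ^ 3 / _
        exact max_le_max (by linarith) le_rfl
    _ ≤ (m ^ 3 + 3 * M * (log t * a)) / (M' * (p * t)) := by gcongr
    _ = M / (p * M') * cubicTail M t + 3 * M / p * (log t * a / (M' * t)) := by
        rw [htail]
        field_simp
    _ ≤ M / (p * M') * cubicTail M t + 3 * M / p * quadraticTail M t := by
        unfold quadraticTail
        gcongr

lemma cubicTail_add_cubicTail_le {B : ℝ} (hM : 0 < M) (hp : 1 ≤ p) (hpM : log p ≤ M)
    (hMB : M ≤ log p + B) (hM' : M' = M + log p / p) (ht : 1 ≤ t) (hq : log q ≤ 3 * M) :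
    cubicTail M' t + cubicTail M' (max (p * t) q) ≤
      (1 + B / (p * M')) * cubicTail M t + 3 * M / p * quadraticTail M t := by
  have hlog : 0 ≤ log p := log_nonneg hp
  have hp0 : 0 < p := by linarith
  have hMM' : M ≤ M' := by
    rw [hM']
    exact le_add_of_nonneg_right (by positivity)
  have hM'0 : 0 < M' := hM.trans_le hMM'
  have hstay := cubicTail_le_div_mul hM hMM' (show 0 < t by linarith)
  have hmax := cubicTail_max_le hM'0.le (show 0 ≤ p * t by positivity)
    (show log q ≤ 3 * M' by linarith)
  have hmove := cubicTail_mul_le hM hMM' hp0 hpM ht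
  have hcoeff : M / M' + M / (p * M') ≤ 1 + B / (p * M') := by
    have hMM'_eq : M / M' = 1 - log p / (p * M') := by
      rw [eq_sub_iff_add_eq, div_add_div _ _ hM'0.ne' (by positivity), hM']
      field_simp
    have : M / (p * M') ≤ (log p + B) / (p * M') := by gcongr
    rw [hMM'_eq]
    linarith [add_div (log p) B (p * M')]
  linarith [mul_le_mul_of_nonneg_right hcoeff (cubicTail_nonneg hM.le (show 0 ≤ t by linarith))]

end Tail

section QuadraticTail

variable {n : ℕ} {t : ℝ}

lemma sq_lt_of_two_mul_primeLog_lt (hn : n ≠ 0) (ht : 0 < t) (h : 2 * primeLog n < log t) :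
    (n : ℝ) ^ 2 < t := by
  rw [← log_lt_log_iff (by positivity) ht, log_pow]
  push_cast
  linarith [log_le_primeLog hn]

lemma quadraticTail_of_le {M : ℝ} (h : log t ≤ 2 * M) : quadraticTail M t = 0 := by
  rw [quadraticTail, max_eq_right (by linarith)]
  simp

lemma quadraticTail_le_profile {c M : ℝ} (hM : 0 < M) (hc : 1 - M ^ 2 ≤ c) (ht : 0 < t)
    (h : 2 * M ≤ log t) : quadraticTail M t ≤ profile c M t := by
  have := six_le_logShift
  rw [quadraticTail, profile, max_eq_left (by linarith)]
  gcongr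
  unfold shiftedLog
  nlinarith

lemma quadraticTail_le_upperWeight (hn : n ≠ 0) (ht : 1 ≤ t) :
    quadraticTail (primeLog n) t ≤ upperWeight n t := by
  rcases le_or_gt (log t) (2 * primeLog n) with h | h
  · rw [quadraticTail_of_le h]
    exact upperWeight_nonneg n ht
  · have hn1 : (1 : ℝ) ≤ n := mod_cast Nat.one_le_iff_ne_zero.2 hn
    have hnt := sq_lt_of_two_mul_primeLog_lt hn (by linarith) h
    rw [upperWeight, max_eq_left (by nlinarith)]
    exact quadraticTail_le_profile (primeLog_pos n) (by nlinarith) (by linarith) h.le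

lemma quadraticTail_le_lowerWeight (hn : n ≠ 0) (ht : 1 ≤ t) :
    quadraticTail (primeLog n) t ≤ lowerWeight n t := by
  rcases le_or_gt (log t) (2 * primeLog n) with h | h
  · rw [quadraticTail_of_le h]
    exact lowerWeight_nonneg hn t
  · rw [lowerWeight, max_eq_left (sq_lt_of_two_mul_primeLog_lt hn (by linarith) h).le]
    exact quadraticTail_le_profile (primeLog_pos n) le_rfl (by linarith) h.le

end QuadraticTail

/-- The total cubic tail of the error scales. -/
noncomputable def cubicPotential (N n : ℕ) : ℝ :=
  upperSum N n (cubicTail (primeLog n)) + lowerSum N n (cubicTail (primeLog n))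

lemma cubicPotential_nonneg (N n : ℕ) : 0 ≤ cubicPotential N n :=
  add_nonneg
    (upperSum_nonneg fun _ ht ↦ cubicTail_nonneg (primeLog_pos n).le (by linarith))
    (lowerSum_nonneg fun _ ht ↦ cubicTail_nonneg (primeLog_pos n).le (by linarith))

lemma cubicPotential_succ_of_not_prime (N : ℕ) {n : ℕ} (hn : ¬ n.Prime) :
    cubicPotential N (n + 1) = cubicPotential N n := by
  unfold cubicPotential
  rw [upperSum_succ_of_not_prime hn, lowerSum_succ_of_not_prime hn, primeLog_succ_of_not_prime hn]

lemma cubicPotential_succ_le_of_prime (N : ℕ) {p : ℕ} (hp : p.Prime) :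
    cubicPotential N (p + 1) ≤ (1 + logGap / (p * primeLog (p + 1))) * cubicPotential N p +
      3 * primeLog p / p * potential N p := by
  have hM := primeLog_pos p
  have hlog := log_le_primeLog hp.ne_zero
  have hp1 : (1 : ℝ) ≤ p := mod_cast hp.one_lt.le
  have hstep {q t : ℝ} (ht : 1 ≤ t) (hq : log q ≤ 3 * primeLog p) :
      cubicTail (primeLog (p + 1)) t + cubicTail (primeLog (p + 1)) (max (p * t) q) ≤
        (1 + logGap / (p * primeLog (p + 1))) * cubicTail (primeLog p) t +
          3 * primeLog p / p * quadraticTail (primeLog p) t :=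
    cubicTail_add_cubicTail_le hM hp1 hlog (primeLog_le hp.ne_zero) (primeLog_succ_of_prime hp)
      ht hq
  have hupper : upperSum N p (cubicTail (primeLog (p + 1))) +
      upperSum N p (fun t ↦ cubicTail (primeLog (p + 1)) (max (p * t) (p ^ 2))) ≤
      (1 + logGap / (p * primeLog (p + 1))) * upperSum N p (cubicTail (primeLog p)) +
        3 * primeLog p / p * upperSum N p (upperWeight p) := by
    simp only [← upperSum_add, ← upperSum_const_mul]
    refine upperSum_mono fun t ht ↦ (hstep ht (by rw [log_pow]; push_cast; linarith)).trans ?_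
    gcongr
    exact quadraticTail_le_upperWeight hp.ne_zero ht
  have hlower : lowerSum N p (cubicTail (primeLog (p + 1))) +
      lowerSum N p (fun t ↦ cubicTail (primeLog (p + 1)) (max (p * t) (p ^ 3))) ≤
      (1 + logGap / (p * primeLog (p + 1))) * lowerSum N p (cubicTail (primeLog p)) +
        3 * primeLog p / p * lowerSum N p (lowerWeight p) := by
    simp only [← lowerSum_add, ← lowerSum_const_mul]
    refine lowerSum_mono fun t ht ↦ (hstep ht (by rw [log_pow]; push_cast; linarith)).trans ?_
    gcongr
    exact quadraticTail_le_lowerWeight hp.ne_zero ht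
  have hnew : cubicTail (primeLog (p + 1)) p = 0 :=
    cubicTail_of_log_le (by linarith [primeLog_le_primeLog_succ hp])
  unfold cubicPotential potential
  rw [upperSum_succ_of_prime hp, lowerSum_succ_of_prime hp, hnew]
  linarith

lemma primeLog_le_mul_log {n : ℕ} (hn : 2 ≤ n) : primeLog n ≤ (1 + 2 * logGap) * log n := by
  nlinarith [primeLog_le (show n ≠ 0 by lia), half_le_log hn, one_le_logGap]

lemma cubicTail_primeLog_one_le {t : ℝ} (ht : 1 ≤ t) :
    cubicTail (primeLog 1) t ≤ (log t + 0) ^ 3 / t := by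
  have hM := one_le_primeLog 1
  have hlog := log_nonneg ht
  unfold cubicTail
  gcongr ?_ ^ 3 / ?_
  · exact max_le (by linarith) (by linarith)
  · exact le_mul_of_one_le_left (by linarith) hM

lemma exists_cubicPotential_le :
    ∃ C : ℝ, 1 ≤ C ∧ ∀ N n : ℕ, n ≠ 0 → cubicPotential N n ≤ C * primeLog n := by
  obtain ⟨C₁, hC₁, hpotential⟩ := exists_potential_le
  obtain ⟨C₂, hC₂, hbase⟩ := exists_upperSum_one_add_lowerSum_one_le le_rfl
    (fun t ↦ cubicTail_primeLog_one_le (t := t)) (fun t ↦ cubicTail_primeLog_one_le (t := t))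
  have hgap := one_le_logGap
  set D := 3 * (1 + 2 * logGap) * C₁
  have hD : 0 ≤ D := by positivity
  have hstep (N p : ℕ) (hp : p.Prime) : cubicPotential N (p + 1) ≤
      (1 + logGap / (p * primeLog (p + 1))) * cubicPotential N p +
        D * (primeLog (p + 1) - primeLog p) := by
    refine (cubicPotential_succ_le_of_prime N hp).trans (add_le_add le_rfl ?_)
    calc 3 * primeLog p / p * potential N p
        ≤ 3 * ((1 + 2 * logGap) * log p) / p * C₁ := by
          have hM := primeLog_le_mul_log hp.two_le
          have hpot := hpotential N p hp.ne_zero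
          gcongr
          exact potential_nonneg N hp.ne_zero
      _ = D * (primeLog (p + 1) - primeLog p) := by
          rw [primeLog_succ_of_prime hp]
          ring
  set E := exp (logGap * (1 + 2 * logGap))
  have hE : 0 < E := exp_pos _
  refine ⟨E * (C₂ + D) + 1, by nlinarith, fun N n hn ↦ ?_⟩
  have hM := one_le_primeLog n
  calc cubicPotential N n ≤ E * (cubicPotential N 1 + D * primeLog n) :=
        le_exp_mul_of_prime_step (by linarith) hD (fun n _ ↦ cubicPotential_nonneg N n)
          (hstep N) (fun n _ hprime ↦ (cubicPotential_succ_of_not_prime N hprime).le) hn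
    _ ≤ E * (C₂ * primeLog n + D * primeLog n) := by
        have hle : cubicPotential N 1 ≤ C₂ * primeLog n :=
          (hbase N).trans (le_mul_of_one_le_right hC₂ hM)
        gcongr
    _ ≤ (E * (C₂ + D) + 1) * primeLog n := by linarith

/-! ### Error sums at low levels -/

section Sums

variable {N n : ℕ}

lemma upperSum_upperWeight_le_potential (hn : n ≠ 0) :
    upperSum N n (upperWeight n) ≤ potential N n :=
  le_add_of_nonneg_right (lowerSum_nonneg fun t _ ↦ lowerWeight_nonneg hn t)

lemma lowerSum_lowerWeight_le_potential : lowerSum N n (lowerWeight n) ≤ potential N n :=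
  le_add_of_nonneg_left (upperSum_nonneg fun _ ht ↦ upperWeight_nonneg n ht)

lemma upperSum_cubicTail_le_cubicPotential :
    upperSum N n (cubicTail (primeLog n)) ≤ cubicPotential N n :=
  le_add_of_nonneg_right
    (lowerSum_nonneg fun _ ht ↦ cubicTail_nonneg (primeLog_pos n).le (by linarith))

lemma lowerSum_cubicTail_le_cubicPotential :
    lowerSum N n (cubicTail (primeLog n)) ≤ cubicPotential N n :=
  le_add_of_nonneg_left
    (upperSum_nonneg fun _ ht ↦ cubicTail_nonneg (primeLog_pos n).le (by linarith))

end Sums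

section Pointwise

variable {n : ℕ} {t τ : ℝ}

lemma one_div_le_upperWeight_div (hn : n ≠ 0) (htτ : t ≤ τ) (hnτ : (n : ℝ) ^ 2 ≤ τ) :
    1 / τ ≤ upperWeight n t / primeLog n := by
  have hn1 : (1 : ℝ) ≤ n := mod_cast Nat.one_le_iff_ne_zero.2 hn
  have hτ : 0 < τ := by nlinarith
  have hM := primeLog_pos n
  have hu := two_mul_primeLog_add_le_shiftedLog hn hnτ
  calc 1 / τ = primeLog n / τ / primeLog n := by field_simp
    _ ≤ profile 1 (primeLog n) τ / primeLog n := by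
        rw [profile, ← div_div]
        gcongr
        rw [le_div_iff₀ hM]
        nlinarith
    _ ≤ upperWeight n t / primeLog n := by
        gcongr
        exact profile_one_le_upperWeight hn (max_le htτ (by nlinarith))

lemma one_div_le_primeLog_mul_upperWeight (hn : n ≠ 0) (htτ : max t n ≤ τ) :
    1 / τ ≤ primeLog n * upperWeight n t := by
  have : 0 < max t n := lt_max_of_lt_right (by positivity)
  have hM := primeLog_pos n
  calc 1 / τ ≤ ((shiftedLog (max t n) - primeLog n) ^ 2 + 1) / max t n := by
        gcongr
        exact le_add_of_nonneg_left (sq_nonneg _)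
    _ = primeLog n * upperWeight n t := by
        unfold upperWeight profile
        field_simp

lemma one_div_le_mul_cubicTail {M x : ℝ} (hM : 0 < M) (hMx : 9 * M ≤ x) (ht : 0 < t)
    (h : x / 2 ≤ log t) : 1 / t ≤ 216 * M / x ^ 3 * cubicTail M t := by
  have hx : 0 < x := by linarith
  calc 1 / t = 216 * M / x ^ 3 * ((x / 6) ^ 3 / (M * t)) := by
        field_simp
        norm_num
    _ ≤ 216 * M / x ^ 3 * cubicTail M t := by
        unfold cubicTail
        gcongr
        exact le_max_of_le_left (by linarith)

lemma cube_le_exp_div_ten {x : ℝ} (hx : 0 ≤ x) : x ^ 3 ≤ 6000 * exp (x / 10) := by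
  have h := pow_div_factorial_le_exp (x / 10) (by positivity) 3
  rw [div_pow, Nat.factorial] at h
  norm_num [Nat.factorial] at h
  linarith

lemma log_le_log_div_ten (hn : n ≠ 0) {X : ℝ} (hnX : (n : ℝ) ^ 10 ≤ X) : log n ≤ log X / 10 := by
  have h := log_le_log (by positivity) hnX
  rw [log_pow] at h
  push_cast at h
  linarith

lemma mul_log_cube_le (hn : n ≠ 0) {X : ℝ} (hnX : (n : ℝ) ^ 10 ≤ X) :
    n * log X ^ 3 ≤ 6000 * √X := by
  have hn0 : (0 : ℝ) < n := by positivity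
  have hn1 : (1 : ℝ) ≤ n := mod_cast Nat.one_le_iff_ne_zero.2 hn
  have hX1 : 1 ≤ X := (one_le_pow₀ hn1).trans hnX
  have hlog := log_nonneg hX1
  calc n * log X ^ 3 = exp (log n) * log X ^ 3 := by rw [exp_log hn0]
    _ ≤ exp (log X / 10) * (6000 * exp (log X / 10)) := by
        gcongr
        · exact log_le_log_div_ten hn hnX
        · exact cube_le_exp_div_ten hlog
    _ = 6000 * exp (log X / 10 + log X / 10) := by
        rw [exp_add]
        ring
    _ ≤ 6000 * exp (log X / 2) := by
        gcongr
        linarith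
    _ = 6000 * √X := by rw [exp_half, exp_log (by linarith)]

lemma one_div_max_le {M W X : ℝ} (hn : n ≠ 0) (hM : 0 < M) (hMX : 9 * M ≤ log X)
    (hnX : (n : ℝ) ^ 10 ≤ X) (ht : 1 ≤ t) (hW : 0 ≤ W) (hW_of_le : t ≤ √X → 1 / √X ≤ W) :
    1 / max t (X / n) ≤ 216 * M / log X ^ 3 * cubicTail M t + 6000 / log X ^ 3 * W := by
  have hX : 0 < X := lt_of_lt_of_le (by positivity) hnX
  have hlog : 0 < log X := by linarith
  have ht0 : 0 < t := by linarith
  have htail := cubicTail_nonneg hM.le ht0.le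
  rcases le_or_gt t (√X) with h | h
  · calc 1 / max t (X / n) ≤ 1 / (X / n) := by
          gcongr
          exact le_max_right _ _
      _ ≤ 6000 / log X ^ 3 * (1 / √X) := by
          rw [one_div_div, div_mul_div_comm, div_le_div_iff₀ hX (by positivity)]
          nlinarith [mul_le_mul_of_nonneg_right (mul_log_cube_le hn hnX) (sqrt_nonneg X),
            mul_self_sqrt hX.le]
      _ ≤ 6000 / log X ^ 3 * W := by
          gcongr
          exact hW_of_le h
      _ ≤ _ := le_add_of_nonneg_left (by positivity)
  · have hlog_t : log X / 2 ≤ log t := by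
      rw [← log_sqrt hX.le]
      exact log_le_log (sqrt_pos.2 hX) h.le
    calc 1 / max t (X / n) ≤ 1 / t := by
          gcongr
          exact le_max_left _ _
      _ ≤ 216 * M / log X ^ 3 * cubicTail M t := one_div_le_mul_cubicTail hM hMX ht0 hlog_t
      _ ≤ _ := le_add_of_nonneg_right (by positivity)

lemma cutoff_le_mul_one_div_max {X : ℝ} (hn : n ≠ 0) (hX : 0 < X) (t : ℝ) :
    cutoff X t ≤ X * (1 / max t (X / n)) := by
  have hn1 : (1 : ℝ) ≤ n := mod_cast Nat.one_le_iff_ne_zero.2 hn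
  have hmax : 0 < max t (X / n) := lt_max_of_lt_right (by positivity)
  unfold cutoff
  split_ifs with h
  · rw [mul_one_div, one_le_div hmax]
    exact max_le h (div_le_self hX.le hn1)
  · positivity

lemma nine_mul_primeLog_le (hn : n ≠ 0) {X : ℝ} (hlog : 90 * logGap ≤ log X)
    (hnX : (n : ℝ) ^ 10 ≤ X) : 9 * primeLog n ≤ log X := by
  linarith [primeLog_le hn, log_le_log_div_ten hn hnX]

lemma sq_le_sqrt_of_pow_ten_le (hn : n ≠ 0) {X : ℝ} (hnX : (n : ℝ) ^ 10 ≤ X) :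
    (n : ℝ) ^ 2 ≤ √X := by
  have hn1 : (1 : ℝ) ≤ n := mod_cast Nat.one_le_iff_ne_zero.2 hn
  refine le_sqrt_of_sq_le ?_
  rw [← pow_mul]
  exact (pow_le_pow_right₀ hn1 (by norm_num)).trans hnX

end Pointwise

lemma exists_upperSum_one_div_max_le_div : ∃ C : ℝ, 1 ≤ C ∧ ∀ (N n : ℕ) (Y : ℝ), n ≠ 0 →
    (n : ℝ) ^ 2 ≤ Y → upperSum N n (fun t ↦ 1 / max t Y) ≤ C / primeLog n := by
  obtain ⟨C, hC, hpotential⟩ := exists_potential_le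
  refine ⟨C, hC, fun N n Y hn hY ↦ ?_⟩
  have hM := primeLog_pos n
  calc upperSum N n (fun t ↦ 1 / max t Y)
      ≤ upperSum N n (fun t ↦ (primeLog n)⁻¹ * upperWeight n t) :=
        upperSum_mono fun t _ ↦ by
          rw [← div_eq_inv_mul]
          exact one_div_le_upperWeight_div hn (le_max_left _ _) (hY.trans (le_max_right _ _))
    _ ≤ C / primeLog n := by
        rw [upperSum_const_mul, ← div_eq_inv_mul]
        gcongr
        exact (upperSum_upperWeight_le_potential hn).trans (hpotential N n hn)

section PowTen

variable {n : ℕ} {X : ℝ}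

lemma upperSum_one_div_max_le_of_pow_le (N : ℕ) (hn : n ≠ 0) (hlog : 90 * logGap ≤ log X)
    (hnX : (n : ℝ) ^ 10 ≤ X) : upperSum N n (fun t ↦ 1 / max t (X / n)) ≤
      216 * primeLog n / log X ^ 3 * cubicPotential N n +
        6000 / log X ^ 3 * (primeLog n * potential N n) := by
  have hM := primeLog_pos n
  have hMX := nine_mul_primeLog_le hn hlog hnX
  have hlog0 : 0 < log X := by linarith
  have hn1 : (1 : ℝ) ≤ n := mod_cast Nat.one_le_iff_ne_zero.2 hn
  have hn_sqrt : (n : ℝ) ≤ √X := by nlinarith [sq_le_sqrt_of_pow_ten_le hn hnX]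
  have hsum : upperSum N n (fun t ↦ 1 / max t (X / n)) ≤
      upperSum N n fun t ↦ 216 * primeLog n / log X ^ 3 * cubicTail (primeLog n) t +
        6000 / log X ^ 3 * (primeLog n * upperWeight n t) :=
    upperSum_mono fun t ht ↦ one_div_max_le hn hM hMX hnX ht
      (mul_nonneg hM.le (upperWeight_nonneg n ht))
      fun h ↦ one_div_le_primeLog_mul_upperWeight hn (max_le h hn_sqrt)
  rw [upperSum_add, upperSum_const_mul, upperSum_const_mul, upperSum_const_mul] at hsum
  refine hsum.trans ?_
  gcongr
  · exact upperSum_cubicTail_le_cubicPotential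
  · exact upperSum_upperWeight_le_potential hn

lemma lowerSum_cutoff_le_of_pow_le (N : ℕ) (hn : n ≠ 0) (hlog : 90 * logGap ≤ log X)
    (hnX : (n : ℝ) ^ 10 ≤ X) : lowerSum N n (cutoff X) ≤
      X * (216 * primeLog n / log X ^ 3 * cubicPotential N n +
        6000 / log X ^ 3 * potential N n) := by
  have hX : 0 < X := lt_of_lt_of_le (by positivity) hnX
  have hM := primeLog_pos n
  have hMX := nine_mul_primeLog_le hn hlog hnX
  have hlog0 : 0 < log X := by linarith
  have hsum : lowerSum N n (cutoff X) ≤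
      lowerSum N n fun t ↦ X * (216 * primeLog n / log X ^ 3 * cubicTail (primeLog n) t +
        6000 / log X ^ 3 * lowerWeight n t) :=
    lowerSum_mono fun t ht ↦ (cutoff_le_mul_one_div_max hn hX t).trans <| by
      gcongr
      exact one_div_max_le hn hM hMX hnX ht (lowerWeight_nonneg hn t)
        fun h ↦ one_div_le_lowerWeight hn (max_le h (sq_le_sqrt_of_pow_ten_le hn hnX))
  rw [lowerSum_const_mul, lowerSum_add, lowerSum_const_mul, lowerSum_const_mul] at hsum
  refine hsum.trans ?_
  gcongr
  · exact lowerSum_cubicTail_le_cubicPotential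
  · exact lowerSum_lowerWeight_le_potential

end PowTen

lemma exists_upperSum_one_div_max_le : ∃ C : ℝ, 1 ≤ C ∧ ∀ (N n : ℕ) (X : ℝ), n ≠ 0 →
    90 * logGap ≤ log X → (n : ℝ) ^ 3 ≤ X →
    upperSum N n (fun t ↦ 1 / max t (X / n)) ≤ C * primeLog n ^ 2 / log X ^ 3 := by
  obtain ⟨C₀, hC₀, hdiv⟩ := exists_upperSum_one_div_max_le_div
  obtain ⟨C₁, hC₁, hpotential⟩ := exists_potential_le
  obtain ⟨C₂, hC₂, hcubic⟩ := exists_cubicPotential_le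
  refine ⟨1000 * C₀ + 216 * C₂ + 6000 * C₁, by linarith, fun N n X hn hlog hnX ↦ ?_⟩
  have hn0 : (0 : ℝ) < n := by positivity
  have hM := one_le_primeLog n
  have hlog0 : 0 < log X := by linarith [one_le_logGap]
  rcases le_or_gt ((n : ℝ) ^ 10) X with h10 | h10
  · calc upperSum N n (fun t ↦ 1 / max t (X / n))
        ≤ 216 * primeLog n / log X ^ 3 * (C₂ * primeLog n) +
          6000 / log X ^ 3 * (primeLog n * C₁) := by
          refine (upperSum_one_div_max_le_of_pow_le N hn hlog h10).trans ?_
          gcongr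
          · exact hcubic N n hn
          · exact hpotential N n hn
      _ = (216 * C₂ * primeLog n ^ 2 + 6000 * C₁ * primeLog n) / log X ^ 3 := by ring
      _ ≤ (1000 * C₀ + 216 * C₂ + 6000 * C₁) * primeLog n ^ 2 / log X ^ 3 := by
          gcongr
          nlinarith [mul_nonneg (by linarith : 0 ≤ C₁) (by nlinarith : 0 ≤ primeLog n ^ 2 -
            primeLog n), mul_nonneg (by linarith : 0 ≤ C₀) (sq_nonneg (primeLog n))]
  · have hlog_le : log X ≤ 10 * primeLog n := by
      have h := log_le_log (lt_of_lt_of_le (by positivity) hnX) h10.le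
      rw [log_pow] at h
      push_cast at h
      linarith [log_le_primeLog hn]
    calc upperSum N n (fun t ↦ 1 / max t (X / n)) ≤ C₀ / primeLog n :=
          hdiv N n (X / n) hn (by rw [le_div_iff₀ hn0, ← pow_succ]; exact hnX)
      _ = 1000 * C₀ * primeLog n ^ 2 / (10 * primeLog n) ^ 3 := by
          field_simp
          norm_num
      _ ≤ (1000 * C₀ + 216 * C₂ + 6000 * C₁) * primeLog n ^ 2 / log X ^ 3 := by
          gcongr
          linarith

lemma exists_lowerSum_cutoff_le_of_pow_le : ∃ C : ℝ, 1 ≤ C ∧ ∀ (N n : ℕ) (X : ℝ), n ≠ 0 →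
    90 * logGap ≤ log X → (n : ℝ) ^ 10 ≤ X →
    lowerSum N n (cutoff X) ≤ C * primeLog n ^ 2 * (X / log X ^ 3) := by
  obtain ⟨C₁, hC₁, hpotential⟩ := exists_potential_le
  obtain ⟨C₂, hC₂, hcubic⟩ := exists_cubicPotential_le
  refine ⟨216 * C₂ + 6000 * C₁, by linarith, fun N n X hn hlog hnX ↦ ?_⟩
  have hX : 0 < X := lt_of_lt_of_le (by positivity) hnX
  have hM := one_le_primeLog n
  have hlog0 : 0 < log X := by linarith [one_le_logGap]
  calc lowerSum N n (cutoff X)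
      ≤ X * (216 * primeLog n / log X ^ 3 * (C₂ * primeLog n) + 6000 / log X ^ 3 * C₁) := by
        refine (lowerSum_cutoff_le_of_pow_le N hn hlog hnX).trans ?_
        gcongr
        · exact hcubic N n hn
        · exact hpotential N n hn
    _ = (216 * C₂ * primeLog n ^ 2 + 6000 * C₁ * 1) * (X / log X ^ 3) := by ring
    _ ≤ (216 * C₂ * primeLog n ^ 2 + 6000 * C₁ * primeLog n ^ 2) * (X / log X ^ 3) := by
        gcongr
        exact one_le_pow₀ hM
    _ = (216 * C₂ + 6000 * C₁) * primeLog n ^ 2 * (X / log X ^ 3) := by ring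

lemma upperSum_le_upperSum_of_le {N m n : ℕ} (hmn : m ≤ n) {g : ℝ → ℝ} (hg : ∀ t, 0 ≤ g t) :
    upperSum N m g ≤ upperSum N n g := by
  induction n, hmn using Nat.le_induction with
  | base => exact le_rfl
  | succ p _ ih =>
    refine ih.trans ?_
    by_cases hp : p.Prime
    · rw [upperSum_succ_of_prime hp, add_assoc]
      exact le_add_of_nonneg_right (add_nonneg (lowerSum_nonneg fun _ _ ↦ hg _) (hg _))
    · rw [upperSum_succ_of_not_prime hp]

/-- The number of primes `q ∈ [m, n)` for which the error scale `t` of the upper sieve gives rise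
to an error scale of the lower sieve not exceeding `X`. -/
noncomputable def spawnCount (m n : ℕ) (X t : ℝ) : ℝ :=
  #{q ∈ n.primesBelow | m ≤ q ∧ t ≤ X / q}

lemma spawnCount_nonneg (m n : ℕ) (X t : ℝ) : 0 ≤ spawnCount m n X t := Nat.cast_nonneg _

lemma spawnCount_succ_of_prime {m p : ℕ} (hp : p.Prime) (hmp : m ≤ p) (X t : ℝ) :
    spawnCount m (p + 1) X t = spawnCount m p X t + cutoff (X / p) t := by
  unfold spawnCount cutoff
  rw [Nat.primesBelow_succ, if_pos hp, filter_insert]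
  split_ifs with h ht ht
  · rw [card_insert_of_notMem (by simp [Nat.notMem_primesBelow])]
    push_cast
    ring
  · exact absurd h.2 ht
  · exact absurd ⟨hmp, ht⟩ h
  · rw [add_zero]

lemma spawnCount_succ_of_not_prime {m p : ℕ} (hp : ¬ p.Prime) :
    spawnCount m (p + 1) = spawnCount m p := by
  unfold spawnCount
  rw [Nat.primesBelow_succ, if_neg hp]

lemma lowerSum_cutoff_succ_of_prime {N p : ℕ} (hp : p.Prime) {X : ℝ} (h : (p : ℝ) ^ 2 ≤ X) :
    lowerSum N (p + 1) (cutoff X) = lowerSum N p (cutoff X) + upperSum N p (cutoff (X / p)) := by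
  rw [lowerSum_succ_of_prime hp]
  simp_rw [cutoff_max_mul (show (0 : ℝ) < p from mod_cast hp.pos) h]

lemma lowerSum_cutoff_le_add_upperSum_spawnCount {N k m n : ℕ} {X E : ℝ} (hE : 0 ≤ E)
    (hmn : m ≤ n) (hX : (n : ℝ) ^ 2 ≤ X)
    (hspawn : ∀ q : ℕ, m ≤ q → q < n →
      upperSum N q (cutoff (X / q)) ≤ upperSum N k (cutoff (X / q)) + E) :
    lowerSum N n (cutoff X) ≤
      lowerSum N m (cutoff X) + upperSum N k (spawnCount m n X) + E * #n.primesBelow := by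
  induction n, hmn using Nat.le_induction with
  | base =>
    have := upperSum_nonneg (N := N) (n := k) fun t _ ↦ spawnCount_nonneg m m X t
    linarith [show 0 ≤ E * (#m.primesBelow : ℝ) by positivity]
  | succ p hmp ih =>
    have hpX : (p : ℝ) ^ 2 ≤ X := le_trans (by gcongr; simp) hX
    specialize ih hpX fun q hmq hqp ↦ hspawn q hmq (by lia)
    by_cases hp : p.Prime
    · have hcount : upperSum N k (spawnCount m (p + 1) X) =
          upperSum N k (spawnCount m p X) + upperSum N k (cutoff (X / p)) := by
        rw [← upperSum_add]
        simp_rw [← spawnCount_succ_of_prime hp hmp]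
      rw [lowerSum_cutoff_succ_of_prime hp hpX, hcount, Nat.primesBelow_succ, if_pos hp,
        card_insert_of_notMem (Nat.notMem_primesBelow p)]
      push_cast
      linarith [hspawn p hmp (by lia)]
    · rw [lowerSum_succ_of_not_prime hp, spawnCount_succ_of_not_prime hp, Nat.primesBelow_succ,
        if_neg hp]
      exact ih

lemma natCast_le_div_max {n r : ℕ} {X t : ℝ} (hX : 0 ≤ X) (ht : 0 < t) (hr : r ≠ 0) (hrn : r ≤ n)
    (hrt : t ≤ X / r) : r ≤ X / max t (X / n) := by
  have hr0 : (0 : ℝ) < r := by positivity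
  rw [le_div_comm₀ hr0 (lt_max_of_lt_left ht)]
  exact max_le hrt (by gcongr)

lemma spawnCount_le {m n : ℕ} (hm : 2 ≤ m) (hmn : m ≤ n) (hnm : n ≤ m ^ 2) {X t : ℝ} (hX : 0 < X)
    (ht : 0 < t) : spawnCount m n X t ≤ 12 * X / log n * (1 / max t (X / n)) := by
  have hn0 : (0 : ℝ) < n := mod_cast (show 0 < n by lia)
  have hlog : 0 < log n := log_pos (mod_cast (show 1 < n by lia))
  have : 0 < max t (X / n) := lt_max_of_lt_left ht
  set y := X / max t (X / n) with hy
  have hrhs : 12 * X / log n * (1 / max t (X / n)) = 12 * y / log n := by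
    rw [hy]
    ring
  rw [hrhs, spawnCount]
  rcases eq_empty_or_nonempty {q ∈ n.primesBelow | m ≤ q ∧ t ≤ X / q} with hempty | ⟨q, hq⟩
  · rw [hempty, card_empty, Nat.cast_zero]
    positivity
  simp only [mem_filter, Nat.mem_primesBelow] at hq
  have hmy : (m : ℝ) ≤ y :=
    le_trans (mod_cast hq.2.1) (natCast_le_div_max hX.le ht hq.1.2.ne_zero hq.1.1.le hq.2.2)
  have hy1 : 1 < y := lt_of_lt_of_le (mod_cast (show 1 < m by lia)) hmy
  have hlog_le : log n ≤ 2 * log y := by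
    have hny : (n : ℝ) ≤ y ^ 2 := le_trans (b := (m : ℝ) ^ 2) (mod_cast hnm)
      (pow_le_pow_left₀ m.cast_nonneg hmy 2)
    simpa using log_le_log hn0 hny
  have hsub : {q ∈ n.primesBelow | m ≤ q ∧ t ≤ X / q} ⊆ (⌊y⌋₊ + 1).primesBelow := by
    intro r hr
    simp only [mem_filter, Nat.mem_primesBelow] at hr ⊢
    exact ⟨Nat.lt_succ_of_le (Nat.le_floor
      (natCast_le_div_max hX.le ht hr.1.2.ne_zero hr.1.1.le hr.2.2)), hr.1.2⟩
  calc (#{q ∈ n.primesBelow | m ≤ q ∧ t ≤ X / q} : ℝ) ≤ #(⌊y⌋₊ + 1).primesBelow :=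
        mod_cast card_le_card hsub
    _ ≤ 6 * (y / log y) := card_primesBelow_le hy1 (by
        push_cast
        linarith [Nat.floor_le (show 0 ≤ y by linarith)])
    _ = 12 * y / (2 * log y) := by ring
    _ ≤ 12 * y / log n := by gcongr

lemma exists_lowerSum_cutoff_le_add : ∃ C : ℝ, 0 < C ∧ ∀ (N m n : ℕ) (X : ℝ), 2 ≤ m → m ≤ n →
    n ≤ m ^ 2 → 90 * logGap ≤ log X → (n : ℝ) ^ 3 ≤ X →
    lowerSum N n (cutoff X) ≤ lowerSum N m (cutoff X) + C * log n * (X / log X ^ 3) := by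
  obtain ⟨C, hC, hupper⟩ := exists_upperSum_one_div_max_le
  have hgap := one_le_logGap
  refine ⟨12 * C * (1 + 2 * logGap) ^ 2, by positivity, fun N m n X hm hmn hnm hlogX hnX ↦ ?_⟩
  have hn1 : (1 : ℝ) < n := mod_cast (show 1 < n by lia)
  have hX : 0 < X := lt_of_lt_of_le (by positivity) hnX
  have hlog : 0 < log n := log_pos hn1
  have hlogX0 : 0 < log X := by linarith
  have hM := primeLog_pos n
  have hspawn : upperSum N n (spawnCount m n X) ≤
      12 * C * (1 + 2 * logGap) ^ 2 * log n * (X / log X ^ 3) := by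
    calc upperSum N n (spawnCount m n X)
        ≤ upperSum N n (fun t ↦ 12 * X / log n * (1 / max t (X / n))) :=
          upperSum_mono fun t ht ↦ spawnCount_le hm hmn hnm hX (by linarith)
      _ ≤ 12 * X / log n * (C * primeLog n ^ 2 / log X ^ 3) := by
          rw [upperSum_const_mul]
          gcongr
          exact hupper N n X (by lia) hlogX hnX
      _ ≤ 12 * X / log n * (C * ((1 + 2 * logGap) * log n) ^ 2 / log X ^ 3) := by
          gcongr
          exact primeLog_le_mul_log (hm.trans hmn)
      _ = 12 * C * (1 + 2 * logGap) ^ 2 * log n * (X / log X ^ 3) := by field_simp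
  have haccum := lowerSum_cutoff_le_add_upperSum_spawnCount (N := N) (k := n) le_rfl hmn
    (le_trans (pow_le_pow_right₀ hn1.le (by norm_num)) hnX) fun q _ hqn ↦ by
      rw [add_zero]
      exact upperSum_le_upperSum_of_le hqn.le (cutoff_nonneg (X / q))
  linarith

lemma exists_le_sq_and_log_le {n : ℕ} (hn : 16 ≤ n) :
    ∃ m, 2 ≤ m ∧ m < n ∧ n ≤ m ^ 2 ∧ 4 * log m ≤ 3 * log n := by
  have hsq_le := Nat.sqrt_le' n
  have hfour : 4 ≤ n.sqrt := Nat.le_sqrt'.2 (by lia)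
  refine ⟨n.sqrt + 1, by lia, by nlinarith, (Nat.lt_succ_sqrt' n).le, ?_⟩
  have hpow : (n.sqrt + 1) ^ 4 ≤ n ^ 3 := by
    have hsq : (n.sqrt + 1) ^ 2 ≤ 4 * n := by nlinarith
    calc (n.sqrt + 1) ^ 4 = ((n.sqrt + 1) ^ 2) ^ 2 := by ring
      _ ≤ (4 * n) ^ 2 := by gcongr
      _ = 16 * n ^ 2 := by ring
      _ ≤ n * n ^ 2 := by gcongr
      _ = n ^ 3 := by ring
  have hlog : log (((n.sqrt + 1 : ℕ) : ℝ) ^ 4) ≤ log ((n : ℝ) ^ 3) :=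
    log_le_log (by positivity) (mod_cast hpow)
  simpa only [log_pow, Nat.cast_ofNat] using hlog

lemma exists_lowerSum_cutoff_le_log : ∃ C : ℝ, 1 ≤ C ∧ ∀ (N n : ℕ) (X : ℝ), n ≠ 0 →
    16 ^ 10 ≤ X → 90 * logGap ≤ log X → (n : ℝ) ^ 3 ≤ X →
    lowerSum N n (cutoff X) ≤ C * (1 + log n) * (X / log X ^ 3) := by
  obtain ⟨K, hK, hscale⟩ := exists_lowerSum_cutoff_le_add
  obtain ⟨B, hB, hsmall⟩ := exists_lowerSum_cutoff_le_of_pow_le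
  have hgap := one_le_logGap
  set b := B * (log 16 + logGap) ^ 2
  have hb : 0 ≤ b := by positivity
  refine ⟨4 * K + b + 1, by linarith, fun N n X hn hX hlogX ↦ ?_⟩
  have : 0 < X := lt_of_lt_of_le (by norm_num) hX
  have hlogX0 : 0 < log X := by linarith
  induction n using Nat.strong_induction_on with
  | _ n ih =>
    intro hnX
    have hlog := log_natCast_nonneg n
    rcases lt_or_ge n 16 with h16 | h16
    · have hn16 : (n : ℝ) ≤ 16 := mod_cast h16.le
      have hM : primeLog n ≤ log 16 + logGap := by
        linarith [primeLog_le hn, log_le_log (by positivity) hn16]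
      have hM0 := primeLog_pos n
      have hMb : B * primeLog n ^ 2 ≤ b :=
        mul_le_mul_of_nonneg_left (pow_le_pow_left₀ hM0.le hM 2) (by linarith)
      calc lowerSum N n (cutoff X) ≤ B * primeLog n ^ 2 * (X / log X ^ 3) :=
            hsmall N n X hn hlogX (le_trans (by gcongr) hX)
        _ ≤ b * (X / log X ^ 3) := by gcongr
        _ ≤ (4 * K + b + 1) * (1 + log n) * (X / log X ^ 3) := by
            gcongr
            nlinarith
    · obtain ⟨m, hm, hmn, hnm, hlog_le⟩ := exists_le_sq_and_log_le h16
      have hmX : (m : ℝ) ^ 3 ≤ X := le_trans (by gcongr) hnX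
      calc lowerSum N n (cutoff X)
          ≤ (4 * K + b + 1) * (1 + log m) * (X / log X ^ 3) + K * log n * (X / log X ^ 3) :=
            (hscale N m n X hm hmn.le hnm hlogX hnX).trans
              (add_le_add (ih m hmn (by lia) hmX) le_rfl)
        _ = ((4 * K + b + 1) * (1 + log m) + K * log n) * (X / log X ^ 3) := by ring
        _ ≤ (4 * K + b + 1) * (1 + log n) * (X / log X ^ 3) := by
            gcongr
            nlinarith

/-! ### The error sum of the lower sieve -/

lemma cutoff_le_one (X t : ℝ) : cutoff X t ≤ 1 := by
  unfold cutoff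
  split_ifs <;> norm_num

lemma upperSum_cutoff_le_add_card_primesBelow {N m n : ℕ} {Y : ℝ} (hY : Y < (m : ℝ) ^ 3)
    (hmn : m ≤ n) : upperSum N n (cutoff Y) ≤ upperSum N m (cutoff Y) + #n.primesBelow := by
  induction n, hmn using Nat.le_induction with
  | base => exact le_add_of_nonneg_right (Nat.cast_nonneg _)
  | succ p hmp ih =>
    rw [Nat.primesBelow_succ]
    split_ifs with hp
    · have hzero : lowerSum N p (fun t ↦ cutoff Y (max (p * t) (p ^ 3))) = 0 := by
        have hcutoff (t : ℝ) : cutoff Y (max (p * t) (p ^ 3)) = 0 :=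
          if_neg (not_le.2 (hY.trans_le (le_max_of_le_right (by gcongr))))
        simp [hcutoff, lowerSum]
      rw [upperSum_succ_of_prime hp, hzero, card_insert_of_notMem (Nat.notMem_primesBelow p)]
      push_cast
      linarith [cutoff_le_one Y p]
    · rw [upperSum_succ_of_not_prime hp]
      exact ih

lemma exists_fourthRoot_level {z : ℕ} (hz : z ≠ 0) {X : ℝ} (hzX : 16 * (z : ℝ) ^ 2 ≤ X)
    (hXz : X ≤ (z : ℝ) ^ 3) :
    ∃ m : ℕ, 2 ≤ m ∧ m ≤ z ∧ z ≤ m ^ 2 ∧ (m : ℝ) ^ 2 * z ≤ X ∧ X < (m : ℝ) ^ 4 := by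
  have hz0 : (0 : ℝ) < z := by positivity
  have hz16 : (16 : ℝ) ≤ z := by
    refine le_of_mul_le_mul_right ?_ (pow_pos hz0 2)
    linarith [pow_succ' (z : ℝ) 2]
  set r := √(√X) with hr
  have hr_sq : r ^ 2 = √X := sq_sqrt (sqrt_nonneg X)
  have hX0 : 0 ≤ X := le_trans (by positivity) hzX
  have hr_four : r ^ 4 = X := by
    rw [show r ^ 4 = (r ^ 2) ^ 2 by ring, hr_sq, sq_sqrt hX0]
  have hz_le : 4 * z ≤ r ^ 2 := by
    rw [hr_sq]
    exact le_sqrt_of_sq_le (by linarith [show (4 * (z : ℝ)) ^ 2 = 16 * z ^ 2 by ring])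
  have hr1 : 1 ≤ r := by
    rw [hr, one_le_sqrt, ← hr_sq]
    linarith
  obtain ⟨m, hm_gt, hm_le⟩ : ∃ m : ℕ, r < m ∧ m ≤ 2 * r :=
    ⟨⌊r⌋₊ + 1, by push_cast; exact Nat.lt_floor_add_one r,
      by push_cast; linarith [Nat.floor_le (show 0 ≤ r by linarith)]⟩
  have hm_sq : r ^ 2 < (m : ℝ) ^ 2 := by gcongr
  have hm_sq_le : (m : ℝ) ^ 2 ≤ 4 * r ^ 2 := by
    calc (m : ℝ) ^ 2 ≤ (2 * r) ^ 2 := by gcongr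
      _ = 4 * r ^ 2 := by ring
  have hm_four : (m : ℝ) ^ 4 ≤ (z : ℝ) ^ 4 := by
    calc (m : ℝ) ^ 4 ≤ (2 * r) ^ 4 := by gcongr
      _ = 16 * X := by rw [mul_pow, hr_four]; norm_num
      _ ≤ z * z ^ 3 := by gcongr
      _ = (z : ℝ) ^ 4 := by ring
  refine ⟨m, ?_, ?_, ?_, ?_, by rw [← hr_four]; gcongr⟩
  · have : (1 : ℝ) < m := by linarith
    exact mod_cast this
  · exact Nat.cast_le.1 (le_of_pow_le_pow_left₀ (by norm_num) hz0.le hm_four)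
  · have : (z : ℝ) ≤ (m : ℝ) ^ 2 := by linarith
    exact mod_cast this
  · nlinarith

lemma card_primesBelow_mul_self_le {z : ℕ} (hz : 1 < z) :
    (#z.primesBelow : ℝ) * #z.primesBelow ≤ 36 * ((z : ℝ) ^ 2 / log z ^ 2) := by
  have hcard := card_primesBelow_le (y := z) (n := z) (mod_cast hz) (by linarith)
  calc (#z.primesBelow : ℝ) * #z.primesBelow ≤ (6 * (z / log z)) * (6 * (z / log z)) := by gcongr
    _ = 36 * ((z : ℝ) ^ 2 / log z ^ 2) := by ring

lemma lowerSum_cutoff_le_lowerSum_fourthRoot (N : ℕ) {m z : ℕ} {X : ℝ} (hmz : m ≤ z)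
    (hzX : 16 * (z : ℝ) ^ 2 ≤ X) (hXm : X < (m : ℝ) ^ 4) :
    lowerSum N z (cutoff X) ≤ lowerSum N m (cutoff X) + upperSum N m (spawnCount m z X) +
      #z.primesBelow * #z.primesBelow := by
  refine lowerSum_cutoff_le_add_upperSum_spawnCount (Nat.cast_nonneg _) hmz
    (by nlinarith) fun q hmq hqz ↦ ?_
  have hm0 : (0 : ℝ) < m := by
    refine Nat.cast_pos.2 (Nat.pos_of_ne_zero fun h ↦ ?_)
    rw [h] at hXm
    norm_num at hXm
    nlinarith
  have hX : X / q < (m : ℝ) ^ 3 := by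
    have hmq' : (m : ℝ) ≤ q := mod_cast hmq
    rw [div_lt_iff₀ (by linarith)]
    calc X < (m : ℝ) ^ 3 * m := by linarith [pow_succ (m : ℝ) 3]
      _ ≤ (m : ℝ) ^ 3 * q := by gcongr
  refine (upperSum_cutoff_le_add_card_primesBelow hX hmq).trans ?_
  gcongr
  exact fun r hr ↦ Nat.mem_primesBelow.2
    ⟨(Nat.lt_of_mem_primesBelow hr).trans hqz, Nat.prime_of_mem_primesBelow hr⟩

lemma exists_upperSum_spawnCount_le : ∃ C : ℝ, 1 ≤ C ∧ ∀ (N m z : ℕ) (X : ℝ), 2 ≤ m → m ≤ z →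
    z ≤ m ^ 2 → 0 < X → (m : ℝ) ^ 2 * z ≤ X →
    upperSum N m (spawnCount m z X) ≤ C * (X / log z ^ 2) := by
  obtain ⟨C, hC, hupper⟩ := exists_upperSum_one_div_max_le_div
  refine ⟨24 * C, by linarith, fun N m z X hm hmz hzm hX hmzX ↦ ?_⟩
  have hz : (1 : ℝ) < z := mod_cast (show 1 < z by lia)
  have hlogz : 0 < log z := log_pos hz
  have hM : log z / 2 ≤ primeLog m := by
    have hlog := log_le_log (by linarith) (show (z : ℝ) ≤ (m : ℝ) ^ 2 from mod_cast hzm)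
    rw [log_pow] at hlog
    push_cast at hlog
    linarith [log_le_primeLog (show m ≠ 0 by lia)]
  calc upperSum N m (spawnCount m z X)
      ≤ upperSum N m (fun t ↦ 12 * X / log z * (1 / max t (X / z))) :=
        upperSum_mono fun t ht ↦ spawnCount_le hm hmz hzm hX (by linarith)
    _ ≤ 12 * X / log z * (C / (log z / 2)) := by
        rw [upperSum_const_mul]
        gcongr
        refine (hupper N m (X / z) (by lia) ((le_div_iff₀ (by linarith)).2 hmzX)).trans ?_
        gcongr
    _ = 24 * C * (X / log z ^ 2) := by
        field_simp
        norm_num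

lemma exists_lowerSum_cutoff_le_div_log_sq : ∃ C : ℝ, 1 ≤ C ∧ ∀ (N z : ℕ) (X : ℝ), z ≠ 0 →
    16 * (z : ℝ) ^ 2 ≤ X → X ≤ (z : ℝ) ^ 3 → 16 ^ 10 ≤ X → 90 * logGap ≤ log X →
    lowerSum N z (cutoff X) ≤ C * (X / log z ^ 2) := by
  obtain ⟨C₁, hC₁, hlow⟩ := exists_lowerSum_cutoff_le_log
  obtain ⟨C₂, hC₂, hspawn⟩ := exists_upperSum_spawnCount_le
  refine ⟨2 * C₁ + C₂ + 36, by linarith, fun N z X hz hzX hXz hX hlogX ↦ ?_⟩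
  obtain ⟨m, hm, hmz, hzm, hmzX, hXm⟩ := exists_fourthRoot_level hz hzX hXz
  have hX0 : 0 < X := lt_of_lt_of_le (by norm_num) hX
  have hz1 : (1 : ℝ) < z := mod_cast (show 1 < z by lia)
  have hm1 : (1 : ℝ) ≤ m := mod_cast (show 1 ≤ m by lia)
  have hlogz : 0 < log z := log_pos hz1
  have hlogX0 : 1 ≤ log X := by linarith [one_le_logGap]
  have hlog_zX : log z ≤ log X := log_le_log (by linarith) (by nlinarith)
  have hlog_mX : log m ≤ log X := log_le_log (by linarith) (by nlinarith)
  have hmX : (m : ℝ) ^ 3 ≤ X := by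
    refine le_trans ?_ hmzX
    rw [pow_succ]
    gcongr
  have hlower : lowerSum N m (cutoff X) ≤ 2 * C₁ * (X / log z ^ 2) := by
    calc lowerSum N m (cutoff X) ≤ C₁ * (1 + log m) * (X / log X ^ 3) :=
          hlow N m X (by lia) hX hlogX hmX
      _ ≤ C₁ * (2 * log X) * (X / log X ^ 3) := by
          gcongr
          linarith
      _ = 2 * C₁ * (X / log X ^ 2) := by field_simp
      _ ≤ 2 * C₁ * (X / log z ^ 2) := by gcongr
  have hcard : (#z.primesBelow : ℝ) * #z.primesBelow ≤ 36 * (X / log z ^ 2) := by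
    refine (card_primesBelow_mul_self_le (by lia)).trans ?_
    gcongr
    nlinarith
  linarith [lowerSum_cutoff_le_lowerSum_fourthRoot N hmz hzX hXm,
    hspawn N m z X hm hmz hzm hX0 hmzX]

/-! ### The upper bound for sifted sets -/

lemma IsRough.pow_cardFactors_le {n m : ℕ} (h : IsRough n m) (hm : m ≠ 0) : n ^ Ω m ≤ m := by
  rw [ArithmeticFunction.cardFactors_apply]
  refine (List.pow_card_le_prod _ _ fun q hq ↦ ?_).trans (Nat.prod_primeFactorsList hm).le
  exact h q (Nat.prime_of_mem_primeFactorsList hq) (Nat.dvd_of_mem_primeFactorsList hq)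

lemma parityRough_one_subset_primesBelow {n Y : ℕ} (hn : 2 ≤ n) (hY : Y < n ^ 3) :
    parityRough Y n 1 ⊆ (Y + 1).primesBelow := by
  intro m hm
  simp only [mem_parityRough, mem_Ioc, ZMod.natCast_eq_one_iff_odd] at hm
  obtain ⟨⟨hm_pos, hmY⟩, hrough, hodd⟩ := hm
  have hlt : Ω m < 3 := by
    refine (Nat.pow_lt_pow_iff_right (show 1 < n by lia)).1 ?_
    exact (hrough.pow_cardFactors_le hm_pos.ne').trans_lt (hmY.trans_lt hY)
  have hone : Ω m = 1 := by
    obtain ⟨k, hk⟩ := hodd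
    lia
  exact Nat.mem_primesBelow.2
    ⟨by lia, ArithmeticFunction.cardFactors_eq_one_iff_prime.1 hone⟩

lemma paritySum_one_le_div_log {n Y : ℕ} (hn : 2 ≤ n) (hYn : Y < n ^ 3) (hY : 1 < Y) :
    (paritySum Y n 1 : ℝ) ≤ 90 * (Y / log Y) := by
  have hsum : paritySum Y n 1 ≤ #(Y + 1).primesBelow * 15 :=
    (sum_le_card_nsmul _ _ 15 fun m _ ↦ Nat.le_of_lt_succ (Nat.mod_lt _ (by norm_num))).trans
      (Nat.mul_le_mul_right 15 (card_le_card (parityRough_one_subset_primesBelow hn hYn)))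
  have hcard := card_primesBelow_le (y := Y) (n := Y + 1) (mod_cast hY) (by push_cast; rfl)
  calc (paritySum Y n 1 : ℝ) ≤ #(Y + 1).primesBelow * 15 := mod_cast hsum
    _ ≤ 6 * (Y / log Y) * 15 := by gcongr
    _ = 90 * (Y / log Y) := by ring

lemma exists_upperSum_cutoff_le : ∃ C : ℝ, 1 ≤ C ∧ ∀ (N n : ℕ) (Y : ℝ), n ≠ 0 → (n : ℝ) ^ 2 ≤ Y →
    upperSum N n (cutoff Y) ≤ C * (Y / primeLog n) := by
  obtain ⟨C, hC, hupper⟩ := exists_upperSum_one_div_max_le_div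
  refine ⟨C, hC, fun N n Y hn hnY ↦ ?_⟩
  have hY : 0 < Y := lt_of_lt_of_le (by positivity) hnY
  calc upperSum N n (cutoff Y) ≤ upperSum N n (fun t ↦ Y * (1 / max t Y)) :=
        upperSum_mono fun t _ ↦ by simpa using cutoff_le_mul_one_div_max one_ne_zero hY t
    _ ≤ Y * (C / primeLog n) := by
        rw [upperSum_const_mul]
        gcongr
        exact hupper N n Y hn hnY
    _ = C * (Y / primeLog n) := by ring

lemma sifted_subset_sifted (α : ℝ) {X Y : ℝ} (hXY : X ≤ Y) {m n : ℕ} (hmn : m ≤ n) :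
    sifted α X n ⊆ sifted α Y m := by
  intro i hi
  rw [mem_sifted, mem_Ioc_floor_add_iff] at hi ⊢
  exact ⟨⟨hi.1.1, hi.1.2.trans (by gcongr)⟩, hi.2.mono hmn⟩

lemma eight_le_sqrt_and_lt_sqrt_cube {z Y : ℕ} (hz : 64 ≤ z) (hzY : z ≤ Y) (hYz : Y ≤ z ^ 2) :
    8 ≤ Y.sqrt ∧ Y.sqrt ≤ z ∧ Y.sqrt ^ 2 ≤ Y ∧ Y < Y.sqrt ^ 3 := by
  have h8 : 8 ≤ Y.sqrt := Nat.le_sqrt'.2 (by lia)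
  refine ⟨h8, (Nat.sqrt_le_sqrt hYz).trans_eq (Nat.sqrt_eq' z), Nat.sqrt_le' Y, ?_⟩
  exact (Nat.lt_succ_sqrt' Y).trans_le (by rw [Nat.succ_eq_add_one]; nlinarith)

-- Sifting only up to `√Y` already leaves no odd-parity integers but primes.
lemma exists_card_sifted_le : ∃ C : ℝ, 1 ≤ C ∧ ∀ (z Y : ℕ) (α X : ℝ), 64 ≤ z → z ≤ Y →
    Y ≤ z ^ 2 → X ≤ Y → #(sifted α X z) ≤ C * (Y / log z) := by
  obtain ⟨C, hC, hupper⟩ := exists_upperSum_cutoff_le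
  refine ⟨90 + 306 * C, by linarith, fun z Y α X hz hzY hYz hXY ↦ ?_⟩
  obtain ⟨hn8, hnz, hn_sq, hn_cube⟩ := eight_le_sqrt_and_lt_sqrt_cube hz hzY hYz
  set n := Y.sqrt
  have hz1 : (1 : ℝ) < z := mod_cast (show 1 < z by lia)
  have hzY' : (z : ℝ) ≤ Y := mod_cast hzY
  have hn1 : (1 : ℝ) ≤ n := mod_cast (show 1 ≤ n by lia)
  have hn_sq' : (n : ℝ) ^ 2 ≤ Y := mod_cast hn_sq
  have hlogz : 0 < log z := log_pos hz1
  have hM : log z / 3 ≤ primeLog n := by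
    have hlog := log_le_log (by linarith)
      (show (z : ℝ) ≤ (n : ℝ) ^ 3 from mod_cast hzY.trans hn_cube.le)
    rw [log_pow] at hlog
    push_cast at hlog
    linarith [log_le_primeLog (show n ≠ 0 by lia)]
  have hparity : parityScale * paritySum Y n 1 ≤ 90 * (Y / log z) := by
    calc parityScale * paritySum Y n 1 ≤ 1 * (90 * (Y / log Y)) := by
          gcongr
          · exact parityScale_le_one
          · exact paritySum_one_le_div_log (by lia) hn_cube (by lia)
      _ ≤ 90 * (Y / log z) := by rw [one_mul]; gcongr
  have herror : upperSum Y n (cutoff Y) ≤ 3 * C * (Y / log z) := by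
    calc upperSum Y n (cutoff Y) ≤ C * (Y / primeLog n) := hupper Y n Y (by lia) hn_sq'
      _ ≤ C * (Y / (log z / 3)) := by gcongr
      _ = 3 * C * (Y / log z) := by field_simp
  have hsieve := (lowerSieveBound_and_upperSieveBound Y (show 1 ≤ n by lia)).2 α Y le_rfl
    (by nlinarith)
  rw [Nat.floor_natCast] at hsieve
  have hcard : (#(sifted α X z) : ℝ) ≤ #(sifted α Y n) :=
    mod_cast card_le_card (sifted_subset_sifted α hXY hnz)
  linarith

/-! ### Many products of two primes -/

/-- The primes in `(y, 16 * y]`. -/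
noncomputable def primeBlock (y : ℝ) : Finset ℕ := {p ∈ Ioc ⌊y⌋₊ ⌊16 * y⌋₊ | p.Prime}

lemma mem_primeBlock {y : ℝ} (hy : 0 ≤ y) {p : ℕ} :
    p ∈ primeBlock y ↔ y < p ∧ p ≤ 16 * y ∧ p.Prime := by
  rw [primeBlock, mem_filter, mem_Ioc, Nat.floor_lt hy, Nat.le_floor_iff (by positivity), and_assoc]

lemma div_log_le_card_primeBlock {y x : ℝ} (hy : 16 ^ 10 ≤ y) (hyx : y ≤ x) :
    y / log x ≤ #(primeBlock y) := by
  have hy1 : 1 < y := lt_of_lt_of_le (by norm_num) hy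
  refine le_trans ?_ (div_log_le_card_primes_Ioc hy)
  have := log_pos hy1
  gcongr

lemma one_div_log_le_sum_primeBlock {y x : ℝ} (hy : 16 ^ 10 ≤ y) (hyx : y ≤ x) :
    1 / (16 * log x) ≤ ∑ p ∈ primeBlock y, (1 / p : ℝ) := by
  have hy0 : 0 < y := lt_of_lt_of_le (by norm_num) hy
  calc 1 / (16 * log x) = y / log x * (1 / (16 * y)) := by field_simp
    _ ≤ #(primeBlock y) * (1 / (16 * y)) := by
        gcongr
        exact div_log_le_card_primeBlock hy hyx
    _ ≤ ∑ p ∈ primeBlock y, (1 / p : ℝ) := by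
        rw [← nsmul_eq_mul]
        refine card_nsmul_le_sum _ _ _ fun p hp ↦ ?_
        obtain ⟨hyp, hp16, -⟩ := (mem_primeBlock hy0.le).1 hp
        have : (0 : ℝ) < p := hy0.trans hyp
        gcongr

lemma div_log_le_sum_one_div_primes {z K : ℕ} {x : ℝ} (hz : 16 ^ 10 ≤ z)
    (hx : (16 : ℝ) ^ K * z ≤ x) :
    K / (16 * log x) ≤ ∑ p ∈ Ioc z (16 ^ K * z) with p.Prime, (1 / p : ℝ) := by
  induction K with
  | zero => simp
  | succ K ih =>
    have hz' : (16 : ℝ) ^ 10 ≤ z := mod_cast hz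
    have hzK : z ≤ 16 ^ K * z := Nat.le_mul_of_pos_left z (by positivity)
    have hKx : (16 : ℝ) ^ K * z ≤ x := le_trans (by gcongr <;> norm_num) hx
    have hblock : primeBlock (16 ^ K * z) =
        {p ∈ Ioc (16 ^ K * z) (16 ^ (K + 1) * z) | p.Prime} := by
      ext p
      rw [mem_primeBlock (by positivity), ← mul_assoc, ← pow_succ', mem_filter, mem_Ioc, and_assoc]
      norm_cast
    have hunion : Ioc z (16 ^ (K + 1) * z) =
        Ioc z (16 ^ K * z) ∪ Ioc (16 ^ K * z) (16 ^ (K + 1) * z) :=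
      (Ioc_union_Ioc_eq_Ioc hzK (by gcongr <;> norm_num)).symm
    rw [hunion, filter_union, sum_union (disjoint_filter_filter (Ioc_disjoint_Ioc_of_le le_rfl)),
      ← hblock]
    have hlast := one_div_log_le_sum_primeBlock
      (hz'.trans (mod_cast hzK : (z : ℝ) ≤ 16 ^ K * z)) hKx
    calc ((K + 1 : ℕ) : ℝ) / (16 * log x) = K / (16 * log x) + 1 / (16 * log x) := by
          push_cast
          ring
      _ ≤ _ := add_le_add (ih hKx) hlast

lemma prime_mul_prime_inj_of_lt {p q r s : ℕ} (hp : p.Prime) (hr : r.Prime) (hs : s.Prime)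
    (hpq : p < q) (hrs : r < s) (h : p * q = r * s) : p = r ∧ q = s := by
  rcases hp.dvd_mul.1 (Dvd.intro q h) with hdvd | hdvd
  · obtain rfl := (Nat.prime_dvd_prime_iff_eq hp hr).1 hdvd
    exact ⟨rfl, Nat.eq_of_mul_eq_mul_left hp.pos h⟩
  · obtain rfl := (Nat.prime_dvd_prime_iff_eq hp hs).1 hdvd
    rw [mul_comm r] at h
    obtain rfl := Nat.eq_of_mul_eq_mul_left hp.pos h
    exact absurd hpq hrs.asymm

lemma mem_primeBlock_sq_div {w r s : ℕ} (hr : 0 < r) :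
    s ∈ primeBlock ((w : ℝ) ^ 2 / r) ↔ w ^ 2 < r * s ∧ r * s ≤ 16 * w ^ 2 ∧ s.Prime := by
  have hr' : (0 : ℝ) < r := mod_cast hr
  rw [mem_primeBlock (by positivity), div_lt_iff₀ hr', ← mul_div_assoc, le_div_iff₀ hr',
    mul_comm (s : ℝ)]
  norm_cast

lemma lt_of_mem_primeBlock_sq_div {w r s : ℕ} (hr : 0 < r) (hrw : r ≤ w)
    (hs : s ∈ primeBlock ((w : ℝ) ^ 2 / r)) : r < s := by
  have hlt := ((mem_primeBlock_sq_div hr).1 hs).1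
  by_contra! hsr
  nlinarith

lemma prime_mul_prime_mem_parityRough {N z r s : ℕ} (hr : r.Prime) (hs : s.Prime) (hzr : z ≤ r)
    (hzs : z ≤ s) (hN : r * s ≤ N) : r * s ∈ parityRough N z 0 := by
  rw [mem_parityRough, mem_Ioc, isRough_prime_mul hr hzr,
    ArithmeticFunction.cardFactors_mul hr.ne_zero hs.ne_zero,
    ArithmeticFunction.cardFactors_apply_prime hr, ArithmeticFunction.cardFactors_apply_prime hs]
  refine ⟨⟨Nat.mul_pos hr.pos hs.pos, hN⟩, fun p hp hps ↦ ?_, by decide⟩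
  rwa [(Nat.prime_dvd_prime_iff_eq hp hs).1 hps]

lemma sum_card_primeBlock_le_paritySum (z w : ℕ) :
    ∑ r ∈ Ioc z w with r.Prime, #(primeBlock ((w : ℝ) ^ 2 / r)) ≤ paritySum (16 * w ^ 2) z 0 := by
  set pairs : Finset (Σ _ : ℕ, ℕ) :=
    {r ∈ Ioc z w | r.Prime}.sigma fun r ↦ primeBlock ((w : ℝ) ^ 2 / r) with hpairs
  have hmem {r s : ℕ} (h : (⟨r, s⟩ : Σ _ : ℕ, ℕ) ∈ pairs) :
      r.Prime ∧ s.Prime ∧ z < r ∧ r < s ∧ w ^ 2 < r * s ∧ r * s ≤ 16 * w ^ 2 := by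
    simp only [hpairs, mem_sigma, mem_filter, mem_Ioc] at h
    obtain ⟨⟨⟨hzr, hrw⟩, hr⟩, hs⟩ := h
    obtain ⟨hlt, hle, hs'⟩ := (mem_primeBlock_sq_div hr.pos).1 hs
    exact ⟨hr, hs', hzr, lt_of_mem_primeBlock_sq_div hr.pos hrw hs, hlt, hle⟩
  have hinj : Set.InjOn (fun u : Σ _ : ℕ, ℕ ↦ u.1 * u.2) pairs := by
    rintro ⟨r, s⟩ hu ⟨r', s'⟩ hu' he
    obtain ⟨hr, -, -, hrs, -⟩ := hmem hu
    obtain ⟨hr', hs', -, hrs', -⟩ := hmem hu'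
    obtain ⟨rfl, rfl⟩ := prime_mul_prime_inj_of_lt hr hr' hs' hrs hrs' he
    rfl
  calc ∑ r ∈ Ioc z w with r.Prime, #(primeBlock ((w : ℝ) ^ 2 / r))
      = ∑ u ∈ pairs, 1 := by rw [← card_sigma, card_eq_sum_ones]
    _ ≤ ∑ u ∈ pairs, 16 * w ^ 2 / (u.1 * u.2) % 16 := by
        refine sum_le_sum fun ⟨r, s⟩ hu ↦ ?_
        obtain ⟨hr, hs, -, -, hlt, hle⟩ := hmem hu
        have hpos : 0 < r * s := Nat.mul_pos hr.pos hs.pos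
        rw [Nat.mod_eq_of_lt ((Nat.div_lt_iff_lt_mul hpos).2 (by lia))]
        exact (Nat.one_le_div_iff hpos).2 hle
    _ = ∑ m ∈ pairs.image fun u ↦ u.1 * u.2, 16 * w ^ 2 / m % 16 :=
        (sum_image (f := fun m ↦ 16 * w ^ 2 / m % 16) hinj).symm
    _ ≤ paritySum (16 * w ^ 2) z 0 := by
        refine sum_le_sum_of_subset (image_subset_iff.2 fun ⟨r, s⟩ hu ↦ ?_)
        obtain ⟨hr, hs, hzr, hrs, -, hle⟩ := hmem hu
        exact prime_mul_prime_mem_parityRough hr hs hzr.le (hzr.trans hrs).le hle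

lemma sq_div_log_sq_mul_le_card_primeBlock {w r : ℕ} (hw : (16 : ℝ) ^ 10 ≤ w) (hr : 0 < r)
    (hrw : r ≤ w) :
    (w : ℝ) ^ 2 / log ((w : ℝ) ^ 2) * (1 / r) ≤ #(primeBlock ((w : ℝ) ^ 2 / r)) := by
  have hr1 : (1 : ℝ) ≤ r := mod_cast hr
  have hrw' : (r : ℝ) ≤ w := mod_cast hrw
  have hy : (w : ℝ) ≤ (w : ℝ) ^ 2 / r := by
    rw [le_div_iff₀ (by linarith), sq]
    gcongr
  rw [mul_one_div, div_right_comm]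
  exact div_log_le_card_primeBlock (hw.trans hy) (div_le_self (by positivity) hr1)

lemma mul_sq_div_log_sq_le_paritySum {z K w : ℕ} (hw : w = 16 ^ K * z) (hz : 16 ^ 10 ≤ z)
    (hwz : w ^ 2 ≤ z ^ 3) :
    K * ((w : ℝ) ^ 2 / (144 * log z ^ 2)) ≤ paritySum (16 * w ^ 2) z 0 := by
  have hz' : (16 : ℝ) ^ 10 ≤ z := mod_cast hz
  have hz1 : (1 : ℝ) < z := lt_of_lt_of_le (by norm_num) hz'
  have hzw : z ≤ w := hw ▸ Nat.le_mul_of_pos_left z (by positivity)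
  have hw1 : (1 : ℝ) < w := hz1.trans_le (mod_cast hzw)
  have hlogw : 0 < log ((w : ℝ) ^ 2) := log_pos (by nlinarith)
  have hlog_le : log ((w : ℝ) ^ 2) ≤ 3 * log z := by
    have := log_le_log (by positivity) (show (w : ℝ) ^ 2 ≤ (z : ℝ) ^ 3 from mod_cast hwz)
    rwa [log_pow (z : ℝ)] at this
  calc K * ((w : ℝ) ^ 2 / (144 * log z ^ 2))
      = (w : ℝ) ^ 2 / (3 * log z) * (K / (16 * (3 * log z))) := by ring
    _ ≤ (w : ℝ) ^ 2 / log ((w : ℝ) ^ 2) * (K / (16 * log ((w : ℝ) ^ 2))) := by gcongr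
    _ ≤ (w : ℝ) ^ 2 / log ((w : ℝ) ^ 2) * ∑ r ∈ Ioc z w with r.Prime, (1 / r : ℝ) := by
        gcongr
        rw [hw]
        refine div_log_le_sum_one_div_primes hz ?_
        rw [hw] at hw1
        push_cast at hw1 ⊢
        nlinarith
    _ ≤ ∑ r ∈ Ioc z w with r.Prime, (#(primeBlock ((w : ℝ) ^ 2 / r)) : ℝ) := by
        rw [mul_sum]
        refine sum_le_sum fun r hr ↦ ?_
        obtain ⟨hr, hr_prime⟩ := mem_filter.1 hr
        exact sq_div_log_sq_mul_le_card_primeBlock (hz'.trans (mod_cast hzw)) hr_prime.pos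
          (mem_Ioc.1 hr).2
    _ ≤ paritySum (16 * w ^ 2) z 0 := mod_cast sum_card_primeBlock_le_paritySum z w

/-! ### Lower sieve bound against the large prime factors -/

lemma card_primeFactors_filter_le_mul_log_le {a : ℕ} (ha : a ≠ 0) {z : ℕ} (hz : 0 < z) :
    #{q ∈ a.primeFactors | z ≤ q} * log z ≤ log a := by
  set Q := {q ∈ a.primeFactors | z ≤ q}
  have hpow : z ^ #Q ≤ a := by
    calc z ^ #Q ≤ ∏ q ∈ Q, q := pow_card_le_prod Q (fun q ↦ q) z fun q hq ↦ (mem_filter.1 hq).2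
      _ ≤ ∏ q ∈ a.primeFactors, q :=
          prod_le_prod_of_subset_of_one_le' (filter_subset _ _) fun q hq _ ↦
            (Nat.prime_of_mem_primeFactors hq).one_lt.le
      _ ≤ a := Nat.le_of_dvd (Nat.pos_of_ne_zero ha) (Nat.prod_primeFactors_dvd a)
  rw [← log_pow]
  exact log_le_log (by positivity) (mod_cast hpow)

lemma card_sifted_le_sum_of_forall_gcd_ne_one {a : ℤ} (ha : a ≠ 0) {α X : ℝ} {z : ℕ}
    (h : ∀ i ∈ sifted α X z, Int.gcd a i ≠ 1) :
    #(sifted α X z) ≤ ∑ q ∈ a.natAbs.primeFactors with z ≤ q, #(sifted (α / q) (X / q) z) := by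
  have hcover : sifted α X z ⊆
      {q ∈ a.natAbs.primeFactors | z ≤ q}.biUnion fun q ↦ {i ∈ sifted α X z | (q : ℤ) ∣ i} := by
    intro i hi
    obtain ⟨q, hq, hqdvd⟩ := Nat.exists_prime_and_dvd (h i hi)
    have hqa : q ∣ a.natAbs := hqdvd.trans (Nat.gcd_dvd_left _ _)
    have hqi : q ∣ i.natAbs := hqdvd.trans (Nat.gcd_dvd_right _ _)
    have hzq : z ≤ q := (mem_sifted.1 hi).2 q hq hqi
    simp only [mem_biUnion, mem_filter, Nat.mem_primeFactors]
    exact ⟨q, ⟨⟨hq, hqa, Int.natAbs_ne_zero.2 ha⟩, hzq⟩, hi, Int.natCast_dvd.2 hqi⟩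
  refine (card_le_card hcover).trans (card_biUnion_le.trans (sum_le_sum fun q hq ↦ ?_))
  simp only [mem_filter, Nat.mem_primeFactors] at hq
  exact (card_filter_prime_dvd_sifted hq.1.1 hq.2 α X).le

lemma exists_card_sifted_le_of_forall_gcd_ne_one : ∃ C : ℝ, ∀ (W z : ℕ) (a : ℤ) (α : ℝ),
    W ≠ 0 → W ≤ z → 64 ≤ z → a ≠ 0 → log a ≤ z →
    (∀ i ∈ sifted α (W * z ^ 2) z, Int.gcd a i ≠ 1) →
    #(sifted α (W * z ^ 2) z) ≤ C * (W * z ^ 2 / log z ^ 2) := by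
  obtain ⟨C, hC, hupper⟩ := exists_card_sifted_le
  refine ⟨C, fun W z a α hW hWz hz ha hlog h ↦ ?_⟩
  have hlogz : 0 < log z := log_pos (mod_cast (show 1 < z by lia))
  set Q := {q ∈ a.natAbs.primeFactors | z ≤ q}
  have hcardQ : (#Q : ℝ) ≤ z / log z := by
    rw [le_div_iff₀ hlogz]
    refine (card_primeFactors_filter_le_mul_log_le (Int.natAbs_ne_zero.2 ha) (by lia)).trans ?_
    rwa [Nat.cast_natAbs, Int.cast_abs, log_abs]
  have hpart (q : ℕ) (hq : q ∈ Q) :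
      (#(sifted (α / q) (W * z ^ 2 / q) z) : ℝ) ≤ C * ((W * z : ℕ) / log z) := by
    have hzq : (z : ℝ) ≤ q := mod_cast (mem_filter.1 hq).2
    have hz0 : (0 : ℝ) < z := mod_cast (show 0 < z by lia)
    refine hupper z (W * z) _ _ hz (Nat.le_mul_of_pos_left z (Nat.pos_of_ne_zero hW))
      (by rw [sq]; gcongr) ?_
    rw [div_le_iff₀ (hz0.trans_le hzq)]
    push_cast
    rw [sq, ← mul_assoc]
    gcongr
  calc (#(sifted α (W * z ^ 2) z) : ℝ)
      ≤ ∑ q ∈ Q, (#(sifted (α / q) (W * z ^ 2 / q) z) : ℝ) :=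
        (Nat.cast_le.2 (card_sifted_le_sum_of_forall_gcd_ne_one ha h)).trans_eq (Nat.cast_sum _ _)
    _ ≤ #Q * (C * ((W * z : ℕ) / log z)) :=
        (sum_le_card_nsmul Q _ _ hpart).trans_eq (nsmul_eq_mul _ _)
    _ ≤ z / log z * (C * ((W * z : ℕ) / log z)) := by gcongr
    _ = C * (W * z ^ 2 / log z ^ 2) := by
        push_cast
        ring

-- Each of the `K` blocks of primes in `(z, 16 ^ K * z]` contributes to the products of two primes
-- in the parity sum, whereas the constant of the error sum does not depend on `K`.
lemma exists_mul_sub_mul_le_card_sifted : ∃ (C : ℝ) (z₀ : ℕ), 64 ≤ z₀ ∧ ∀ (K z : ℕ) (α : ℝ),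
    z₀ ≤ z → 16 * (16 ^ K) ^ 2 ≤ z →
    (parityScale * (K / 2304) - C) * (((16 * (16 ^ K * z) ^ 2 : ℕ) : ℝ) / log z ^ 2) ≤
      #(sifted α ((16 * (16 ^ K * z) ^ 2 : ℕ) : ℝ) z) := by
  obtain ⟨C, -, herror⟩ := exists_lowerSum_cutoff_le_div_log_sq
  refine ⟨102 * C, 16 ^ 10 + ⌈exp (90 * logGap)⌉₊, by lia, fun K z α hz₀ hKz ↦ ?_⟩
  set w := 16 ^ K * z with hw
  have hz : 16 ^ 10 ≤ z := by lia
  have hz1 : (16 : ℝ) ^ 10 ≤ z := mod_cast hz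
  have hexp : exp (90 * logGap) ≤ z := (Nat.le_ceil _).trans (mod_cast (show _ ≤ z by lia))
  have hwz : 16 * w ^ 2 ≤ z ^ 3 := by
    calc 16 * w ^ 2 = 16 * (16 ^ K) ^ 2 * z ^ 2 := by rw [hw]; ring
      _ ≤ z * z ^ 2 := by gcongr
      _ = z ^ 3 := by ring
  have hzw : z ≤ w := Nat.le_mul_of_pos_left z (by positivity)
  have hzN : 16 * (z : ℝ) ^ 2 ≤ ((16 * w ^ 2 : ℕ) : ℝ) := mod_cast (by gcongr)
  have hparity := mul_sq_div_log_sq_le_paritySum hw hz (by lia)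
  have herror := herror (16 * w ^ 2) z ((16 * w ^ 2 : ℕ) : ℝ) (by lia) hzN (mod_cast hwz)
    (by nlinarith) ((le_log_iff_exp_le (by nlinarith)).2 (by nlinarith))
  have hsieve := (lowerSieveBound_and_upperSieveBound (16 * w ^ 2) (show 1 ≤ z by lia)).1 α
    ((16 * w ^ 2 : ℕ) : ℝ) le_rfl (by nlinarith)
  rw [Nat.floor_natCast] at hsieve
  have hmain : parityScale * (K / 2304) * (((16 * w ^ 2 : ℕ) : ℝ) / log z ^ 2) ≤
      parityScale * paritySum (16 * w ^ 2) z 0 := by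
    calc parityScale * (K / 2304) * (((16 * w ^ 2 : ℕ) : ℝ) / log z ^ 2)
        = parityScale * (K * ((w : ℝ) ^ 2 / (144 * log z ^ 2))) := by push_cast; ring
      _ ≤ parityScale * paritySum (16 * w ^ 2) z 0 :=
          mul_le_mul_of_nonneg_left hparity parityScale_pos.le
  linarith

lemma exists_mul_div_log_sq_lt_card_sifted (B : ℝ) : ∃ W z₀ : ℕ, W ≠ 0 ∧ W ≤ z₀ ∧ 64 ≤ z₀ ∧
    ∀ (z : ℕ) (α : ℝ), z₀ ≤ z → B * (W * z ^ 2 / log z ^ 2) < #(sifted α (W * z ^ 2) z) := by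
  obtain ⟨C, z₀, hz₀, hlower⟩ := exists_mul_sub_mul_le_card_sifted
  obtain ⟨K, hK⟩ := exists_nat_gt ((B + C) * 2304 / parityScale)
  rw [div_lt_iff₀ parityScale_pos] at hK
  refine ⟨16 * (16 ^ K) ^ 2, 16 * (16 ^ K) ^ 2 + z₀, by positivity, by lia, by lia,
    fun z α hz ↦ ?_⟩
  have hN : ((16 * (16 ^ K) ^ 2 : ℕ) : ℝ) * (z : ℝ) ^ 2 = ((16 * (16 ^ K * z) ^ 2 : ℕ) : ℝ) := by
    push_cast
    ring
  have hlogz : 0 < log z := log_pos (mod_cast (show 1 < z by lia))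
  have hz0 : z ≠ 0 := by lia
  rw [hN]
  refine lt_of_lt_of_le ?_ (hlower K z α (by lia) (by lia))
  gcongr
  linarith

lemma exists_mem_sifted_gcd_eq_one : ∃ W z₀ : ℕ, W ≠ 0 ∧ z₀ ≠ 0 ∧ ∀ (z : ℕ) (a : ℤ) (α : ℝ),
    z₀ ≤ z → a ≠ 0 → log a ≤ z → ∃ i ∈ sifted α (W * z ^ 2) z, Int.gcd a i = 1 := by
  obtain ⟨C, hupper⟩ := exists_card_sifted_le_of_forall_gcd_ne_one
  obtain ⟨W, z₀, hW, hWz₀, hz₀, hlower⟩ := exists_mul_div_log_sq_lt_card_sifted C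
  refine ⟨W, z₀, hW, by lia, fun z a α hz ha hlog ↦ ?_⟩
  by_contra! h
  exact (hlower z α hz).not_ge (hupper W z a α hW (by lia) (by lia) ha hlog h)

lemma exists_coprime_shift_of_le_log : ∃ L C : ℝ, 0 < C ∧ ∀ a b : ℤ, a ≠ 0 → L ≤ log a →
    ∃ h : ℤ, 0 ≤ h ∧ (h : ℝ) ≤ C * log a ^ 2 ∧ Int.gcd a (b + h) = 1 := by
  obtain ⟨W, z₀, hW, hz₀, hcoprime⟩ := exists_mem_sifted_gcd_eq_one
  refine ⟨z₀, 4 * W, by positivity, fun a b ha hL ↦ ?_⟩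
  have hz₀' : (1 : ℝ) ≤ z₀ := mod_cast Nat.pos_of_ne_zero hz₀
  set z := ⌈log a⌉₊
  have hlog_le : log a ≤ z := Nat.le_ceil _
  have hz_le : (z : ℝ) ≤ 2 * log a := by
    linarith [Nat.ceil_lt_add_one (show 0 ≤ log a by linarith)]
  obtain ⟨i, hi, hgcd⟩ := hcoprime z a ((b - 1 : ℤ) : ℝ) (mod_cast hL.trans hlog_le) ha hlog_le
  rw [mem_sifted, mem_Ioc_floor_add_iff] at hi
  obtain ⟨⟨hbi, hib⟩, -⟩ := hi
  have hbi' : b - 1 < i := mod_cast hbi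
  refine ⟨i - b, by lia, ?_, by rwa [add_sub_cancel]⟩
  push_cast at hib ⊢
  calc (i : ℝ) - b ≤ W * z ^ 2 := by linarith
    _ ≤ W * (2 * log a) ^ 2 := by gcongr
    _ = 4 * W * log a ^ 2 := by ring

lemma exists_coprime_shift_lt (a b : ℤ) (ha : 0 < a) :
    ∃ h : ℤ, 0 ≤ h ∧ h < a ∧ Int.gcd a (b + h) = 1 := by
  refine ⟨(1 - b) % a, Int.emod_nonneg _ ha.ne', Int.emod_lt_of_pos _ ha, ?_⟩
  rw [← Int.isCoprime_iff_gcd_eq_one]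
  exact ⟨(1 - b) / a, 1, by linarith [Int.emod_add_mul_ediv (1 - b) a]⟩

end CoprimeShift

/-- Key step in the greedy construction: there is an absolute constant `C > 0`
such that for every integer `a ≥ 2` and every integer `b` there is an integer `h`
with `0 ≤ h ≤ C·(log a)²` and `gcd(a, b + h) = 1`. -/
theorem coprime_shift_of_single :
    ∃ C : ℝ, 0 < C ∧
      ∀ a b : ℤ, 2 ≤ a →
        ∃ h : ℤ, 0 ≤ h ∧ (h : ℝ) ≤ C * (Real.log a) ^ 2 ∧ Int.gcd a (b + h) = 1 := by
  obtain ⟨L, C, hC, hlarge⟩ := CoprimeShift.exists_coprime_shift_of_le_log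
  have : 0 < Real.log 2 := Real.log_pos one_lt_two
  refine ⟨C + Real.exp L / Real.log 2 ^ 2, by positivity, fun a b ha ↦ ?_⟩
  have ha2 : (2 : ℝ) ≤ a := mod_cast ha
  rcases le_or_gt L (Real.log a) with hL | hL
  · obtain ⟨h, h0, hle, hgcd⟩ := hlarge a b (by lia) hL
    refine ⟨h, h0, hle.trans ?_, hgcd⟩
    gcongr
    exact le_add_of_nonneg_right (by positivity)
  · obtain ⟨h, h0, hlt, hgcd⟩ := CoprimeShift.exists_coprime_shift_lt a b (by lia)
    refine ⟨h, h0, ?_, hgcd⟩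
    calc (h : ℝ) ≤ a := mod_cast hlt.le
      _ ≤ Real.exp L := ((Real.log_lt_iff_lt_exp (by linarith)).1 hL).le
      _ = Real.exp L / Real.log 2 ^ 2 * Real.log 2 ^ 2 := by field_simp
      _ ≤ (C + Real.exp L / Real.log 2 ^ 2) * Real.log a ^ 2 := by
          gcongr
          exact le_add_of_nonneg_left hC.le
end

section
/- Let n ≥ 2 be an integer. For every real ε > 0 there is a constant C > 0, depending only on n and ε, such that for every vector a = (a_1, …, a_n) of positive integers and every integer h ≥ 2: |R(a, h) − ζ(2)^{−1} h^{2n}| ≤ C · h^{2n − n/(n² − n + 1)} · (h·𝔥(a))^ε. -/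
/-- The height of an integer vector: `𝔥(x) = max |x_i|`. -/
def vecHeight {n : ℕ} (x : Fin n → ℤ) : ℕ :=
  Finset.univ.sup fun i => (x i).natAbs

/-- `R(a, h)`: the number of pairs of vectors `x, y ∈ ℤⁿ` with positive components
and heights at most `h` for which `gcd(a·x, a·y) = gcd(a₁, …, aₙ)`. -/
noncomputable def Rcount {n : ℕ} (a : Fin n → ℤ) (h : ℕ) : ℕ :=
  Nat.card {p : (Fin n → ℤ) × (Fin n → ℤ) //
    (∀ i, 0 < p.1 i) ∧ (∀ i, 0 < p.2 i) ∧ vecHeight p.1 ≤ h ∧ vecHeight p.2 ≤ h ∧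
    (Int.gcd (∑ i, a i * p.1 i) (∑ i, a i * p.2 i) : ℤ) = Finset.univ.gcd a}

/-!
Dividing `a` by the gcd of its entries scales both sides of the gcd condition alike, so `a` may be
taken primitive. Möbius inversion then gives `R(a, h) = ∑ d, μ(d) N(d)²`, where `N(d)` counts the
`x ∈ {1, …, h}ⁿ` with `d ∣ a·x`, and solving the congruence one coordinate at a time gives
`N(d) = hⁿ / d + O(hⁿ⁻¹)` uniformly in `a` and `d`. For `d ≤ h` this produces the main term
`ζ(2)⁻¹ h²ⁿ` with an error `O(h²ⁿ⁻¹ log h)`. For `d > h` one factor `N(d)` is `O(hⁿ⁻¹)`, and the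
sum of the other over `d` counts the divisors of the numbers `a·x`, hence is `O(hⁿ (h 𝔥(a))^ε)` by
the divisor bound. The resulting exponent `2n - 1` is at most `2n - n / (n² - n + 1)`.
-/

open Finset
open scoped ArithmeticFunction.Moebius

section DivisorBound

lemma natCast_rpow_eq_prod_primeFactors {m : ℕ} (hm : m ≠ 0) (ε : ℝ) :
    (m : ℝ) ^ ε = ∏ p ∈ m.primeFactors, ((p : ℝ) ^ ε) ^ m.factorization p := by
  conv_lhs => rw [← Nat.prod_factorization_pow_eq_self hm]
  rw [Finsupp.prod, Nat.support_factorization, Nat.cast_prod,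
    ← Real.finsetProd_rpow _ _ fun p _ ↦ by positivity]
  refine prod_congr rfl fun p _ ↦ ?_
  rw [Nat.cast_pow, Real.rpow_pow_comm p.cast_nonneg]

lemma natCast_add_one_le_mul_pow {q : ℝ} (hq : 1 < q) (v : ℕ) :
    (v : ℝ) + 1 ≤ q / (q - 1) * q ^ v := by
  have hq' : 0 < q - 1 := sub_pos.2 hq
  have bernoulli : 1 + v * (q - 1) ≤ q ^ v := one_add_mul_sub_le_pow (by linarith) v
  rw [div_mul_eq_mul_div, le_div_iff₀ hq']
  nlinarith [mul_le_mul_of_nonneg_left bernoulli (zero_le_one.trans hq.le),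
    mul_nonneg v.cast_nonneg (sq_nonneg (q - 1))]

-- Only the finitely many primes with `p ^ ε < 2` contribute a factor larger than `1`.
lemma exists_card_divisors_le_mul_rpow {ε : ℝ} (hε : 0 < ε) :
    ∃ C : ℝ, 0 < C ∧ ∀ m : ℕ, m ≠ 0 → (#m.divisors : ℝ) ≤ C * (m : ℝ) ^ ε := by
  obtain ⟨P, hP⟩ : ∃ P : ℕ, ∀ p : ℕ, P ≤ p → (2 : ℝ) ≤ (p : ℝ) ^ ε :=
    Filter.eventually_atTop.1 <|
      ((tendsto_rpow_atTop hε).comp tendsto_natCast_atTop_atTop).eventually_ge_atTop 2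
  have one_lt_q : (1 : ℝ) < 2 ^ ε := Real.one_lt_rpow one_lt_two hε
  set K : ℝ := 2 ^ ε / (2 ^ ε - 1)
  have one_le_K : 1 ≤ K := (one_le_div (sub_pos.2 one_lt_q)).2 (by linarith)
  refine ⟨K ^ P, by positivity, fun m hm ↦ ?_⟩
  have factor_le : ∀ p ∈ m.primeFactors, (m.factorization p : ℝ) + 1 ≤
      (if p < P then K else 1) * ((p : ℝ) ^ ε) ^ m.factorization p := by
    intro p hp
    split_ifs with hpP
    · have two_le_p : (2 : ℝ) ≤ p := mod_cast (Nat.prime_of_mem_primeFactors hp).two_le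
      exact (natCast_add_one_le_mul_pow one_lt_q _).trans (by gcongr)
    · calc (m.factorization p : ℝ) + 1 ≤ 2 ^ m.factorization p := mod_cast Nat.lt_two_pow_self
        _ ≤ 1 * ((p : ℝ) ^ ε) ^ m.factorization p := by
          rw [one_mul]; gcongr; exact hP p (not_lt.1 hpP)
  have prod_K_le : ∏ p ∈ m.primeFactors, (if p < P then K else 1) ≤ K ^ P := by
    rw [← prod_filter, prod_const]
    refine pow_le_pow_right₀ one_le_K ?_
    simpa using card_le_card (fun p hp ↦ mem_range.2 (mem_filter.1 hp).2 :
      {p ∈ m.primeFactors | p < P} ⊆ range P)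
  calc (#m.divisors : ℝ) = ∏ p ∈ m.primeFactors, ((m.factorization p : ℝ) + 1) := by
        rw [Nat.card_divisors hm]; push_cast; rfl
    _ ≤ ∏ p ∈ m.primeFactors, (if p < P then K else 1) * ((p : ℝ) ^ ε) ^ m.factorization p :=
        prod_le_prod (fun p _ ↦ by positivity) factor_le
    _ ≤ K ^ P * (m : ℝ) ^ ε := by
        rw [prod_mul_distrib, natCast_rpow_eq_prod_primeFactors hm]
        gcongr

end DivisorBound

section MoebiusSums

lemma abs_moebius_cast_le_one (d : ℕ) : |(μ d : ℝ)| ≤ 1 :=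
  mod_cast ArithmeticFunction.abs_moebius_le_one

lemma hasSum_moebius_div_sq :
    HasSum (fun d : ℕ ↦ (μ d : ℝ) / (d : ℝ) ^ 2) (6 / Real.pi ^ 2) := by
  have one_lt_re : (1 : ℝ) < (2 : ℂ).re := by norm_num
  have lSeries_eq : LSeries (fun d ↦ (μ d : ℂ)) 2 = ((6 / Real.pi ^ 2 : ℝ) : ℂ) := by
    have zeta_mul := ArithmeticFunction.LSeries_zeta_mul_Lseries_moebius one_lt_re
    rw [ArithmeticFunction.LSeries_zeta_eq_riemannZeta one_lt_re, riemannZeta_two] at zeta_mul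
    have pi_ne_zero : (Real.pi : ℂ) ≠ 0 := mod_cast Real.pi_ne_zero
    push_cast
    field_simp at zeta_mul ⊢
    linear_combination zeta_mul
  have hasSum_term : HasSum (LSeries.term (fun d ↦ (μ d : ℂ)) 2) ((6 / Real.pi ^ 2 : ℝ) : ℂ) :=
    lSeries_eq ▸ (ArithmeticFunction.LSeriesSummable_moebius_iff.2 one_lt_re).LSeriesHasSum
  rw [← Complex.hasSum_ofReal]
  convert hasSum_term using 2 with d
  rcases eq_or_ne d 0 with rfl | hd
  · simp
  · simp [LSeries.term_of_ne_zero hd]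

lemma abs_sum_Ioc_sub_le_inv {f : ℕ → ℝ} {s : ℝ} (hf : HasSum f s)
    (hbound : ∀ d : ℕ, |f d| ≤ ((d : ℝ) ^ 2)⁻¹) {h : ℕ} (hh : h ≠ 0) :
    |∑ d ∈ Ioc 0 h, f d - s| ≤ (h : ℝ)⁻¹ := by
  have f_zero : f 0 = 0 := by simpa using hbound 0
  have sum_range (M : ℕ) : ∑ d ∈ range (M + 1), f d = ∑ d ∈ Ioc 0 M, f d := by
    rw [Nat.range_succ_eq_Icc_zero, ← add_sum_Ioc_eq_sum_Icc M.zero_le, f_zero, zero_add]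
  have partial_sums := (Filter.tendsto_add_atTop_iff_nat 1).2 hf.tendsto_sum_nat
  simp only [sum_range] at partial_sums
  rw [abs_sub_comm]
  refine le_of_tendsto (partial_sums.sub_const _).abs ?_
  filter_upwards [Filter.eventually_ge_atTop h] with M hM
  rw [← sum_Ioc_consecutive f h.zero_le hM, add_sub_cancel_left]
  calc |∑ d ∈ Ioc h M, f d| ≤ ∑ d ∈ Ioc h M, |f d| := abs_sum_le_sum_abs _ _
    _ ≤ ∑ d ∈ Ioc h M, ((d : ℝ) ^ 2)⁻¹ := sum_le_sum fun d _ ↦ hbound d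
    _ ≤ (h : ℝ)⁻¹ - (M : ℝ)⁻¹ := sum_Ioc_inv_sq_le_sub hh hM
    _ ≤ (h : ℝ)⁻¹ := sub_le_self _ (by positivity)

lemma abs_sum_moebius_div_sq_sub_le {h : ℕ} (hh : h ≠ 0) :
    |∑ d ∈ Ioc 0 h, (μ d : ℝ) / (d : ℝ) ^ 2 - 6 / Real.pi ^ 2| ≤ (h : ℝ)⁻¹ := by
  refine abs_sum_Ioc_sub_le_inv hasSum_moebius_div_sq (fun d ↦ ?_) hh
  rw [abs_div, abs_sq, div_eq_mul_inv]
  exact mul_le_of_le_one_left (by positivity) (abs_moebius_cast_le_one d)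

lemma sum_moebius_common_divisors {u v : ℤ} (hu : u ≠ 0) {M : ℕ} (huM : u.natAbs ≤ M) :
    ∑ d ∈ Ioc 0 M with ((d : ℕ) : ℤ) ∣ u ∧ (d : ℤ) ∣ v, μ d = if Int.gcd u v = 1 then 1 else 0 := by
  have filter_eq : {d ∈ Ioc 0 M | ((d : ℕ) : ℤ) ∣ u ∧ (d : ℤ) ∣ v} = (Int.gcd u v).divisors := by
    ext d
    rw [mem_filter, mem_Ioc, Nat.mem_divisors, ← Int.dvd_coe_gcd_iff, Int.natCast_dvd_natCast]
    have gcd_ne_zero : Int.gcd u v ≠ 0 := (Int.gcd_pos_of_ne_zero_left v hu).ne'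
    refine ⟨fun ⟨_, hd⟩ ↦ ⟨hd, gcd_ne_zero⟩, fun ⟨hd, _⟩ ↦ ⟨⟨?_, ?_⟩, hd⟩⟩
    · exact Nat.pos_of_dvd_of_pos hd (by omega)
    · exact (Nat.le_of_dvd (Int.natAbs_pos.2 hu) (hd.trans (Nat.gcd_dvd_left _ _))).trans huM
  rw [filter_eq, ← ArithmeticFunction.coe_mul_zeta_apply, ArithmeticFunction.moebius_mul_coe_zeta,
    ArithmeticFunction.one_apply]

section SquaredCounts

variable {N : ℕ → ℝ} {X E : ℝ}

lemma abs_sq_sub_sq_le {x y e : ℝ} (hy : 0 ≤ y) (hxy : |x - y| ≤ e) :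
    |x ^ 2 - y ^ 2| ≤ e * (e + 2 * y) := by
  have sum_le : |x + y| ≤ e + 2 * y := by
    rw [abs_le] at hxy ⊢
    constructor <;> linarith
  rw [sq_sub_sq, mul_comm, abs_mul]
  exact mul_le_mul hxy sum_le (abs_nonneg _) ((abs_nonneg _).trans hxy)

lemma abs_sum_moebius_mul_sq_sub_le (hX : 0 ≤ X) (hN : ∀ d : ℕ, d ≠ 0 → |N d - X / d| ≤ E)
    (h : ℕ) :
    |∑ d ∈ Ioc 0 h, μ d * N d ^ 2 - X ^ 2 * ∑ d ∈ Ioc 0 h, (μ d : ℝ) / (d : ℝ) ^ 2| ≤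
      E * (h * E + 2 * X * (1 + Real.log h)) := by
  have E_nonneg : 0 ≤ E := (abs_nonneg _).trans (hN 1 one_ne_zero)
  have harmonic_le : ∑ d ∈ Ioc 0 h, (d : ℝ)⁻¹ ≤ 1 + Real.log h := by
    have := harmonic_le_one_add_log h
    rw [harmonic_eq_sum_Icc] at this
    push_cast at this
    exact this
  have term_le : ∀ d ∈ Ioc 0 h,
      |μ d * N d ^ 2 - X ^ 2 * ((μ d : ℝ) / (d : ℝ) ^ 2)| ≤ E * (E + 2 * X * (d : ℝ)⁻¹) := by
    intro d hd
    have hd : d ≠ 0 := (mem_Ioc.1 hd).1.ne'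
    calc |μ d * N d ^ 2 - X ^ 2 * ((μ d : ℝ) / (d : ℝ) ^ 2)|
        = |(μ d : ℝ)| * |N d ^ 2 - (X / d) ^ 2| := by rw [← abs_mul]; ring_nf
      _ ≤ 1 * (E * (E + 2 * (X / d))) := by
        gcongr
        · exact abs_moebius_cast_le_one d
        · exact abs_sq_sub_sq_le (by positivity) (hN d hd)
      _ = E * (E + 2 * X * (d : ℝ)⁻¹) := by ring
  calc _ ≤ ∑ d ∈ Ioc 0 h, E * (E + 2 * X * (d : ℝ)⁻¹) := by
        rw [mul_sum, ← sum_sub_distrib]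
        exact (abs_sum_le_sum_abs _ _).trans (sum_le_sum term_le)
    _ = E * (h * E + 2 * X * ∑ d ∈ Ioc 0 h, (d : ℝ)⁻¹) := by
        rw [← mul_sum, sum_add_distrib, ← mul_sum, sum_const, Nat.card_Ioc, nsmul_eq_mul,
          Nat.sub_zero]
    _ ≤ E * (h * E + 2 * X * (1 + Real.log h)) := by gcongr

lemma abs_sum_Ioc_moebius_mul_sq_le (hX : 0 ≤ X) (hN_nonneg : ∀ d, 0 ≤ N d)
    (hN : ∀ d : ℕ, d ≠ 0 → |N d - X / d| ≤ E) {h : ℕ} (hh : h ≠ 0) (M : ℕ) :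
    |∑ d ∈ Ioc h M, μ d * N d ^ 2| ≤ (E + X / h) * ∑ d ∈ Ioc 0 M, N d := by
  have E_nonneg : 0 ≤ E := (abs_nonneg _).trans (hN 1 one_ne_zero)
  have term_le : ∀ d ∈ Ioc h M, |μ d * N d ^ 2| ≤ (E + X / h) * N d := by
    intro d hd
    have h_lt_d : h < d := (mem_Ioc.1 hd).1
    have N_le : N d ≤ E + X / h := by
      have X_div_le : X / d ≤ X / h := by gcongr
      linarith [(abs_le.1 (hN d (by omega))).2]
    calc |μ d * N d ^ 2| = |(μ d : ℝ)| * (N d * N d) := by rw [abs_mul, abs_sq, sq]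
      _ ≤ 1 * ((E + X / h) * N d) := by
        have := hN_nonneg d
        gcongr
        exact abs_moebius_cast_le_one d
      _ = (E + X / h) * N d := one_mul _
  calc |∑ d ∈ Ioc h M, μ d * N d ^ 2| ≤ ∑ d ∈ Ioc h M, (E + X / h) * N d :=
        (abs_sum_le_sum_abs _ _).trans (sum_le_sum term_le)
    _ ≤ (E + X / h) * ∑ d ∈ Ioc 0 M, N d := by
        rw [← mul_sum]
        gcongr
        · exact fun d _ _ ↦ hN_nonneg d
        · exact h.zero_le

-- The cut at `h` keeps the error `E` of the approximation `N d ≈ X / d` from being summed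
-- over all `d ≤ M`; beyond `h` one factor `N d` is bounded pointwise and the other on average.
lemma abs_sum_moebius_mul_sq_sub_six_div_pi_sq_le (hX : 0 ≤ X) (hN_nonneg : ∀ d, 0 ≤ N d)
    (hN : ∀ d : ℕ, d ≠ 0 → |N d - X / d| ≤ E) {h M : ℕ} (hh : h ≠ 0) (hhM : h ≤ M) :
    |∑ d ∈ Ioc 0 M, μ d * N d ^ 2 - 6 / Real.pi ^ 2 * X ^ 2| ≤
      E * (h * E + 2 * X * (1 + Real.log h)) + X ^ 2 / h +
        (E + X / h) * ∑ d ∈ Ioc 0 M, N d := by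
  set S := ∑ d ∈ Ioc 0 h, (μ d : ℝ) / (d : ℝ) ^ 2
  have zeta_tail : |X ^ 2 * (S - 6 / Real.pi ^ 2)| ≤ X ^ 2 / h := by
    rw [abs_mul, abs_sq, div_eq_mul_inv (X ^ 2)]
    gcongr
    exact abs_sum_moebius_div_sq_sub_le hh
  calc _ = |(∑ d ∈ Ioc 0 h, μ d * N d ^ 2 - X ^ 2 * S) + X ^ 2 * (S - 6 / Real.pi ^ 2) +
          ∑ d ∈ Ioc h M, μ d * N d ^ 2| := by
        rw [← sum_Ioc_consecutive _ h.zero_le hhM]; ring_nf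
    _ ≤ _ := (abs_add_three _ _ _).trans (add_le_add_three
        (abs_sum_moebius_mul_sq_sub_le hX hN h) zeta_tail
        (abs_sum_Ioc_moebius_mul_sq_le hX hN_nonneg hN hh M))

end SquaredCounts

end MoebiusSums

section VecHeight

variable {n : ℕ}

lemma vecHeight_le_iff {x : Fin n → ℤ} {h : ℕ} : vecHeight x ≤ h ↔ ∀ i, (x i).natAbs ≤ h := by
  simp [vecHeight]

lemma vecHeight_pos {b : Fin n → ℤ} (hb : b ≠ 0) : 0 < vecHeight b := by
  obtain ⟨i, hi⟩ := Function.ne_iff.1 hb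
  exact (Int.natAbs_pos.2 hi).trans_le (vecHeight_le_iff.1 le_rfl i)

lemma vecHeight_le_vecHeight_smul {g : ℤ} (hg : g ≠ 0) (b : Fin n → ℤ) :
    vecHeight b ≤ vecHeight (g • b) := by
  refine vecHeight_le_iff.2 fun i ↦ (vecHeight_le_iff.1 le_rfl i).trans' ?_
  rw [Pi.smul_apply, smul_eq_mul, Int.natAbs_mul]
  exact Nat.le_mul_of_pos_left _ (Int.natAbs_pos.2 hg)

end VecHeight

section LinearCongruences

lemma abs_card_Ioc_filter_modEq_sub_le {a b : ℤ} (hab : a ≤ b) {r : ℤ} (hr : 0 < r) (w : ℤ) :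
    |(#{t ∈ Ioc a b | t ≡ w [ZMOD r]} : ℝ) - (b - a) / r| ≤ 1 := by
  have floor_le_floor : ⌊((a : ℚ) - w) / r⌋ ≤ ⌊((b : ℚ) - w) / r⌋ := by gcongr
  have card_eq := Int.Ioc_filter_modEq_card a b hr w
  rw [max_eq_left (sub_nonneg.2 floor_le_floor)] at card_eq
  have abs_le_one : |(#{t ∈ Ioc a b | t ≡ w [ZMOD r]} : ℚ) - (b - a) / r| ≤ 1 := by
    rw [← Int.cast_natCast, card_eq, abs_le, Int.cast_sub,
      show ((b : ℚ) - a) / r = (b - w) / r - (a - w) / r by ring]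
    constructor <;> linarith [Int.floor_le (((a : ℚ) - w) / r), Int.floor_le (((b : ℚ) - w) / r),
      Int.lt_floor_add_one (((a : ℚ) - w) / r), Int.lt_floor_add_one (((b : ℚ) - w) / r)]
  exact_mod_cast abs_le_one

lemma exists_dvd_mul_add_iff_modEq {r a : ℤ} (hra : IsCoprime r a) (s : ℤ) :
    ∃ w : ℤ, ∀ t : ℤ, r ∣ a * t + s ↔ t ≡ w [ZMOD r] := by
  obtain ⟨u, v, huv⟩ := hra
  refine ⟨-(v * s), fun t ↦ ?_⟩
  rw [Int.modEq_comm, Int.modEq_iff_dvd]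
  constructor
  · rintro ⟨k, hk⟩
    exact ⟨v * k + u * t, by linear_combination (-t) * huv + v * hk⟩
  · rintro ⟨k, hk⟩
    exact ⟨a * k + u * s, by linear_combination (-s) * huv + a * hk⟩

lemma abs_card_Ioc_filter_dvd_mul_add_sub_le {d : ℕ} (hd : d ≠ 0) {a s : ℤ}
    (hs : (Int.gcd a d : ℤ) ∣ s) (h : ℕ) :
    |(#{t ∈ Ioc (0 : ℤ) h | (d : ℤ) ∣ a * t + s} : ℝ) - h * Int.gcd a d / d| ≤ 1 := by
  have gcd_pos : 0 < Int.gcd a d := Int.gcd_pos_of_ne_zero_right a (mod_cast hd)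
  obtain ⟨a', r, hcop, ha, hr⟩ := Int.exists_gcd_one gcd_pos
  obtain ⟨s', rfl⟩ := hs
  set e := Int.gcd a d
  have e_pos : (0 : ℤ) < e := mod_cast gcd_pos
  have r_pos : 0 < r := pos_of_mul_pos_left (hr ▸ (by positivity : (0 : ℤ) < d)) e_pos.le
  obtain ⟨w, hw⟩ := exists_dvd_mul_add_iff_modEq (Int.isCoprime_iff_gcd_eq_one.2 hcop).symm s'
  have dvd_iff (t : ℤ) : (d : ℤ) ∣ a * t + e * s' ↔ t ≡ w [ZMOD r] := by
    rw [← hw, hr, ha, mul_comm r, show a' * e * t + e * s' = e * (a' * t + s') by ring,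
      mul_dvd_mul_iff_left e_pos.ne']
  have ratio_eq : (h : ℝ) * e / d = ((h : ℤ) - (0 : ℤ)) / r := by
    have : (d : ℝ) = r * e := mod_cast hr
    rw [this]
    push_cast
    field_simp
    ring
  simp only [dvd_iff, ratio_eq]
  exact abs_card_Ioc_filter_modEq_sub_le (by positivity) r_pos w

/-- The box `{1, …, h}ⁿ`, over which both vectors counted by `Rcount` range. -/
noncomputable def posBox (n h : ℕ) : Finset (Fin n → ℤ) :=
  Fintype.piFinset fun _ ↦ Ioc (0 : ℤ) h

variable {n : ℕ}

lemma mem_posBox {h : ℕ} {x : Fin n → ℤ} :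
    x ∈ posBox n h ↔ (∀ i, 0 < x i) ∧ vecHeight x ≤ h := by
  simp only [posBox, Fintype.mem_piFinset, mem_Ioc, vecHeight_le_iff, ← forall_and]
  exact forall_congr' fun i ↦ by omega

lemma card_posBox (n h : ℕ) : #(posBox n h) = h ^ n := by
  simp [posBox]

lemma card_filter_posBox_succ (h : ℕ) (P : (Fin (n + 1) → ℤ) → Prop) [DecidablePred P] :
    #{x ∈ posBox (n + 1) h | P x} =
      ∑ y ∈ posBox n h, #{t ∈ Ioc (0 : ℤ) h | P (Fin.cons t y)} := by
  have posBox_succ : posBox (n + 1) h =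
      (Ioc (0 : ℤ) h ×ˢ posBox n h).map (Fin.consEquiv fun _ ↦ ℤ).toEmbedding := by
    simpa [posBox, Fin.tail_def] using
      filter_piFinset_eq_map_consEquiv (fun _ : Fin (n + 1) ↦ Ioc (0 : ℤ) h) fun _ ↦ True
  simp only [posBox_succ, card_filter, sum_map, sum_product_right]
  rfl

lemma dotProduct_cons_right (a : Fin (n + 1) → ℤ) (t : ℤ) (y : Fin n → ℤ) :
    a ⬝ᵥ Fin.cons t y = a 0 * t + Fin.tail a ⬝ᵥ y :=
  Matrix.dotProduct_cons a t y

lemma gcd_univ_gcd_succ (a : Fin (n + 1) → ℤ) (d : ℤ) :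
    Int.gcd (univ.gcd a) d = Int.gcd (univ.gcd (Fin.tail a)) (Int.gcd (a 0) d) := by
  have univ_gcd : univ.gcd a = Int.gcd (univ.gcd (Fin.tail a)) (a 0) := by
    rw [Fin.univ_succ, cons_eq_insert, gcd_insert, map_eq_image, gcd_image, Int.gcd_comm,
      Int.coe_gcd]
    rfl
  rw [univ_gcd, Int.gcd_assoc]

lemma card_filter_dvd_dotProduct_add_succ (a : Fin (n + 1) → ℤ) (s : ℤ) (h d : ℕ) :
    #{x ∈ posBox (n + 1) h | (d : ℤ) ∣ a ⬝ᵥ x + s} =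
      ∑ y ∈ posBox n h with (Int.gcd (a 0) d : ℤ) ∣ Fin.tail a ⬝ᵥ y + s,
        #{t ∈ Ioc (0 : ℤ) h | (d : ℤ) ∣ a 0 * t + (Fin.tail a ⬝ᵥ y + s)} := by
  simp only [card_filter_posBox_succ, dotProduct_cons_right, add_assoc]
  refine (sum_filter_of_ne fun y _ fiber_ne_zero ↦ ?_).symm
  obtain ⟨t, ht⟩ := card_ne_zero.1 fiber_ne_zero
  exact (dvd_add_right ((Int.gcd_dvd_left (a 0) d).mul_right t)).1
    ((Int.gcd_dvd_right (a 0) d).trans (mem_filter.1 ht).2)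

lemma abs_card_filter_dvd_dotProduct_add_succ_sub_le (a : Fin (n + 1) → ℤ) (s : ℤ) (h : ℕ)
    {d : ℕ} (hd : d ≠ 0) :
    |(#{x ∈ posBox (n + 1) h | (d : ℤ) ∣ a ⬝ᵥ x + s} : ℝ) -
      #{y ∈ posBox n h | (Int.gcd (a 0) d : ℤ) ∣ Fin.tail a ⬝ᵥ y + s} *
        (h * Int.gcd (a 0) d / d)| ≤ (h : ℝ) ^ n := by
  set S := {y ∈ posBox n h | (Int.gcd (a 0) d : ℤ) ∣ Fin.tail a ⬝ᵥ y + s}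
  rw [card_filter_dvd_dotProduct_add_succ, Nat.cast_sum, ← nsmul_eq_mul, ← sum_const,
    ← sum_sub_distrib]
  calc _ ≤ ∑ _y ∈ S, (1 : ℝ) := (abs_sum_le_sum_abs _ _).trans <| sum_le_sum fun _ hy ↦
        abs_card_Ioc_filter_dvd_mul_add_sub_le hd (mem_filter.1 hy).2 h
    _ = #S := by simp
    _ ≤ (h : ℝ) ^ n := mod_cast (card_filter_le _ _).trans (card_posBox n h).le

-- Solving for the first coordinate modulo `d` leaves a congruence modulo `gcd (a 0) d` in the
-- remaining ones, which has the same greatest common divisor `g` with its coefficients.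
lemma abs_card_filter_dvd_dotProduct_add_sub_le (h : ℕ) {d : ℕ} (hd : d ≠ 0) (a : Fin n → ℤ)
    {s : ℤ} (hs : (Int.gcd (univ.gcd a) d : ℤ) ∣ s) :
    |(#{x ∈ posBox n h | (d : ℤ) ∣ a ⬝ᵥ x + s} : ℝ) - h ^ n * Int.gcd (univ.gcd a) d / d| ≤
      n * (h : ℝ) ^ (n - 1) := by
  induction n generalizing d with
  | zero =>
    have d_dvd_s : (d : ℤ) ∣ s := by simpa using hs
    simp [card_posBox, d_dvd_s, hd]
  | succ n ih =>
    have fibers := abs_card_filter_dvd_dotProduct_add_succ_sub_le a s h hd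
    rw [gcd_univ_gcd_succ] at hs ⊢
    set e := Int.gcd (a 0) d
    set g := Int.gcd (univ.gcd (Fin.tail a)) e
    have e_pos : 0 < e := Int.gcd_pos_of_ne_zero_right (a 0) (mod_cast hd)
    have e_le_d : e ≤ d := Nat.le_of_dvd (by omega) (mod_cast Int.gcd_dvd_right (a 0) d)
    have tails := ih e_pos.ne' (Fin.tail a) hs
    set S := {y ∈ posBox n h | (e : ℤ) ∣ Fin.tail a ⬝ᵥ y + s}
    have main_term : |(#S : ℝ) * (h * e / d) - h ^ (n + 1) * g / d| ≤ n * (h : ℝ) ^ n := by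
      calc |(#S : ℝ) * (h * e / d) - h ^ (n + 1) * g / d|
          = |(#S : ℝ) - h ^ n * g / e| * (h * (e / d)) := by
            rw [← abs_of_nonneg (by positivity : (0 : ℝ) ≤ h * (e / d)), ← abs_mul]
            congr 1
            field_simp
            ring
        _ ≤ (n * (h : ℝ) ^ (n - 1)) * (h * 1) := by
            gcongr
            exact div_le_one_of_le₀ (mod_cast e_le_d) d.cast_nonneg
        _ = n * (h : ℝ) ^ n := by
            rcases n with _ | n
            · simp
            · rw [Nat.add_sub_cancel]; ring
    calc _ ≤ (h : ℝ) ^ n + n * (h : ℝ) ^ n :=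
          (abs_sub_le _ _ _).trans (add_le_add fibers main_term)
      _ = ((n + 1 : ℕ) : ℝ) * (h : ℝ) ^ (n + 1 - 1) := by
          rw [Nat.add_sub_cancel]; push_cast; ring

end LinearCongruences

section DvdCount

variable {n : ℕ}

/-- The number of `x ∈ {1, …, h}ⁿ` with `d ∣ b·x`. -/
noncomputable def dvdCount (b : Fin n → ℤ) (h d : ℕ) : ℕ :=
  #{x ∈ posBox n h | (d : ℤ) ∣ b ⬝ᵥ x}

lemma abs_dvdCount_sub_le {b : Fin n → ℤ} (hb : univ.gcd b = 1) (h : ℕ) {d : ℕ} (hd : d ≠ 0) :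
    |(dvdCount b h d : ℝ) - h ^ n / d| ≤ n * (h : ℝ) ^ (n - 1) := by
  simpa [dvdCount, hb] using abs_card_filter_dvd_dotProduct_add_sub_le h hd b (dvd_zero _)

lemma natAbs_dotProduct_le (b x : Fin n → ℤ) :
    (b ⬝ᵥ x).natAbs ≤ n * (vecHeight x * vecHeight b) := by
  calc (b ⬝ᵥ x).natAbs ≤ ∑ i, (b i * x i).natAbs := Int.natAbs_sum_le _ _
    _ ≤ ∑ _i : Fin n, vecHeight x * vecHeight b := sum_le_sum fun i _ ↦ by
        rw [Int.natAbs_mul, mul_comm]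
        exact Nat.mul_le_mul (vecHeight_le_iff.1 le_rfl i) (vecHeight_le_iff.1 le_rfl i)
    _ = n * (vecHeight x * vecHeight b) := by simp

lemma dotProduct_pos_of_pos {b x : Fin n → ℤ} (hb : 0 < b) (hx : ∀ i, 0 < x i) : 0 < b ⬝ᵥ x := by
  obtain ⟨b_nonneg, i, b_pos⟩ := Pi.lt_def.1 hb
  exact sum_pos' (fun j _ ↦ mul_nonneg (b_nonneg j) (hx j).le)
    ⟨i, mem_univ i, mul_pos b_pos (hx i)⟩

lemma natAbs_dotProduct_le_of_mem_posBox (b : Fin n → ℤ) {h : ℕ} {x : Fin n → ℤ}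
    (hx : x ∈ posBox n h) : (b ⬝ᵥ x).natAbs ≤ n * (h * vecHeight b) :=
  (natAbs_dotProduct_le b x).trans (by gcongr; exact (mem_posBox.1 hx).2)

lemma exists_sum_dvdCount_le {ε : ℝ} (hε : 0 < ε) :
    ∃ C : ℝ, 0 < C ∧ ∀ (n : ℕ) (b : Fin n → ℤ), 0 < b → ∀ h M : ℕ,
      ∑ d ∈ Ioc 0 M, (dvdCount b h d : ℝ) ≤ C * h ^ n * (n * (h * vecHeight b) : ℝ) ^ ε := by
  obtain ⟨C, C_pos, card_divisors_le⟩ := exists_card_divisors_le_mul_rpow hε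
  refine ⟨C, C_pos, fun n b hb h M ↦ ?_⟩
  have divisors_le : ∀ x ∈ posBox n h, (#{d ∈ Ioc 0 M | ((d : ℕ) : ℤ) ∣ b ⬝ᵥ x} : ℝ) ≤
      C * (n * (h * vecHeight b) : ℝ) ^ ε := by
    intro x hx
    have natAbs_ne_zero : (b ⬝ᵥ x).natAbs ≠ 0 :=
      Int.natAbs_ne_zero.2 (dotProduct_pos_of_pos hb (mem_posBox.1 hx).1).ne'
    calc (#{d ∈ Ioc 0 M | ((d : ℕ) : ℤ) ∣ b ⬝ᵥ x} : ℝ) ≤ #(b ⬝ᵥ x).natAbs.divisors := by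
          gcongr
          exact fun d hd ↦ Nat.mem_divisors.2
            ⟨Int.natCast_dvd.1 (mem_filter.1 hd).2, natAbs_ne_zero⟩
      _ ≤ C * ((b ⬝ᵥ x).natAbs : ℝ) ^ ε := card_divisors_le _ natAbs_ne_zero
      _ ≤ C * (n * (h * vecHeight b) : ℝ) ^ ε := by
          gcongr
          exact_mod_cast natAbs_dotProduct_le_of_mem_posBox b hx
  calc ∑ d ∈ Ioc 0 M, (dvdCount b h d : ℝ)
      = ∑ x ∈ posBox n h, (#{d ∈ Ioc 0 M | ((d : ℕ) : ℤ) ∣ b ⬝ᵥ x} : ℝ) := by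
        simp only [dvdCount, natCast_card_filter]
        exact sum_comm
    _ ≤ ∑ _x ∈ posBox n h, C * (n * (h * vecHeight b) : ℝ) ^ ε := sum_le_sum divisors_le
    _ = C * h ^ n * (n * (h * vecHeight b) : ℝ) ^ ε := by
        rw [sum_const, card_posBox, nsmul_eq_mul, Nat.cast_pow]
        ring

end DvdCount

section Rcount

variable {n : ℕ}

lemma Rcount_eq_card (a : Fin n → ℤ) (h : ℕ) :
    Rcount a h = #{p ∈ posBox n h ×ˢ posBox n h |
      (Int.gcd (a ⬝ᵥ p.1) (a ⬝ᵥ p.2) : ℤ) = univ.gcd a} := by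
  refine Nat.subtype_card _ fun p ↦ ?_
  rw [mem_filter, mem_product, mem_posBox, mem_posBox]
  simp only [dotProduct]
  tauto

lemma Rcount_smul {g : ℤ} (hg : g ≠ 0) (b : Fin n → ℤ) (h : ℕ) :
    Rcount (g • b) h = Rcount b h := by
  have gcd_smul : univ.gcd (g • b) = |g| * univ.gcd b := by
    rw [Int.abs_eq_normalize]
    exact Finset.gcd_mul_left
  simp only [Rcount_eq_card, smul_dotProduct, smul_eq_mul, gcd_smul, Int.gcd_mul_left,
    Nat.cast_mul, Int.natCast_natAbs, mul_right_inj' (abs_ne_zero.2 hg)]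

lemma exists_primitive_eq_smul {a : Fin n → ℤ} (ha : 0 < a) :
    ∃ (g : ℤ) (b : Fin n → ℤ), 0 < g ∧ 0 < b ∧ univ.gcd b = 1 ∧ a = g • b := by
  obtain ⟨-, i, a_pos⟩ := Pi.lt_def.1 ha
  obtain ⟨b, a_eq, b_primitive⟩ := univ.extract_gcd a ⟨i, mem_univ i⟩
  replace a_eq : a = univ.gcd a • b := funext fun j ↦ a_eq j (mem_univ j)
  have gcd_pos : 0 < univ.gcd a := by
    refine lt_of_le_of_ne ?_ fun gcd_eq_zero ↦ ?_
    · rw [← Finset.normalize_gcd, ← Int.abs_eq_normalize]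
      exact abs_nonneg _
    · exact a_pos.ne' (Finset.gcd_eq_zero_iff.1 gcd_eq_zero.symm i (mem_univ i))
  refine ⟨univ.gcd a, b, gcd_pos, ?_, b_primitive, a_eq⟩
  rwa [a_eq, smul_pos_iff_of_pos_left gcd_pos] at ha

lemma Rcount_eq_sum_moebius {b : Fin n → ℤ} (hb : 0 < b) (hb_primitive : univ.gcd b = 1) (h : ℕ) :
    (Rcount b h : ℝ) =
      ∑ d ∈ Ioc 0 (n * (h * vecHeight b)), μ d * (dvdCount b h d : ℝ) ^ 2 := by
  have dvdCount_sq (d : ℕ) : dvdCount b h d ^ 2 =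
      #{p ∈ posBox n h ×ˢ posBox n h | (d : ℤ) ∣ b ⬝ᵥ p.1 ∧ (d : ℤ) ∣ b ⬝ᵥ p.2} := by
    rw [sq, dvdCount, ← card_product, ← filter_product]
  have indicator_eq : ∀ p ∈ posBox n h ×ˢ posBox n h,
      (if (Int.gcd (b ⬝ᵥ p.1) (b ⬝ᵥ p.2) : ℤ) = 1 then 1 else 0 : ℤ) =
        ∑ d ∈ Ioc 0 (n * (h * vecHeight b)),
          if ((d : ℕ) : ℤ) ∣ b ⬝ᵥ p.1 ∧ (d : ℤ) ∣ b ⬝ᵥ p.2 then μ d else 0 := by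
    intro p hp
    have hp₁ := (mem_product.1 hp).1
    have dotProduct_ne_zero : b ⬝ᵥ p.1 ≠ 0 := (dotProduct_pos_of_pos hb (mem_posBox.1 hp₁).1).ne'
    rw [← sum_filter, sum_moebius_common_divisors dotProduct_ne_zero
      (natAbs_dotProduct_le_of_mem_posBox b hp₁)]
    norm_cast
  have int_eq : (Rcount b h : ℤ) =
      ∑ d ∈ Ioc 0 (n * (h * vecHeight b)), μ d * (dvdCount b h d : ℤ) ^ 2 := by
    rw [Rcount_eq_card, hb_primitive, natCast_card_filter, sum_congr rfl indicator_eq, sum_comm]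
    refine sum_congr rfl fun d _ ↦ ?_
    rw [← Nat.cast_pow, dvdCount_sq, ← sum_filter, sum_const, nsmul_eq_mul, mul_comm]
  exact_mod_cast congrArg (Int.cast : ℤ → ℝ) int_eq

lemma abs_Rcount_sub_le_of_primitive {b : Fin n → ℤ} (hb : 0 < b) (hb_primitive : univ.gcd b = 1)
    {h : ℕ} (hh : h ≠ 0) :
    |(Rcount b h : ℝ) - 6 / Real.pi ^ 2 * h ^ (2 * n)| ≤
      h ^ (2 * n - 1) * (n ^ 2 + 2 * n * (1 + Real.log h) + 1) +
        (n + 1) * h ^ (n - 1) *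
          ∑ d ∈ Ioc 0 (n * (h * vecHeight b)), (dvdCount b h d : ℝ) := by
  obtain ⟨-, i, -⟩ := Pi.lt_def.1 hb
  have n_pos : 0 < n := i.pos
  have h_le : h ≤ n * (h * vecHeight b) :=
    (Nat.le_mul_of_pos_right h (vecHeight_pos hb.ne')).trans (Nat.le_mul_of_pos_left _ n_pos)
  rw [Rcount_eq_sum_moebius hb hb_primitive, mul_comm 2 n, pow_mul]
  refine (abs_sum_moebius_mul_sq_sub_six_div_pi_sq_le (by positivity) (fun d ↦ by positivity)
    (fun d hd ↦ abs_dvdCount_sub_le hb_primitive h hd) hh h_le).trans_eq ?_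
  obtain ⟨m, rfl⟩ := Nat.exists_eq_add_one.2 n_pos
  have pow_eq : (h : ℝ) ^ ((m + 1) * 2 - 1) = h ^ m * h ^ m * h := by
    rw [show (m + 1) * 2 - 1 = m + m + 1 by omega]
    ring
  rw [pow_eq, Nat.add_sub_cancel, pow_succ]
  push_cast
  field_simp

lemma exists_abs_Rcount_sub_le_of_primitive (n : ℕ) {ε : ℝ} (hε : 0 < ε) :
    ∃ C : ℝ, 0 < C ∧ ∀ b : Fin n → ℤ, 0 < b → univ.gcd b = 1 → ∀ h : ℕ, h ≠ 0 →
      |(Rcount b h : ℝ) - 6 / Real.pi ^ 2 * h ^ (2 * n)| ≤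
        C * h ^ (2 * n - 1) * (h * vecHeight b : ℝ) ^ ε := by
  obtain ⟨C, C_pos, sum_dvdCount_le⟩ := exists_sum_dvdCount_le hε
  refine ⟨n ^ 2 + 2 * n * (1 + 1 / ε) + 1 + (n + 1) * C * n ^ ε, by positivity,
    fun b hb hb_primitive h hh ↦ ?_⟩
  obtain ⟨-, i, -⟩ := Pi.lt_def.1 hb
  have n_pos : 0 < n := i.pos
  have one_le_h : (1 : ℝ) ≤ h := mod_cast Nat.one_le_iff_ne_zero.2 hh
  have h_le : (h : ℝ) ≤ h * vecHeight b :=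
    le_mul_of_one_le_right h.cast_nonneg (mod_cast vecHeight_pos hb.ne')
  set T : ℝ := (h * vecHeight b : ℝ) ^ ε
  have one_le_T : 1 ≤ T := Real.one_le_rpow (one_le_h.trans h_le) hε.le
  have log_le : Real.log h ≤ 1 / ε * T := by
    calc Real.log h ≤ (h : ℝ) ^ ε / ε := Real.log_le_rpow_div h.cast_nonneg hε
      _ ≤ T / ε := by
        gcongr
        exact Real.rpow_le_rpow h.cast_nonneg h_le hε.le
      _ = 1 / ε * T := by ring
  have small_moduli : n ^ 2 + 2 * n * (1 + Real.log h) + 1 ≤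
      (n ^ 2 + 2 * n * (1 + 1 / ε) + 1) * T := by
    calc n ^ 2 + 2 * n * (1 + Real.log h) + 1
        ≤ n ^ 2 * T + 2 * n * (1 * T + 1 / ε * T) + 1 * T := by
          gcongr <;> exact le_mul_of_one_le_right (by positivity) one_le_T
      _ = (n ^ 2 + 2 * n * (1 + 1 / ε) + 1) * T := by ring
  calc |(Rcount b h : ℝ) - 6 / Real.pi ^ 2 * h ^ (2 * n)|
      ≤ h ^ (2 * n - 1) * ((n ^ 2 + 2 * n * (1 + 1 / ε) + 1) * T) +
        (n + 1) * h ^ (n - 1) * (C * h ^ n * (n * (h * vecHeight b) : ℝ) ^ ε) := by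
        refine (abs_Rcount_sub_le_of_primitive hb hb_primitive hh).trans ?_
        gcongr
        exact sum_dvdCount_le n b hb h _
    _ = (n ^ 2 + 2 * n * (1 + 1 / ε) + 1 + (n + 1) * C * n ^ ε) * h ^ (2 * n - 1) * T := by
        rw [Real.mul_rpow n.cast_nonneg (by positivity),
          show 2 * n - 1 = n - 1 + n by omega, pow_add]
        ring

theorem Rcount_asymptotic_general (n : ℕ) {ε : ℝ} (hε : 0 < ε) :
    ∃ C : ℝ, 0 < C ∧ ∀ a : Fin n → ℤ, 0 < a → ∀ h : ℕ, h ≠ 0 →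
      |(Rcount a h : ℝ) - 6 / Real.pi ^ 2 * h ^ (2 * n)| ≤
        C * h ^ (2 * n - 1) * (h * vecHeight a : ℝ) ^ ε := by
  obtain ⟨C, C_pos, primitive_bound⟩ := exists_abs_Rcount_sub_le_of_primitive n hε
  refine ⟨C, C_pos, fun a ha h hh ↦ ?_⟩
  obtain ⟨g, b, g_pos, b_pos, b_primitive, rfl⟩ := exists_primitive_eq_smul ha
  rw [Rcount_smul g_pos.ne']
  refine (primitive_bound b b_pos b_primitive h hh).trans ?_
  gcongr
  exact vecHeight_le_vecHeight_smul g_pos.ne' b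

lemma pow_two_mul_sub_one_le_rpow {n : ℕ} (hn : n ≠ 0) {x : ℝ} (hx : 1 ≤ x) :
    x ^ (2 * n - 1) ≤ x ^ ((2 * n : ℝ) - (n : ℝ) / ((n : ℝ) ^ 2 - n + 1)) := by
  have one_le_n : (1 : ℝ) ≤ n := mod_cast Nat.one_le_iff_ne_zero.2 hn
  have saving_le_one : (n : ℝ) / ((n : ℝ) ^ 2 - n + 1) ≤ 1 := by
    rw [div_le_one (by nlinarith)]
    nlinarith [sq_nonneg ((n : ℝ) - 1)]
  rw [← Real.rpow_natCast, Nat.cast_sub (by omega)]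
  push_cast
  gcongr

end Rcount

/-- Theorem 4 of the paper: for `n ≥ 2` and any `ε > 0`,
`|R(a, h) − ζ(2)⁻¹ h^{2n}| ≤ C·h^{2n − n/(n²−n+1)}·(h·𝔥(a))^ε`, where `ζ(2)⁻¹ = 6/π²`. -/
theorem Rcount_asymptotic (n : ℕ) (hn : 2 ≤ n) (ε : ℝ) (hε : 0 < ε) :
    ∃ C : ℝ, 0 < C ∧
      ∀ a : Fin n → ℤ, (∀ i, 0 < a i) → ∀ h : ℕ, 2 ≤ h →
        |(Rcount a h : ℝ) - (6 / Real.pi ^ 2) * (h : ℝ) ^ (2 * n)| ≤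
          C * (h : ℝ) ^ ((2 * n : ℝ) - (n : ℝ) / ((n : ℝ) ^ 2 - n + 1)) *
            ((h : ℝ) * (vecHeight a : ℝ)) ^ ε := by
  obtain ⟨C, C_pos, bound⟩ := Rcount_asymptotic_general n hε
  refine ⟨C, C_pos, fun a ha h hh ↦ ?_⟩
  have a_pos : 0 < a := Pi.lt_def.2 ⟨fun i ↦ (ha i).le, ⟨0, by omega⟩, ha _⟩
  refine (bound a a_pos h (by omega)).trans ?_
  gcongr
  exact pow_two_mul_sub_one_le_rpow (by omega) (mod_cast (by omega : 1 ≤ h))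
end
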